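/- arXiv:0810.2497 — 4 statements merged into one kernel-verified Lean document; each statement's English description precedes it below -/
import Mathlib

section
/- Let p(t) = (t−λ₁)^{k₁}⋯(t−λₙ)^{kₙ} be a complex polynomial with distinct roots λ₁,…,λₙ and all multiplicities kᵢ ≥ 2. Let A be a unital C*-algebra, I a closed two-sided ideal of A with quotient map q : A → A/I, and suppose A/I is SAW*. Let b ∈ A/I satisfy p(b) = 0 and ‖b‖ = 1. Let e₁,…,eₙ ∈ A/I be the spectral idempotents of b, i.e. idempotents with eᵢeⱼ = 0 for i ≠ j, Σᵢ eᵢ = 1, b eᵢ = eᵢ b, and (b−λᵢ)^{kᵢ} eᵢ = 0 for each i; set s = Σᵢ eᵢ* eᵢ (which is positive and invertible) and pᵢ = s^{1/2} eᵢ s^{−1/2} (which are projections with Σᵢ pᵢ = 1). If there exist projections Q₁,…,Qₙ ∈ A with Σᵢ Qᵢ = 1 and q(Qᵢ) = pᵢ for each i, then there exists B ∈ A with q(B) = b, p(B) = 0, and ‖B‖ = 1. -/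
/-!
Put `h = r⁻²`. Conjugating `b` by `r` turns its spectral idempotents into the projections `q (Q i)`
and the norm bound `b⋆ b ≤ ‖b‖²` into `c⋆ h c ≤ ‖b‖² h` for `c = r b r⁻¹`. After scaling, `‖b‖ = 1`.
In the corner of `Q i` the nilpotent part of `c` lifts to an element of the same order of
nilpotency, by induction on the order: this is where SAW⋆ enters. Adding up the corners gives a lift
`C` of `c` annihilated by the polynomial, and it remains to find a strictly positive lift `H` of `h`
with `C⋆ H C ≤ H`, because then `√H C √H⁻¹` is a contraction that lifts `b`.

Since `b` is a contraction, it has no nilpotent part at a root `l` with `‖l‖ = 1`, and the range of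
the idempotent of `l` is orthogonal to those of the others. So if `E` is the sum of the `Q i` at the
roots of modulus one, `C E` is a partial isometry with initial projection `E`, and `q (C E)`
commutes with `h`. The other part `C₀ = C (1 - E)` has spectral radius less than one, so that
`D ↦ ∑ (C₀ ^ n)⋆ D C₀ ^ n` inverts `X ↦ X - C₀⋆ X C₀`. Take for `D` a positive lift of
`h - q (C₀)⋆ h q (C₀) ≥ 0` that commutes with `C E`, obtained by cutting an arbitrary positive lift
down to the eigenprojections of `C E`. The sum `F` of the series lifts `h` and satisfies
`C⋆ F C ≤ F`. It may fail to be strictly positive, which is repaired by applying the same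
construction to a positive `Z` in the kernel of `q` such that `F + Z` is bounded below.
-/

open scoped CStarAlgebra

/-- A C⋆-algebra is SAW⋆ if any two orthogonal self-adjoint elements are separated by a positive
contraction which is a unit for the first and annihilates the second. -/
def IsSAWStar (B : Type*) [CStarAlgebra B] [PartialOrder B] : Prop :=
  ∀ a b : B, IsSelfAdjoint a → IsSelfAdjoint b → a * b = 0 →
    ∃ z : B, 0 ≤ z ∧ z ≤ 1 ∧ a * z = a ∧ z * b = 0

section Lifting

variable {A B : Type*} [CStarAlgebra A] [CStarAlgebra B]

lemma IsSAWStar.exists_mul_eq_zero_and_mul_eq [PartialOrder B] [StarOrderedRing B]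
    (hB : IsSAWStar B) {x y : B} (hyx : y * x = 0) :
    ∃ d : B, IsSelfAdjoint d ∧ y * d = 0 ∧ d * x = x := by
  obtain ⟨z, hz, -, hyz, hzx⟩ := hB (star y * y) (x * star x) (.star_mul_self y)
    (.mul_star_self x) (by rw [mul_assoc, ← mul_assoc y, hyx, zero_mul, mul_zero])
  refine ⟨1 - z, (IsSelfAdjoint.one B).sub hz.isSelfAdjoint, ?_, ?_⟩
  · rw [← CStarRing.star_mul_self_eq_zero_iff, star_mul, mul_assoc, ← mul_assoc (star y), mul_sub,
      mul_one, hyz, sub_self, mul_zero]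
  · have hzx' : z * x = 0 := by
      rw [← CStarRing.mul_star_self_eq_zero_iff, star_mul, mul_assoc, ← mul_assoc x, ← mul_assoc,
        hzx, zero_mul]
    rw [sub_mul, one_mul, hzx', sub_zero]

lemma exists_isSelfAdjoint_lift {q : A →⋆ₐ[ℂ] B} (hq : Function.Surjective q) {d : B}
    (hd : IsSelfAdjoint d) : ∃ D : A, IsSelfAdjoint D ∧ q D = d := by
  obtain ⟨Y, rfl⟩ := hq d
  refine ⟨(2⁻¹ : ℂ) • (Y + star Y), ?_, ?_⟩
  · simp [isSelfAdjoint_iff, add_comm]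
  · rw [map_smul, map_add, map_star, hd.star_eq, ← two_smul ℂ, smul_smul,
      inv_mul_cancel₀ two_ne_zero, one_smul]

lemma mul_pow_succ_of_mul_eq {M : Type*} [Monoid M] {a b : M} (h : b * a = a) (m : ℕ) :
    (a * b) ^ (m + 1) = a ^ (m + 1) * b := by
  induction m with
  | zero => simp
  | succ m ih => rw [pow_succ, ih, mul_assoc, ← mul_assoc b, h, ← mul_assoc, ← pow_succ]

/-- `t * v t` is `1` for `t ≥ 1/2`, while `1 - u t * (1 - t)` vanishes for `t ≤ 1/2`. -/
lemma exists_continuous_soft_cut : ∃ u v : ℝ → ℝ, Continuous u ∧ Continuous v ∧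
    ∀ t, t * v t * (1 - u t * (1 - t)) = 1 - u t * (1 - t) := by
  have continuous_inv_max {f : ℝ → ℝ} (hf : Continuous f) :
      Continuous fun t ↦ (max (f t) (1 / 2))⁻¹ :=
    (hf.max continuous_const).inv₀ fun t ↦ (one_half_pos.trans_le (le_max_right _ _)).ne'
  refine ⟨fun t ↦ (max (1 - t) (1 / 2))⁻¹, fun t ↦ (max t (1 / 2))⁻¹,
    continuous_inv_max (by fun_prop), continuous_inv_max continuous_id, fun t ↦ ?_⟩
  beta_reduce
  rcases le_total t (1 / 2) with ht | ht
  · rw [max_eq_left (b := 1 / 2) (a := 1 - t) (by linarith), inv_mul_cancel₀ (by linarith),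
      sub_self, mul_zero]
  · rw [max_eq_left ht, mul_inv_cancel₀ (by linarith), one_mul]

lemma exists_soft_cut {D : A} (hD : IsSelfAdjoint D) :
    ∃ H U V : A, IsSelfAdjoint H ∧ 1 - H = U * (1 - D) ∧ D * V * H = H := by
  obtain ⟨u, v, hu, hv, huv⟩ := exists_continuous_soft_cut
  refine ⟨cfc (fun t ↦ 1 - u t * (1 - t)) D, cfc u D, cfc v D, cfc_predicate _ D, ?_, ?_⟩
  · rw [cfc_sub (fun _ ↦ 1) (fun t ↦ u t * (1 - t)) D, cfc_const_one ℝ D, sub_sub_cancel,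
      cfc_mul u (fun t ↦ 1 - t) D, cfc_sub (fun _ ↦ 1) (fun t ↦ t) D, cfc_const_one ℝ D,
      cfc_id' ℝ D]
  · nth_rw 1 [← cfc_id' ℝ D]
    rw [← cfc_mul (fun t ↦ t) v D, ← cfc_mul (fun t ↦ t * v t) (fun t ↦ 1 - u t * (1 - t)) D]
    simp only [huv]

/-- By induction on `k`: SAW⋆ yields a relative unit for `x` that annihilates `x ^ (k + 1) * q D`.
For a soft cut `G`, `H` of a lift of it, `x * q G` is nilpotent of smaller order. If `H * W` is a
nilpotent lift of `x * q G` and `Z` any lift of `x`, then `X = H * W + H * Z * (1 - G)` lifts `x`,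
and `G * X = X` collapses the powers of `X` onto those of `H * W`. Keeping the lift in the right
ideal generated by `D` is what makes the induction work. -/
theorem exists_nilpotent_lift [PartialOrder B] [StarOrderedRing B] (hB : IsSAWStar B)
    {q : A →⋆ₐ[ℂ] B} (hq : Function.Surjective q) (k : ℕ) {x : B} {D : A} (hD : IsSelfAdjoint D)
    (hx : x ^ (k + 1) = 0) (hDx : q D * x = x) :
    ∃ W : A, q (D * W) = x ∧ (D * W) ^ (k + 1) = 0 := by
  induction k generalizing x D with
  | zero => exact ⟨0, by simpa using hx.symm, by simp⟩
  | succ k ih =>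
    obtain ⟨d, hd, hxd, hdx⟩ := hB.exists_mul_eq_zero_and_mul_eq (y := x ^ (k + 1) * q D)
      (by rw [mul_assoc, hDx, ← pow_succ, hx])
    obtain ⟨D₂, hD₂, rfl⟩ := exists_isSelfAdjoint_lift hq hd
    have hD₁ : IsSelfAdjoint (D * D₂ * D) := by simpa only [hD.star_eq] using hD₂.conjugate D
    obtain ⟨H, U, V, hH, hHU, hGH⟩ := exists_soft_cut hD₁
    set G := D * D₂ * D * V with hG
    have hHx : q H * x = x := by
      have : q (1 - H) * x = 0 := by
        simp only [hHU, map_mul, map_sub, map_one, mul_assoc, sub_mul, one_mul, hDx, hdx, sub_self,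
          mul_zero]
      rwa [map_sub, map_one, sub_mul, one_mul, sub_eq_zero, eq_comm] at this
    have hGx : q G * x = x := by rw [← hHx, ← mul_assoc, ← map_mul, hGH]
    have hxG : x ^ (k + 1) * q G = 0 := by
      simp only [hG, map_mul, ← mul_assoc, hxd, zero_mul]
    obtain ⟨W, hqW, hW⟩ := ih (x := x * q G) hH (by rw [mul_pow_succ_of_mul_eq hGx, hxG])
      (by rw [← mul_assoc, hHx])
    obtain ⟨Z, hZ⟩ := hq x
    set X := H * W + H * Z * (1 - G) with hX
    have hGX : G * X = X := by simp only [hX, mul_add, ← mul_assoc, hGH]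
    have hqX : q X = x := by
      rw [hX, map_add, hqW, map_mul _ (H * Z), map_mul _ H, hZ, hHx, map_sub, map_one, mul_sub,
        mul_one, add_sub_cancel]
    have hXX : SemiconjBy X X (H * W) := by
      calc X * X = H * W * X + H * Z * ((1 - G) * X) := by rw [hX, add_mul, mul_assoc (H * Z)]
        _ = H * W * X := by rw [sub_mul, one_mul, hGX, sub_self, mul_zero, add_zero]
    have hDX : D * (D₂ * D * V * X) = X := by
      simpa only [hG, mul_assoc] using hGX
    exact ⟨D₂ * D * V * X, by rw [hDX, hqX], by
      rw [hDX, pow_succ', (hXX.pow_right _).eq, hW, zero_mul]⟩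

theorem exists_nilpotent_lift_corner [PartialOrder B] [StarOrderedRing B] (hB : IsSAWStar B)
    {q : A →⋆ₐ[ℂ] B} (hq : Function.Surjective q) {k : ℕ} (hk : k ≠ 0) {x : B} {Q : A}
    (hQ : IsStarProjection Q) (hx : x ^ k = 0) (hQx : q Q * x = x) (hxQ : x * q Q = x) :
    ∃ N : A, q N = x ∧ N ^ k = 0 ∧ Q * N = N ∧ N * Q = N := by
  obtain ⟨k, rfl⟩ := Nat.exists_eq_succ_of_ne_zero hk
  obtain ⟨W, hqW, hW⟩ := exists_nilpotent_lift hB hq k hQ.isSelfAdjoint hx hQx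
  have hQQ : Q * Q = Q := hQ.isIdempotentElem.eq
  have hQW : Q * (Q * W) = Q * W := by rw [← mul_assoc, hQQ]
  refine ⟨Q * W * Q, by rw [map_mul, hqW, hxQ], ?_, ?_, ?_⟩
  · rw [mul_pow_succ_of_mul_eq hQW, hW, zero_mul]
  · rw [← mul_assoc, hQW]
  · rw [mul_assoc, hQQ]

end Lifting

section Resolution

variable {ι R A : Type*} [Fintype ι] [CommRing R] [Ring A] [Algebra R A]

/-- The `e i` are spectral idempotents of `b` for the roots `μ i` with exponents `k i`: they are
complete orthogonal, commute with `b`, and `b - μ i` is nilpotent of order `k i` on the range of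
`e i`. The `μ i` may repeat and the `e i` may vanish. -/
structure IsSpectralResolution (b : A) (μ : ι → R) (k : ι → ℕ) (e : ι → A) : Prop where
  completeOrthogonalIdempotents : CompleteOrthogonalIdempotents e
  commute (i : ι) : Commute b (e i)
  pow_sub_mul_eq_zero (i : ι) : (b - μ i • 1) ^ k i * e i = 0

namespace IsSpectralResolution

variable {b : A} {μ : ι → R} {k : ι → ℕ} {e : ι → A}

lemma map {B : Type*} [Ring B] [Algebra R B] (h : IsSpectralResolution b μ k e) (f : A →ₐ[R] B) :
    IsSpectralResolution (f b) μ k (f ∘ e) where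
  completeOrthogonalIdempotents := h.completeOrthogonalIdempotents.map f.toRingHom
  commute i := (h.commute i).map f
  pow_sub_mul_eq_zero i := by simpa using congrArg f (h.pow_sub_mul_eq_zero i)

lemma conj (h : IsSpectralResolution b μ k e) (u : Aˣ) :
    IsSpectralResolution (u * b * ↑u⁻¹) μ k fun i ↦ u * e i * ↑u⁻¹ :=
  h.map (MulSemiringAction.toAlgHom R A (ConjAct.toConjAct u))

lemma smul (h : IsSpectralResolution b μ k e) (z : R) :
    IsSpectralResolution (z • b) (z • μ) k e where
  completeOrthogonalIdempotents := h.completeOrthogonalIdempotents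
  commute i := (h.commute i).smul_left z
  pow_sub_mul_eq_zero i := by
    rw [Pi.smul_apply, smul_eq_mul, mul_smul, ← smul_sub, smul_pow, smul_mul_assoc,
      h.pow_sub_mul_eq_zero i, smul_zero]

open Polynomial in
lemma aeval_eq_zero (h : IsSpectralResolution b μ k e) {P : R[X]}
    (hP : ∀ i, (X - C (μ i)) ^ k i ∣ P) : aeval b P = 0 := by
  rw [← mul_one (aeval b P), ← h.completeOrthogonalIdempotents.complete, Finset.mul_sum]
  refine Finset.sum_eq_zero fun i _ ↦ ?_
  obtain ⟨S, rfl⟩ := hP i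
  rw [mul_comm, map_mul, map_pow, map_sub, aeval_X, aeval_C, Algebra.algebraMap_eq_smul_one,
    mul_assoc, h.pow_sub_mul_eq_zero i, mul_zero]

end IsSpectralResolution

end Resolution

lemma mul_pow_of_commute_of_isIdempotentElem {M : Type*} [Monoid M] {a e : M} (h : Commute a e)
    (he : IsIdempotentElem e) {k : ℕ} (hk : k ≠ 0) : (a * e) ^ k = a ^ k * e := by
  rw [h.mul_pow, he.pow_eq hk]

lemma norm_le_norm_of_pow_sub_mul_eq_zero {𝕜 A : Type*} [NormedField 𝕜] [NormedRing A]
    [NormedAlgebra 𝕜 A] [CompleteSpace A] [NormOneClass A] {b e : A} {l : 𝕜} {k : ℕ} (he : e ≠ 0)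
    (h : (b - l • 1) ^ k * e = 0) : ‖l‖ ≤ ‖b‖ := by
  refine spectrum.norm_le_norm_of_mem (𝕜 := 𝕜) (a := b) fun hl ↦ he ?_
  rw [spectrum.mem_resolventSet_iff, Algebra.algebraMap_eq_smul_one, ← IsUnit.neg_iff,
    neg_sub] at hl
  exact (hl.pow k).mul_right_eq_zero.mp h

section Contraction

variable {B : Type*} [CStarAlgebra B] [PartialOrder B] [StarOrderedRing B] {b e : B} {l : ℂ}

lemma star_sub_mul_eq_zero_of_norm_le (hb : ‖b‖ ≤ ‖l‖) (h : (b - l • 1) * e = 0) :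
    star (b - l • 1) * e = 0 := by
  set N := b - l • 1
  have hb_eq : b = N + l • 1 := (sub_add_cancel b _).symm
  have heN : star e * star N = 0 := by rw [← star_mul, h, star_zero]
  have hbb : b * star b ≤ algebraMap ℝ B (‖l‖ ^ 2) :=
    CStarAlgebra.mul_star_le_algebraMap_norm_sq.trans (algebraMap_mono B (by gcongr))
  have hll : (star l * l) • (1 : B) = algebraMap ℝ B (‖l‖ ^ 2) := by
    rw [Algebra.algebraMap_eq_smul_one, ← Complex.coe_smul]
    congr 1
    simpa using Complex.conj_mul' l
  rw [← CStarRing.star_mul_self_eq_zero_iff]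
  refine le_antisymm ?_ (star_mul_self_nonneg _)
  calc star (star N * e) * (star N * e)
      = star e * (b * star b) * e - star e * algebraMap ℝ B (‖l‖ ^ 2) * e := by
        have hNe (x : B) : x * N * e = 0 := by rw [mul_assoc, h, mul_zero]
        rw [← hll, hb_eq]
        simp only [star_add, star_smul, star_one, star_mul, star_star, mul_add, add_mul,
          mul_smul_comm, smul_mul_assoc, mul_one, one_mul, smul_smul, heN, hNe, ← mul_assoc,
          smul_zero, add_zero, zero_add, add_sub_cancel_right]
    _ ≤ 0 := sub_nonpos.mpr (star_left_conjugate_le_conjugate hbb e)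

lemma sub_mul_eq_zero_of_norm_le (hb : ‖b‖ ≤ ‖l‖) {k : ℕ} (h : (b - l • 1) ^ k * e = 0) :
    (b - l • 1) * e = 0 := by
  induction k with
  | zero => rw [← one_mul e, ← pow_zero (b - l • 1), h, mul_zero]
  | succ k ih =>
    cases k with
    | zero => rwa [zero_add, pow_one] at h
    | succ k =>
    apply ih
    rw [pow_succ', mul_assoc] at h
    rw [← CStarRing.star_mul_self_eq_zero_iff]
    nth_rw 1 [pow_succ']
    rw [mul_assoc, star_mul, mul_assoc, star_sub_mul_eq_zero_of_norm_le hb h, mul_zero]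

lemma star_mul_eq_zero_of_norm_le (hb : ‖b‖ ≤ ‖l‖) {l' : ℂ} (hll' : l ≠ l') {e' : B} {k : ℕ}
    (h : (b - l • 1) * e = 0) (h' : (b - l' • 1) ^ k * e' = 0) : star e * e' = 0 := by
  have heb : star e * (b - l • 1) = 0 := by
    simpa using congrArg star (star_sub_mul_eq_zero_of_norm_le hb h)
  have hsemi : SemiconjBy (star e) (b - l' • 1) ((l - l') • 1) := by
    calc star e * (b - l' • 1) = star e * (b - l • 1) + star e * ((l - l') • 1) := by
          rw [← mul_add, sub_smul, sub_add_sub_cancel]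
      _ = (l - l') • 1 * star e := by rw [heb, zero_add, mul_smul_one, smul_one_mul]
  have hpow : (l - l') ^ k • (star e * e') = 0 := by
    rw [← smul_mul_assoc, ← smul_one_mul, ← one_pow k, ← smul_pow, ← (hsemi.pow_right k).eq,
      mul_assoc, h', mul_zero]
  exact (smul_eq_zero.mp hpow).resolve_left (pow_ne_zero k (sub_ne_zero.mpr hll'))

end Contraction

section Summability

lemma summable_of_le_mul_add {ε : ℝ} (hε0 : 0 ≤ ε) (hε : ε < 1) {f g : ℕ → ℝ}
    (hf : ∀ n, 0 ≤ f n) (hg0 : ∀ n, 0 ≤ g n) (hg : Summable g)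
    (hfg : ∀ n, f (n + 1) ≤ ε * f n + g n) : Summable f := by
  refine summable_of_sum_range_le (c := (f 0 + ∑' n, g n) / (1 - ε)) hf fun n ↦ ?_
  have hc : 0 ≤ (f 0 + ∑' n, g n) / (1 - ε) :=
    div_nonneg (add_nonneg (hf 0) (tsum_nonneg hg0)) (sub_nonneg.mpr hε.le)
  induction n with
  | zero => simpa using hc
  | succ n ih =>
    calc ∑ i ∈ Finset.range (n + 1), f i = ∑ i ∈ Finset.range n, f (i + 1) + f 0 :=
          Finset.sum_range_succ' f n
      _ ≤ ∑ i ∈ Finset.range n, (ε * f i + g i) + f 0 := by gcongr with i; exact hfg i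
      _ ≤ ε * ((f 0 + ∑' n, g n) / (1 - ε)) + ∑' n, g n + f 0 := by
        rw [Finset.sum_add_distrib, ← Finset.mul_sum]
        gcongr
        exact hg.sum_le_tsum _ fun i _ ↦ hg0 i
      _ = (f 0 + ∑' n, g n) / (1 - ε) := by
        have : 1 - ε ≠ 0 := (sub_pos.mpr hε).ne'
        field_simp
        ring

lemma summable_norm_pow_mul {𝕜 A : Type*} [NormedField 𝕜] [NormedRing A] [NormedAlgebra 𝕜 A]
    {c e : A} {μ : 𝕜} (hμ : ‖μ‖ < 1) {k : ℕ} (h : (c - μ • 1) ^ k * e = 0) :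
    Summable fun n ↦ ‖c ^ n * e‖ := by
  induction k generalizing e with
  | zero => simp_all [summable_zero]
  | succ k ih =>
    rw [pow_succ, mul_assoc] at h
    refine summable_of_le_mul_add (norm_nonneg μ) hμ (fun _ ↦ norm_nonneg _)
      (fun _ ↦ norm_nonneg _) (ih h) fun n ↦ ?_
    have hrec : c ^ (n + 1) * e = μ • (c ^ n * e) + c ^ n * ((c - μ • 1) * e) := by
      rw [sub_mul, smul_one_mul, mul_sub, mul_smul_comm, add_sub_cancel, pow_succ, mul_assoc]
    rw [hrec, ← norm_smul]
    exact norm_add_le _ _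

lemma IsSpectralResolution.summable_norm_mul_sum_pow {ι 𝕜 A : Type*} [Fintype ι]
    [NormedField 𝕜] [NormedRing A] [NormedAlgebra 𝕜 A] {b : A} {μ : ι → 𝕜} {k : ι → ℕ} {e : ι → A}
    (h : IsSpectralResolution b μ k e) {s : Finset ι} (hs : ∀ i ∈ s, ‖μ i‖ < 1) :
    Summable fun n ↦ ‖(b * ∑ i ∈ s, e i) ^ n‖ := by
  have hsum : Summable fun n ↦ ∑ i ∈ s, ‖b ^ n * e i‖ :=
    summable_sum fun i hi ↦ summable_norm_pow_mul (hs i hi) (h.pow_sub_mul_eq_zero i)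
  have he := h.completeOrthogonalIdempotents.isIdempotentElem_sum (s := s)
  refine hsum.of_norm_bounded_eventually_nat ?_
  filter_upwards [Filter.eventually_ne_atTop 0] with n hn
  rw [norm_norm, mul_pow_of_commute_of_isIdempotentElem
    (.sum_right _ _ _ fun i _ ↦ h.commute i) he hn, Finset.mul_sum]
  exact norm_sum_le _ _

end Summability

section BlockSum

variable {ι 𝕜 A : Type*} [Fintype ι] [Field 𝕜] [Ring A] [Algebra 𝕜 A] {Q : ι → A} {ν : ι → 𝕜}

lemma sum_smul_mul_eq_smul (hQ : CompleteOrthogonalIdempotents Q) (i : ι) :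
    (∑ j, ν j • Q j) * Q i = ν i • Q i := by
  classical
  simp [Finset.sum_mul, hQ.mul_eq]

lemma mul_sum_smul_eq_smul (hQ : CompleteOrthogonalIdempotents Q) (i : ι) :
    Q i * ∑ j, ν j • Q j = ν i • Q i := by
  classical
  simp [Finset.mul_sum, hQ.mul_eq]

lemma mul_mul_eq_zero_of_commute_sum_smul (hQ : CompleteOrthogonalIdempotents Q) {d : A}
    (hd : Commute (∑ i, ν i • Q i) d) {i j : ι} (hij : ν i ≠ ν j) : Q i * d * Q j = 0 := by
  have : (ν i - ν j) • (Q i * d * Q j) = 0 := by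
    rw [sub_smul, sub_eq_zero]
    calc ν i • (Q i * d * Q j) = Q i * ((∑ l, ν l • Q l) * d) * Q j := by
          rw [← mul_assoc, mul_sum_smul_eq_smul hQ, smul_mul_assoc, smul_mul_assoc]
      _ = ν j • (Q i * d * Q j) := by
          rw [hd.eq, mul_assoc, mul_assoc d, sum_smul_mul_eq_smul hQ, mul_smul_comm,
            mul_smul_comm, mul_assoc]
  exact (smul_eq_zero.mp this).resolve_left (sub_ne_zero.mpr hij)

lemma sum_fiber_mul_mul_sum_fiber_eq [DecidableEq 𝕜] (hQ : CompleteOrthogonalIdempotents Q) {d : A}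
    (hd : Commute (∑ i, ν i • Q i) d) :
    ∑ z ∈ Finset.univ.image ν, (∑ i with ν i = z, Q i) * d * ∑ i with ν i = z, Q i = d := by
  calc ∑ z ∈ Finset.univ.image ν, (∑ i with ν i = z, Q i) * d * ∑ i with ν i = z, Q i
      = ∑ z ∈ Finset.univ.image ν, ∑ i with ν i = z, (∑ j, Q j) * d * Q i := by
        refine Finset.sum_congr rfl fun z _ ↦ ?_
        rw [Finset.mul_sum]
        refine Finset.sum_congr rfl fun i hi ↦ ?_
        rw [Finset.sum_mul, Finset.sum_mul, Finset.sum_mul, Finset.sum_mul]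
        refine Finset.sum_filter_of_ne fun j _ hj ↦ ?_
        by_contra hne
        exact hj (mul_mul_eq_zero_of_commute_sum_smul hQ hd
          fun h ↦ hne (h.trans (Finset.mem_filter.mp hi).2))
    _ = d := by
        rw [Finset.sum_fiberwise_of_maps_to fun i hi ↦ Finset.mem_image_of_mem ν hi,
          ← Finset.mul_sum, hQ.complete, one_mul, mul_one]

lemma isSpectralResolution_sum_smul_add (hQ : CompleteOrthogonalIdempotents Q) {N : ι → A}
    {k : ι → ℕ} (hk : ∀ i, k i ≠ 0) (hN : ∀ i, N i ^ k i = 0) (hQN : ∀ i, Q i * N i = N i)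
    (hNQ : ∀ i, N i * Q i = N i) : IsSpectralResolution (∑ i, (ν i • Q i + N i)) ν k Q := by
  have hN_mul (i : ι) : (∑ j, N j) * Q i = N i := by
    rw [Finset.sum_mul, Fintype.sum_eq_single i fun j hji ↦ ?_, hNQ]
    rw [← hNQ j, mul_assoc, hQ.ortho hji, mul_zero]
  have hmul_N (i : ι) : Q i * ∑ j, N j = N i := by
    rw [Finset.mul_sum, Fintype.sum_eq_single i fun j hji ↦ ?_, hQN]
    rw [← hQN j, ← mul_assoc, hQ.ortho hji.symm, zero_mul]
  have hcomm (i : ι) : Commute (∑ j, (ν j • Q j + N j)) (Q i) := by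
    rw [Commute, SemiconjBy, Finset.sum_add_distrib, add_mul, mul_add, sum_smul_mul_eq_smul hQ,
      mul_sum_smul_eq_smul hQ, hN_mul, hmul_N]
  refine ⟨hQ, hcomm, fun i ↦ ?_⟩
  rw [← mul_pow_of_commute_of_isIdempotentElem
    ((hcomm i).sub_left ((Commute.one_left _).smul_left _)) (hQ.idem i) (hk i), sub_mul,
    Finset.sum_add_distrib, add_mul, sum_smul_mul_eq_smul hQ, hN_mul, smul_one_mul,
    add_sub_cancel_left, hN]

end BlockSum

section SpectralLift

variable {ι A B : Type*} [Fintype ι] [CStarAlgebra A] [CStarAlgebra B] {q : A →⋆ₐ[ℂ] B}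
  {Q : ι → A}

lemma completeOrthogonalIdempotents_of_isStarProjection [PartialOrder A] [StarOrderedRing A]
    (hQ : ∀ i, IsStarProjection (Q i)) (hQ_sum : ∑ i, Q i = 1) :
    CompleteOrthogonalIdempotents Q := by
  classical
  refine ⟨⟨fun i ↦ (hQ i).isIdempotentElem, fun i j hij ↦ ?_⟩, hQ_sum⟩
  have hterm (l : ι) : star (Q l * Q j) * (Q l * Q j) = Q j * Q l * Q j := by
    rw [star_mul, (hQ l).isSelfAdjoint.star_eq, (hQ j).isSelfAdjoint.star_eq, mul_assoc,
      ← mul_assoc (Q l) (Q l), (hQ l).isIdempotentElem.eq, ← mul_assoc]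
  have hsum : ∑ l, star (Q l * Q j) * (Q l * Q j) = Q j := by
    simp only [hterm]
    rw [← Finset.sum_mul, ← Finset.mul_sum, hQ_sum, mul_one, (hQ j).isIdempotentElem.eq]
  rw [← Finset.add_sum_erase _ _ (Finset.mem_univ j), hterm j, (hQ j).isIdempotentElem.eq,
    (hQ j).isIdempotentElem.eq, add_eq_left,
    Finset.sum_eq_zero_iff_of_nonneg fun l _ ↦ star_mul_self_nonneg _] at hsum
  exact CStarRing.star_mul_self_eq_zero_iff _ |>.mp
    (hsum i (Finset.mem_erase.mpr ⟨hij, Finset.mem_univ i⟩))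

variable [PartialOrder B] [StarOrderedRing B]

theorem exists_isSpectralResolution_lift (hB : IsSAWStar B) (hq : Function.Surjective q)
    (hQ : ∀ i, IsStarProjection (Q i)) (hQc : CompleteOrthogonalIdempotents Q) {c : B}
    {μ : ι → ℂ} {k : ι → ℕ} (hk : ∀ i, k i ≠ 0)
    (hc : IsSpectralResolution c μ k (q ∘ Q)) :
    ∃ C : A, q C = c ∧ IsSpectralResolution C μ k Q := by
  have hqQ (i : ι) : q (Q i) * q (Q i) = q (Q i) := by
    rw [← map_mul, (hQ i).isIdempotentElem.eq]
  have hcomm (i : ι) : Commute (c - μ i • 1) (q (Q i)) :=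
    (hc.commute i).sub_left ((Commute.one_left _).smul_left _)
  have hpow (i : ι) : ((c - μ i • 1) * q (Q i)) ^ k i = 0 := by
    rw [mul_pow_of_commute_of_isIdempotentElem (hcomm i) (hqQ i) (hk i)]
    exact hc.pow_sub_mul_eq_zero i
  choose N hqN hNk hQN hNQ using fun i ↦ exists_nilpotent_lift_corner hB hq (hk i) (hQ i) (hpow i)
    (by rw [← mul_assoc, ← (hcomm i).eq, mul_assoc, hqQ i]) (by rw [mul_assoc, hqQ i])
  refine ⟨∑ i, (μ i • Q i + N i), ?_, isSpectralResolution_sum_smul_add hQc hk hNk hQN hNQ⟩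
  simp only [map_sum, map_add, map_smul, hqN, sub_mul, smul_one_mul, add_sub_cancel]
  rw [← Finset.mul_sum, ← map_sum, hQc.complete, map_one, mul_one]

lemma exists_nonneg_lift [PartialOrder A] [StarOrderedRing A] (hq : Function.Surjective q) {d : B}
    (hd : 0 ≤ d) : ∃ D : A, 0 ≤ D ∧ q D = d := by
  obtain ⟨y, rfl⟩ := CStarAlgebra.nonneg_iff_eq_star_mul_self.mp hd
  obtain ⟨Y, rfl⟩ := hq y
  exact ⟨star Y * Y, star_mul_self_nonneg Y, by rw [map_mul, map_star]⟩

theorem exists_nonneg_lift_commute [PartialOrder A] [StarOrderedRing A]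
    (hq : Function.Surjective q) (hQ : ∀ i, IsStarProjection (Q i))
    (hQc : CompleteOrthogonalIdempotents Q) {ν : ι → ℂ} {d : B} (hd : 0 ≤ d)
    (hUd : Commute (q (∑ i, ν i • Q i)) d) :
    ∃ D : A, 0 ≤ D ∧ q D = d ∧ Commute (∑ i, ν i • Q i) D := by
  obtain ⟨Y, hY, rfl⟩ := exists_nonneg_lift hq hd
  set P : ℂ → A := fun z ↦ ∑ i with ν i = z, Q i with hP
  have hP_star (z : ℂ) : star (P z) = P z := by
    simp only [hP, star_sum, (hQ _).isSelfAdjoint.star_eq]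
  have hUP (z : ℂ) : (∑ i, ν i • Q i) * P z = z • P z := by
    rw [hP, Finset.mul_sum, Finset.smul_sum]
    refine Finset.sum_congr rfl fun i hi ↦ ?_
    rw [sum_smul_mul_eq_smul hQc, (Finset.mem_filter.mp hi).2]
  have hPU (z : ℂ) : P z * ∑ i, ν i • Q i = z • P z := by
    rw [hP, Finset.sum_mul, Finset.smul_sum]
    refine Finset.sum_congr rfl fun i hi ↦ ?_
    rw [mul_sum_smul_eq_smul hQc, (Finset.mem_filter.mp hi).2]
  refine ⟨∑ z ∈ Finset.univ.image ν, P z * Y * P z, Finset.sum_nonneg fun z _ ↦ ?_, ?_,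
    Commute.sum_right _ _ _ fun z _ ↦ ?_⟩
  · simpa only [hP_star] using star_left_conjugate_nonneg hY (P z)
  · simp only [map_sum, map_smul] at hUd
    simpa [hP] using sum_fiber_mul_mul_sum_fiber_eq (hQc.map q.toRingHom) hUd
  · rw [Commute, SemiconjBy, ← mul_assoc, ← mul_assoc, hUP, mul_assoc _ _ (∑ i, ν i • Q i), hPU,
      smul_mul_assoc, smul_mul_assoc, mul_smul_comm]

end SpectralLift

section Stein

variable {A : Type*} [CStarAlgebra A]

/-- The solution `∑ (c ^ n)⋆ d c ^ n` of the Stein equation `x = d + c⋆ x c`. It has the junk value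
`0` if the series does not converge. -/
noncomputable def steinSum (c d : A) : A := ∑' n : ℕ, star (c ^ n) * d * c ^ n

variable {c : A}

lemma summable_star_pow_mul_mul_pow (hc : Summable fun n : ℕ ↦ ‖c ^ n‖) (d : A) :
    Summable fun n : ℕ ↦ star (c ^ n) * d * c ^ n := by
  refine .of_norm_bounded_eventually_nat (hc.mul_left ‖d‖) ?_
  filter_upwards [hc.tendsto_atTop_zero.eventually_le_const one_pos] with n hn
  calc ‖star (c ^ n) * d * c ^ n‖ ≤ ‖star (c ^ n)‖ * ‖d‖ * ‖c ^ n‖ := norm_mul₃_le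
    _ ≤ 1 * ‖d‖ * ‖c ^ n‖ := by rw [norm_star]; gcongr
    _ = ‖d‖ * ‖c ^ n‖ := by rw [one_mul]

lemma star_mul_steinSum_mul (hc : Summable fun n : ℕ ↦ ‖c ^ n‖) (d : A) :
    star c * steinSum c d * c = steinSum c (star c * d * c) := by
  have hd := summable_star_pow_mul_mul_pow hc d
  rw [steinSum, ← hd.tsum_mul_left, ← (hd.mul_left _).tsum_mul_right, steinSum]
  simp only [← mul_assoc, ← star_mul, ← pow_succ]
  simp only [mul_assoc, ← pow_succ', ← pow_succ]

lemma steinSum_eq (hc : Summable fun n : ℕ ↦ ‖c ^ n‖) (d : A) :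
    steinSum c d = d + star c * steinSum c d * c := by
  rw [star_mul_steinSum_mul hc, steinSum, (summable_star_pow_mul_mul_pow hc d).tsum_eq_zero_add,
    steinSum]
  simp [pow_succ', mul_assoc]

lemma steinSum_sub (hc : Summable fun n : ℕ ↦ ‖c ^ n‖) (d d' : A) :
    steinSum c (d - d') = steinSum c d - steinSum c d' := by
  simp only [steinSum, mul_sub, sub_mul]
  exact (summable_star_pow_mul_mul_pow hc d).tsum_sub (summable_star_pow_mul_mul_pow hc d')

lemma steinSum_sub_star_mul_mul (hc : Summable fun n : ℕ ↦ ‖c ^ n‖) (d : A) :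
    steinSum c (d - star c * d * c) = d := by
  rw [steinSum_sub hc, ← star_mul_steinSum_mul hc, sub_eq_iff_eq_add, ← steinSum_eq hc]

lemma map_steinSum {B : Type*} [CStarAlgebra B] (q : A →⋆ₐ[ℂ] B)
    (hc : Summable fun n : ℕ ↦ ‖c ^ n‖) (d : A) :
    q (steinSum c d) = steinSum (q c) (q d) := by
  rw [steinSum, (summable_star_pow_mul_mul_pow hc d).map_tsum q (map_continuous q), steinSum]
  simp only [map_mul, map_star, map_pow]

lemma commute_steinSum {x d : A} (hxc : Commute x c) (hxc' : Commute x (star c))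
    (hxd : Commute x d) : Commute x (steinSum c d) :=
  .tsum_right _ fun n ↦ by
    rw [star_pow]
    exact ((hxc'.pow_right n).mul_right hxd).mul_right (hxc.pow_right n)

variable [PartialOrder A] [StarOrderedRing A]

lemma steinSum_nonneg {d : A} (hd : 0 ≤ d) : 0 ≤ steinSum c d :=
  tsum_nonneg fun n ↦ star_left_conjugate_nonneg hd (c ^ n)

lemma le_steinSum (hc : Summable fun n : ℕ ↦ ‖c ^ n‖) {d : A} (hd : 0 ≤ d) : d ≤ steinSum c d := by
  rw [steinSum_eq hc]
  exact le_add_of_nonneg_right (star_left_conjugate_nonneg (steinSum_nonneg hd) c)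

lemma exists_pos_algebraMap_le {h : A} (hh : IsStrictlyPositive h) :
    ∃ ε : ℝ, 0 < ε ∧ algebraMap ℝ A ε ≤ h := by
  rcases subsingleton_or_nontrivial A with _ | _
  · exact ⟨1, one_pos, (Subsingleton.elim _ _).le⟩
  · exact (CFC.exists_pos_algebraMap_le_iff hh.isSelfAdjoint).2 fun x hx ↦ hh.spectrum_pos hx

end Stein

section PartialIsometry

lemma commute_mul_mul_one_sub {A : Type*} [Ring A] {C E : A} (hEC : Commute E C) :
    Commute (C * E) (C * (1 - E)) :=
  ((Commute.refl C).mul_left hEC).mul_right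
    ((Commute.one_right _).sub_right (hEC.symm.mul_left (Commute.refl E)))

variable {A : Type*} [Ring A] [StarRing A] {C E : A}

lemma commute_of_star_mul_self {U F : A} (hU : star U * U = E) (hF : IsSelfAdjoint F)
    (hUF : Commute U F) : Commute E F := by
  have : Commute (star U) F := by simpa only [hF.star_eq] using hUF.star_star
  exact hU ▸ this.mul_left hUF

lemma star_mul_mul_eq_add (hE : IsStarProjection E) (hEC : Commute E C)
    (hU : star (C * E) * (C * E) = E) {F : A} (hF : IsSelfAdjoint F) (hUF : Commute (C * E) F) :
    star C * F * C = star (C * (1 - E)) * F * (C * (1 - E)) + E * F := by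
  have hEF : Commute E F := commute_of_star_mul_self hU hF hUF
  have hblock {R : A} (hR : IsStarProjection R) (hRC : Commute R C) (hRF : Commute R F) :
      star (C * R) * F * (C * R) = star C * (F * C * R) := by
    calc star (C * R) * F * (C * R) = star C * (R * (F * C) * R) := by
          rw [← hRC.eq, star_mul, hR.isSelfAdjoint.star_eq, hRC.eq]; simp only [mul_assoc]
      _ = star C * (F * C * R) := by
        rw [(hRF.mul_right hRC).eq, mul_assoc (F * C), hR.isIdempotentElem.eq]
  have hUFU : star (C * E) * F * (C * E) = E * F := by
    rw [mul_assoc, ← hUF.eq, ← mul_assoc, hU]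
  rw [← hUFU, hblock hE hEC hEF, hblock hE.one_sub ((Commute.one_left C).sub_left hEC)
    ((Commute.one_left F).sub_left hEF), ← mul_add, ← mul_add, sub_add_cancel, mul_one, mul_assoc]

lemma mul_star_mul_one_sub (hE : IsStarProjection E) : E * star (C * (1 - E)) = 0 := by
  rw [star_mul, hE.one_sub.isSelfAdjoint.star_eq, ← mul_assoc,
    hE.isIdempotentElem.mul_one_sub_self, zero_mul]

lemma star_mul_one_sub_mul (hE : IsStarProjection E) (hEC : Commute E C) :
    star (C * (1 - E)) * E = 0 := by
  rw [← star_eq_zero, star_mul, star_star, hE.isSelfAdjoint.star_eq, ← mul_assoc, hEC.eq,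
    mul_assoc, hE.isIdempotentElem.mul_one_sub_self, mul_zero]

lemma commute_mul_star_mul_one_sub (hE : IsStarProjection E) (hEC : Commute E C) :
    Commute (C * E) (star (C * (1 - E))) := by
  rw [Commute, SemiconjBy, mul_assoc, mul_star_mul_one_sub hE, ← hEC.eq, ← mul_assoc,
    star_mul_one_sub_mul hE hEC, mul_zero, zero_mul]

lemma commute_mul_sub_star_mul_mul (hE : IsStarProjection E) (hEC : Commute E C) {F : A}
    (hUF : Commute (C * E) F) :
    Commute (C * E) (F - star (C * (1 - E)) * F * (C * (1 - E))) :=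
  hUF.sub_right (((commute_mul_star_mul_one_sub hE hEC).mul_right hUF).mul_right
    (commute_mul_mul_one_sub hEC))

end PartialIsometry

section SteinInequality

variable {A : Type*} [CStarAlgebra A] {C E : A}

lemma commute_mul_steinSum_mul_one_sub (hE : IsStarProjection E) (hEC : Commute E C) {D : A}
    (hUD : Commute (C * E) D) : Commute (C * E) (steinSum (C * (1 - E)) D) :=
  commute_steinSum (commute_mul_mul_one_sub hEC) (commute_mul_star_mul_one_sub hE hEC) hUD

variable [PartialOrder A] [StarOrderedRing A]

lemma sub_star_mul_mul_nonneg (hE : IsStarProjection E) (hEC : Commute E C)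
    (hU : star (C * E) * (C * E) = E) {F : A} (hF : 0 ≤ F) (hUF : Commute (C * E) F)
    (hCF : star C * F * C ≤ F) : 0 ≤ F - star (C * (1 - E)) * F * (C * (1 - E)) := by
  have hEF : 0 ≤ E * F := (commute_of_star_mul_self hU hF.isSelfAdjoint hUF).mul_nonneg hE.nonneg hF
  rw [sub_nonneg]
  calc star (C * (1 - E)) * F * (C * (1 - E))
      ≤ star (C * (1 - E)) * F * (C * (1 - E)) + E * F := le_add_of_nonneg_right hEF
    _ ≤ F := by rwa [← star_mul_mul_eq_add hE hEC hU hF.isSelfAdjoint hUF]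

lemma star_mul_steinSum_mul_le (hE : IsStarProjection E) (hEC : Commute E C)
    (hU : star (C * E) * (C * E) = E) (hC : Summable fun n : ℕ ↦ ‖(C * (1 - E)) ^ n‖) {D : A}
    (hD : 0 ≤ D) (hUD : Commute (C * E) D) :
    star C * steinSum (C * (1 - E)) D * C ≤ steinSum (C * (1 - E)) D := by
  have hED : Commute E D := commute_of_star_mul_self hU hD.isSelfAdjoint hUD
  have hE_mul : E * steinSum (C * (1 - E)) D = E * D := by
    rw [steinSum_eq hC, mul_add, mul_assoc (star _), ← mul_assoc, mul_star_mul_one_sub hE,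
      zero_mul, add_zero]
  have hE_le : E * D ≤ D := by
    rw [← sub_nonneg, ← one_sub_mul]
    exact ((Commute.one_left D).sub_left hED).mul_nonneg hE.one_sub_nonneg hD
  rw [star_mul_mul_eq_add hE hEC hU (steinSum_nonneg hD).isSelfAdjoint
    (commute_mul_steinSum_mul_one_sub hE hEC hUD), hE_mul]
  conv_rhs => rw [steinSum_eq hC, add_comm]
  gcongr

lemma exists_nonneg_map_eq_zero_algebraMap_le_add {B : Type*} [CStarAlgebra B] [PartialOrder B]
    [StarOrderedRing B] (q : A →⋆ₐ[ℂ] B) {F : A} (hF : IsSelfAdjoint F) {ε : ℝ}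
    (hεF : algebraMap ℝ B ε ≤ q F) :
    ∃ Z : A, 0 ≤ Z ∧ q Z = 0 ∧ algebraMap ℝ A ε ≤ F + Z ∧ ∀ x, Commute x F → Commute x Z := by
  have hsa : IsSelfAdjoint (algebraMap ℝ A ε - F) := (IsSelfAdjoint.algebraMap A (.all ε)).sub hF
  refine ⟨(algebraMap ℝ A ε - F)⁺, CFC.posPart_nonneg _, ?_, ?_, fun x hx ↦ ?_⟩
  · have hq : q (algebraMap ℝ A ε - F) = algebraMap ℝ B ε - q F := by
      rw [map_sub, IsScalarTower.algebraMap_apply ℝ ℂ A, IsScalarTower.algebraMap_apply ℝ ℂ B]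
      congr 1
      exact AlgHomClass.commutes q _
    rw [CFC.posPart_def, NonUnitalStarAlgHomClass.map_cfcₙ q _ _ (hφa := hsa.map q), hq,
      ← CFC.posPart_def, CFC.posPart_eq_zero_iff _ (hq ▸ hsa.map q), sub_nonpos]
    exact hεF
  · exact sub_le_iff_le_add'.mp (CFC.le_posPart hsa)
  · have : Commute (algebraMap ℝ A ε - F) x := Commute.sub_left (Algebra.commutes ε x) hx.symm
    exact (this.cfcₙ_real _).symm

theorem exists_isStrictlyPositive_lift {B : Type*} [CStarAlgebra B] [PartialOrder B]
    [StarOrderedRing B] (q : A →⋆ₐ[ℂ] B) (hE : IsStarProjection E) (hEC : Commute E C)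
    (hU : star (C * E) * (C * E) = E) (hC : Summable fun n : ℕ ↦ ‖(C * (1 - E)) ^ n‖)
    {h : B} (hh : IsStrictlyPositive h) {D : A} (hD : 0 ≤ D) (hUD : Commute (C * E) D)
    (hqD : q D = h - star (q (C * (1 - E))) * h * q (C * (1 - E))) :
    ∃ H : A, IsStrictlyPositive H ∧ q H = h ∧ star C * H * C ≤ H := by
  set c := C * (1 - E)
  have hqc : Summable fun n ↦ ‖q c ^ n‖ := by
    refine hC.of_nonneg_of_le (fun _ ↦ norm_nonneg _) fun n ↦ ?_
    rw [← map_pow]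
    exact NonUnitalStarAlgHom.norm_apply_le q _
  have hqD' : q (steinSum c D) = h := by
    rw [map_steinSum q hC, hqD, steinSum_sub_star_mul_mul hqc]
  obtain ⟨ε, hε, hεh⟩ := exists_pos_algebraMap_le hh
  obtain ⟨Z, hZ, hqZ, hεZ, hcomm⟩ := exists_nonneg_map_eq_zero_algebraMap_le_add q
    (steinSum_nonneg (c := c) hD).isSelfAdjoint (hεh.trans_eq hqD'.symm)
  refine ⟨steinSum c D + steinSum c Z, ?_, ?_, ?_⟩
  · have hle : algebraMap ℝ A ε ≤ steinSum c D + steinSum c Z :=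
      hεZ.trans (by gcongr; exact le_steinSum hC hZ)
    have hεA : IsStrictlyPositive (algebraMap ℝ A ε) := isStrictlyPositive_algebraMap hε
    exact (CStarAlgebra.isUnit_of_le _ hle hεA).isStrictlyPositive (hεA.nonneg.trans hle)
  · rw [map_add, hqD', map_steinSum q hC, hqZ]
    simp [steinSum]
  · rw [mul_add, add_mul]
    exact add_le_add (star_mul_steinSum_mul_le hE hEC hU hC hD hUD)
      (star_mul_steinSum_mul_le hE hEC hU hC hZ
        (hcomm _ (commute_mul_steinSum_mul_one_sub hE hEC hUD)))

end SteinInequality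

section Peripheral

/-- The retraction of the closed unit disc onto its peripheral part: `z` itself on the unit circle
and `0` elsewhere. -/
noncomputable def peripheral (z : ℂ) : ℂ := if ‖z‖ = 1 then z else 0

lemma star_peripheral_mul_peripheral (z : ℂ) :
    star (peripheral z) * peripheral z = if ‖z‖ = 1 then 1 else 0 := by
  unfold peripheral
  split_ifs with hz
  · simpa [hz] using Complex.conj_mul' z
  · simp

section Projections

lemma isStarProjection_sum {ι A : Type*} [Semiring A] [StarRing A] {Q : ι → A}
    (hQ : ∀ i, IsStarProjection (Q i)) (hQc : OrthogonalIdempotents Q) (s : Finset ι) :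
    IsStarProjection (∑ i ∈ s, Q i) :=
  ⟨hQc.isIdempotentElem_sum, isSelfAdjoint_sum s fun i _ ↦ (hQ i).isSelfAdjoint⟩

variable {ι A : Type*} [Fintype ι] [CStarAlgebra A] {Q : ι → A} {C : A} {μ : ι → ℂ} {k : ι → ℕ}

lemma IsSpectralResolution.mul_sum_filter_eq_sum_peripheral (hC : IsSpectralResolution C μ k Q)
    (hk : ∀ i, ‖μ i‖ = 1 → k i = 1) :
    C * ∑ i with ‖μ i‖ = 1, Q i = ∑ i, peripheral (μ i) • Q i := by
  rw [Finset.mul_sum, Finset.sum_filter]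
  refine Finset.sum_congr rfl fun i _ ↦ ?_
  unfold peripheral
  split_ifs with hi
  · have := hC.pow_sub_mul_eq_zero i
    rwa [hk i hi, pow_one, sub_mul, smul_one_mul, sub_eq_zero] at this
  · rw [zero_smul]

lemma star_sum_peripheral_mul_self (hQ : ∀ i, IsStarProjection (Q i))
    (hQc : CompleteOrthogonalIdempotents Q) :
    star (∑ i, peripheral (μ i) • Q i) * (∑ i, peripheral (μ i) • Q i) =
      ∑ i with ‖μ i‖ = 1, Q i := by
  rw [star_sum, Finset.sum_mul, Finset.sum_filter]
  refine Finset.sum_congr rfl fun i _ ↦ ?_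
  rw [star_smul, (hQ i).isSelfAdjoint.star_eq, smul_mul_assoc, mul_sum_smul_eq_smul hQc, smul_smul,
    star_peripheral_mul_peripheral, ite_smul, one_smul, zero_smul]

theorem exists_isStrictlyPositive_lift_star_mul_mul_le {B : Type*} [CStarAlgebra B]
    [PartialOrder A] [StarOrderedRing A] [PartialOrder B] [StarOrderedRing B] {q : A →⋆ₐ[ℂ] B}
    (hq : Function.Surjective q) (hQ : ∀ i, IsStarProjection (Q i)) (hμ : ∀ i, ‖μ i‖ ≤ 1)
    (hk : ∀ i, ‖μ i‖ = 1 → k i = 1) (hC : IsSpectralResolution C μ k Q) {h : B}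
    (hh : IsStrictlyPositive h) (hUh : Commute (q (∑ i, peripheral (μ i) • Q i)) h)
    (hCh : star (q C) * h * q C ≤ h) :
    ∃ H : A, IsStrictlyPositive H ∧ q H = h ∧ star C * H * C ≤ H := by
  have hQc := hC.completeOrthogonalIdempotents
  set E := ∑ i with ‖μ i‖ = 1, Q i
  have hCE : C * E = ∑ i, peripheral (μ i) • Q i := hC.mul_sum_filter_eq_sum_peripheral hk
  have hE : IsStarProjection E := isStarProjection_sum hQ hQc.toOrthogonalIdempotents _
  have hEC : Commute E C := (Commute.sum_right _ _ _ fun i _ ↦ hC.commute i).symm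
  have hU : star (C * E) * (C * E) = E := by rw [hCE, star_sum_peripheral_mul_self hQ hQc]
  have hsummable : Summable fun n ↦ ‖(C * (1 - E)) ^ n‖ := by
    have hE_compl : 1 - E = ∑ i with ¬‖μ i‖ = 1, Q i := by
      rw [← hQc.complete, sub_eq_iff_eq_add', Finset.sum_filter_add_sum_filter_not]
    rw [hE_compl]
    exact hC.summable_norm_mul_sum_pow fun i hi ↦
      (hμ i).lt_of_ne (Finset.mem_filter.mp hi).2
  have hqU : star (q C * q E) * (q C * q E) = q E := by rw [← map_mul, ← map_star, ← map_mul, hU]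
  rw [← hCE, map_mul] at hUh
  obtain ⟨D, hD, hqD, hUD⟩ := exists_nonneg_lift_commute hq hQ hQc
    (ν := fun i ↦ peripheral (μ i))
    (sub_star_mul_mul_nonneg (hE.map q) (hEC.map q) hqU hh.nonneg hUh hCh)
    (by rw [← hCE, map_mul]; exact commute_mul_sub_star_mul_mul (hE.map q) (hEC.map q) hUh)
  exact exists_isStrictlyPositive_lift q hE hEC hU hsummable hh hD (hCE ▸ hUD)
    (by rw [hqD, map_mul, map_sub, map_one])

end Projections

lemma star_sum_smul_eq {ι R A : Type*} [Fintype ι] [CommSemiring R] [StarRing R] [Semiring A]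
    [StarRing A] [Algebra R A] [StarModule R A] {ν : ι → R} {e : ι → A} (he_sum : ∑ i, e i = 1)
    (he : ∀ i j, ν i ≠ ν j → star (e i) * e j = 0) :
    star (∑ i, ν i • e i) = ∑ i, star (ν i) • e i := by
  have hij (i j : ι) : star (ν i) • (star (e i) * e j) = star (ν j) • (star (e i) * e j) := by
    by_cases h : ν i = ν j
    · rw [h]
    · rw [he i j h, smul_zero, smul_zero]
  calc star (∑ i, ν i • e i) = ∑ i, ∑ j, star (ν i) • (star (e i) * e j) := by
        simp only [star_sum, star_smul, ← Finset.smul_sum, ← Finset.mul_sum, he_sum, mul_one]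
    _ = ∑ j, ∑ i, star (ν j) • (star (e i) * e j) := by
        rw [Finset.sum_comm]
        exact Finset.sum_congr rfl fun j _ ↦ Finset.sum_congr rfl fun i _ ↦ hij i j
    _ = ∑ j, star (ν j) • e j := by
        simp only [← Finset.smul_sum, ← Finset.sum_mul, ← star_sum, he_sum, star_one, one_mul]

lemma IsSpectralResolution.star_mul_eq_zero_of_peripheral_ne {ι B : Type*} [Fintype ι]
    [CStarAlgebra B] [PartialOrder B] [StarOrderedRing B] {b : B} {μ : ι → ℂ} {k : ι → ℕ}
    {e : ι → B} (he : IsSpectralResolution b μ k e) (hb : ‖b‖ ≤ 1) {i j : ι}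
    (hij : peripheral (μ i) ≠ peripheral (μ j)) : star (e i) * e j = 0 := by
  wlog hi : ‖μ i‖ = 1 generalizing i j
  · have hj : ‖μ j‖ = 1 := by
      by_contra hj
      exact hij (by rw [peripheral, peripheral, if_neg hi, if_neg hj])
    simpa using congrArg star (this hij.symm hj)
  · have hne : μ i ≠ μ j := fun h ↦ hij (congrArg peripheral h)
    have hbi : ‖b‖ ≤ ‖μ i‖ := hi ▸ hb
    exact star_mul_eq_zero_of_norm_le hbi hne
      (sub_mul_eq_zero_of_norm_le hbi (he.pow_sub_mul_eq_zero i)) (he.pow_sub_mul_eq_zero j)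

lemma star_val_inv_of_isSelfAdjoint {M : Type*} [Monoid M] [StarMul M] {u : Mˣ}
    (hu : IsSelfAdjoint (u : M)) : star (↑u⁻¹ : M) = ↑u⁻¹ := by
  rw [← Units.coe_star_inv, Units.ext (Units.coe_star u ▸ hu : ↑(star u) = (u : M))]

lemma commute_conj_of_star_conj_eq {M : Type*} [Monoid M] [StarMul M] {r : Mˣ}
    (hr : IsSelfAdjoint (r : M)) {u : M} (hu : star (r * u * ↑r⁻¹) = r * star u * ↑r⁻¹) :
    Commute (r * u * ↑r⁻¹) (↑r⁻¹ * ↑r⁻¹) := by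
  have hr_inv : star (↑r⁻¹ : M) = ↑r⁻¹ := star_val_inv_of_isSelfAdjoint hr
  have hu' : (r * u * ↑r⁻¹ : M) = ↑r⁻¹ * u * r := by
    rw [← star_star (r * u * ↑r⁻¹ : M), hu]
    simp only [star_mul, star_star, hr_inv, hr.star_eq, mul_assoc]
  calc (r * u * ↑r⁻¹ * (↑r⁻¹ * ↑r⁻¹) : M) = ↑r⁻¹ * u * ↑r⁻¹ := by rw [hu']; simp [mul_assoc]
    _ = ↑r⁻¹ * ↑r⁻¹ * (r * u * ↑r⁻¹) := by simp [mul_assoc]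

end Peripheral

section Conjugation

variable {A B : Type*} [CStarAlgebra A] [CStarAlgebra B] [PartialOrder A] [StarOrderedRing A]
  [PartialOrder B] [StarOrderedRing B]

lemma norm_conj_le_one {T : Aˣ} (hT : IsSelfAdjoint (T : A)) {C : A}
    (hC : star C * (T * T) * C ≤ T * T) : ‖(T * C * ↑T⁻¹ : A)‖ ≤ 1 := by
  have hT_inv : star (↑T⁻¹ : A) = ↑T⁻¹ := star_val_inv_of_isSelfAdjoint hT
  have hle : star (T * C * ↑T⁻¹ : A) * (T * C * ↑T⁻¹) ≤ 1 := by
    calc star (T * C * ↑T⁻¹ : A) * (T * C * ↑T⁻¹)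
        = star (↑T⁻¹ : A) * (star C * (T * T) * C) * ↑T⁻¹ := by
          simp only [star_mul, hT.star_eq, mul_assoc]
      _ ≤ star (↑T⁻¹ : A) * (T * T) * ↑T⁻¹ := star_left_conjugate_le_conjugate hC _
      _ = 1 := by simp [hT_inv]
  rwa [← CStarAlgebra.norm_le_one_iff_of_nonneg _ (star_mul_self_nonneg _),
    CStarRing.norm_star_mul_self, ← sq, sq_le_one_iff₀ (norm_nonneg _)] at hle

lemma exists_conj_norm_le_one (q : A →⋆ₐ[ℂ] B) {b : B} {r : Bˣ} (hr : 0 ≤ (r : B)) {C H : A}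
    (hqC : q C = r * b * ↑r⁻¹) (hH : IsStrictlyPositive H) (hqH : q H = ↑r⁻¹ * ↑r⁻¹)
    (hCH : star C * H * C ≤ H) :
    ∃ T : Aˣ, q (T * C * ↑T⁻¹) = b ∧ ‖(T * C * ↑T⁻¹ : A)‖ ≤ 1 := by
  obtain ⟨T, hT⟩ := hH.isUnit_cfcSqrt
  have hT_nonneg : 0 ≤ (T : A) := hT ▸ CFC.sqrt_nonneg H
  have hTT : (T * T : A) = H := by rw [hT, CFC.sqrt_mul_sqrt_self H hH.nonneg]
  have hqT : Units.map (q : A →* B) T = r⁻¹ := by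
    ext
    rw [Units.coe_map, MonoidHom.coe_coe, ← CFC.mul_self_eq_mul_self_iff _ _
      (map_nonneg q hT_nonneg) (CFC.inv_nonneg_of_nonneg r hr), ← map_mul, hTT, hqH]
  refine ⟨T, ?_, norm_conj_le_one hT_nonneg.isSelfAdjoint (by rwa [hTT])⟩
  have hqT' : q T = ↑r⁻¹ := congrArg Units.val hqT
  have hqT_inv : q ↑T⁻¹ = r := by
    simpa using congrArg (fun u : Bˣ ↦ (↑u⁻¹ : B)) hqT
  simp [hqC, hqT', hqT_inv, mul_assoc]

end Conjugation

section Lift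

variable {ι A B : Type*} [Fintype ι] [CStarAlgebra A] [CStarAlgebra B] [PartialOrder B]
  [StarOrderedRing B] {q : A →⋆ₐ[ℂ] B} {b : B} {μ : ι → ℂ} {k : ι → ℕ} {e : ι → B} {r : Bˣ}
  {Q : ι → A}

lemma commute_map_sum_peripheral (he : IsSpectralResolution b μ k e) (hb : ‖b‖ ≤ 1)
    (hr : IsSelfAdjoint (r : B)) (hQ : ∀ i, IsStarProjection (Q i))
    (hqQ : ∀ i, q (Q i) = r * e i * ↑r⁻¹) :
    Commute (q (∑ i, peripheral (μ i) • Q i)) (↑r⁻¹ * ↑r⁻¹) := by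
  have hmap (ν : ι → ℂ) : q (∑ i, ν i • Q i) = r * (∑ i, ν i • e i) * ↑r⁻¹ := by
    simp only [map_sum, map_smul, hqQ, Finset.mul_sum, Finset.sum_mul, mul_smul_comm,
      smul_mul_assoc]
  rw [hmap]
  refine commute_conj_of_star_conj_eq hr ?_
  rw [star_sum_smul_eq he.completeOrthogonalIdempotents.complete
    fun i j hij ↦ he.star_mul_eq_zero_of_peripheral_ne hb hij, ← hmap, ← hmap, ← map_star]
  simp only [star_sum, star_smul, (hQ _).isSelfAdjoint.star_eq]

theorem exists_isSpectralResolution_lift_norm_le_one [PartialOrder A] [StarOrderedRing A]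
    (hB : IsSAWStar B) (hq : Function.Surjective q) (he : IsSpectralResolution b μ k e)
    (hb : ‖b‖ ≤ 1) (hμ : ∀ i, ‖μ i‖ ≤ 1) (hk : ∀ i, k i ≠ 0) (hk1 : ∀ i, ‖μ i‖ = 1 → k i = 1)
    (hr : 0 ≤ (r : B)) (hQ : ∀ i, IsStarProjection (Q i)) (hQ_sum : ∑ i, Q i = 1)
    (hqQ : ∀ i, q (Q i) = r * e i * ↑r⁻¹) :
    ∃ (X : A) (f : ι → A), q X = b ∧ ‖X‖ ≤ 1 ∧ IsSpectralResolution X μ k f := by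
  have hc : IsSpectralResolution (r * b * ↑r⁻¹) μ k (q ∘ Q) := by
    have hqQ' : q ∘ Q = fun i ↦ r * e i * ↑r⁻¹ := funext hqQ
    rw [hqQ']
    exact he.conj r
  obtain ⟨C, hqC, hC⟩ := exists_isSpectralResolution_lift hB hq hQ
    (completeOrthogonalIdempotents_of_isStarProjection hQ hQ_sum) hk hc
  have hr_inv : IsSelfAdjoint (↑r⁻¹ : B) := (CFC.inv_nonneg_of_nonneg r hr).isSelfAdjoint
  have hh : IsStrictlyPositive (↑r⁻¹ * ↑r⁻¹ : B) :=
    (r⁻¹ * r⁻¹).isUnit.isStrictlyPositive hr_inv.mul_self_nonneg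
  have hCh : star (q C) * (↑r⁻¹ * ↑r⁻¹) * q C ≤ ↑r⁻¹ * ↑r⁻¹ := by
    have hbb : star b * b ≤ 1 := (CStarAlgebra.norm_le_one_iff_of_nonneg _
      (star_mul_self_nonneg b)).mp (by rw [CStarRing.norm_star_mul_self]; nlinarith [norm_nonneg b])
    calc star (q C) * (↑r⁻¹ * ↑r⁻¹) * q C = star (↑r⁻¹ : B) * (star b * b) * ↑r⁻¹ := by
          simp [hqC, hr_inv.star_eq, hr.isSelfAdjoint.star_eq, mul_assoc]
      _ ≤ star (↑r⁻¹ : B) * 1 * ↑r⁻¹ := star_left_conjugate_le_conjugate hbb _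
      _ = ↑r⁻¹ * ↑r⁻¹ := by rw [hr_inv.star_eq, mul_one]
  obtain ⟨H, hH, hqH, hCH⟩ := exists_isStrictlyPositive_lift_star_mul_mul_le hq hQ hμ hk1 hC hh
    (commute_map_sum_peripheral he hb hr.isSelfAdjoint hQ hqQ) hCh
  obtain ⟨T, hqT, hT⟩ := exists_conj_norm_le_one q hr hqC hH hqH hCH
  exact ⟨_, _, hqT, hT, hC.conj T⟩

end Lift

section Rescaling

variable {ι A B : Type*} [Fintype ι] [CStarAlgebra A] [CStarAlgebra B] [PartialOrder B]
  [StarOrderedRing B] {q : A →⋆ₐ[ℂ] B} {b : B} {μ : ι → ℂ} {k : ι → ℕ} {e : ι → B} {r : Bˣ}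
  {Q : ι → A}

theorem exists_isSpectralResolution_lift_norm_eq (hB : IsSAWStar B)
    (hq : Function.Surjective q) (he : IsSpectralResolution b μ k e) (hμ : ∀ i, ‖μ i‖ ≤ ‖b‖)
    (hk : ∀ i, k i ≠ 0) (hk1 : ∀ i, ‖μ i‖ = ‖b‖ → k i = 1) (hr : 0 ≤ (r : B))
    (hQ : ∀ i, IsStarProjection (Q i)) (hQ_sum : ∑ i, Q i = 1)
    (hqQ : ∀ i, q (Q i) = r * e i * ↑r⁻¹) :
    ∃ (X : A) (f : ι → A), q X = b ∧ ‖X‖ = ‖b‖ ∧ IsSpectralResolution X μ k f := by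
  let _ : PartialOrder A := CStarAlgebra.spectralOrder A
  have _ : StarOrderedRing A := CStarAlgebra.spectralOrderedRing A
  rcases eq_or_ne b 0 with rfl | hb
  · have hμ0 (i : ι) : μ i = 0 := by simpa using hμ i
    refine ⟨0, Q, map_zero q, by simp, ?_⟩
    exact ⟨completeOrthogonalIdempotents_of_isStarProjection hQ hQ_sum,
      fun i ↦ .zero_left _, fun i ↦ by simp [hμ0, hk i]⟩
  · have hb0 : ‖b‖ ≠ 0 := norm_ne_zero_iff.mpr hb
    have hbc : (‖b‖ : ℂ) ≠ 0 := Complex.ofReal_ne_zero.mpr hb0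
    have hnorm (i : ι) : ‖((‖b‖ : ℂ)⁻¹ • μ) i‖ = ‖μ i‖ / ‖b‖ := by
      simp [div_eq_inv_mul]
    obtain ⟨Y, f, hqY, hY, hf⟩ := exists_isSpectralResolution_lift_norm_le_one hB hq
      (he.smul (‖b‖ : ℂ)⁻¹) (by simp [norm_smul, hb0])
      (fun i ↦ hnorm i ▸ div_le_one_of_le₀ (hμ i) (norm_nonneg b)) hk
      (fun i hi ↦ hk1 i (by rwa [hnorm, div_eq_one_iff_eq hb0] at hi)) hr hQ hQ_sum hqQ
    have hqX : q ((‖b‖ : ℂ) • Y) = b := by rw [map_smul, hqY, smul_inv_smul₀ hbc]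
    refine ⟨(‖b‖ : ℂ) • Y, f, hqX, le_antisymm ?_ ?_, ?_⟩
    · simpa [norm_smul] using mul_le_of_le_one_right (norm_nonneg b) hY
    · simpa only [hqX] using NonUnitalStarAlgHom.norm_apply_le q ((‖b‖ : ℂ) • Y)
    · simpa only [smul_inv_smul₀ hbc] using hf.smul (‖b‖ : ℂ)

/-- Vanishing idempotents put no constraint on their root and exponent, so these are copied from
a nonvanishing one; exponents at roots of maximal modulus drop to `1`. -/
lemma IsSpectralResolution.exists_reduced [Nontrivial B] (he : IsSpectralResolution b μ k e) :
    ∃ (κ : ι → ι) (m : ι → ℕ), IsSpectralResolution b (μ ∘ κ) m e ∧ (∀ i, m i ≤ k (κ i)) ∧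
      (∀ i, ‖μ (κ i)‖ ≤ ‖b‖) ∧ (∀ i, m i ≠ 0) ∧ ∀ i, ‖μ (κ i)‖ = ‖b‖ → m i = 1 := by
  obtain ⟨i₀, hi₀⟩ : ∃ i₀, e i₀ ≠ 0 := by
    by_contra! h
    exact one_ne_zero (by rw [← he.completeOrthogonalIdempotents.complete, Finset.sum_eq_zero
      fun i _ ↦ h i])
  have hκ (i : ι) : ∃ j, e j ≠ 0 ∧ (e i ≠ 0 → j = i) := by
    by_cases hi : e i = 0
    · exact ⟨i₀, hi₀, fun h ↦ absurd hi h⟩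
    · exact ⟨i, hi, fun _ ↦ rfl⟩
  choose κ hκ_ne hκ_eq using hκ
  have hk (i : ι) : k (κ i) ≠ 0 := fun hk0 ↦ hκ_ne i <| by
    simpa [hk0] using he.pow_sub_mul_eq_zero (κ i)
  refine ⟨κ, fun i ↦ if ‖μ (κ i)‖ = ‖b‖ then 1 else k (κ i),
    ⟨he.completeOrthogonalIdempotents, he.commute, fun i ↦ ?_⟩, fun i ↦ ?_,
    fun i ↦ norm_le_norm_of_pow_sub_mul_eq_zero (hκ_ne i) (he.pow_sub_mul_eq_zero (κ i)),
    fun i ↦ ?_, fun i hi ↦ if_pos hi⟩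
  · by_cases hi : e i = 0
    · rw [hi, mul_zero]
    · rw [Function.comp_apply, hκ_eq i hi]
      split_ifs with h
      · rw [pow_one]
        exact sub_mul_eq_zero_of_norm_le h.ge (he.pow_sub_mul_eq_zero i)
      · exact he.pow_sub_mul_eq_zero i
  · dsimp only
    split_ifs
    exacts [Nat.one_le_iff_ne_zero.mpr (hk i), le_rfl]
  · dsimp only
    split_ifs
    exacts [one_ne_zero, hk i]

end Rescaling

open Polynomial in
lemma prod_ofFn_eq_aeval {R A : Type*} [CommRing R] [Ring A] [Algebra R A] {n : ℕ} (x : A)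
    (μ : Fin n → R) (k : Fin n → ℕ) :
    (List.ofFn fun i ↦ (x - μ i • 1) ^ k i).prod = aeval x (∏ i, (X - C (μ i)) ^ k i) := by
  rw [← List.prod_ofFn, map_list_prod, List.map_ofFn]
  congr 2
  ext i
  simp [Algebra.algebraMap_eq_smul_one]

open Polynomial in
theorem stmt_5_general {ι A B : Type*} [Fintype ι] [CStarAlgebra A] [CStarAlgebra B] [Nontrivial B]
    [PartialOrder B] [StarOrderedRing B] {q : A →⋆ₐ[ℂ] B} (hq : Function.Surjective q)
    (hB : IsSAWStar B) {b : B} {μ : ι → ℂ} {k : ι → ℕ} {e : ι → B}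
    (he : IsSpectralResolution b μ k e) {r : Bˣ} (hr : 0 ≤ (r : B)) {Q : ι → A}
    (hQ : ∀ i, IsStarProjection (Q i)) (hQ_sum : ∑ i, Q i = 1)
    (hqQ : ∀ i, q (Q i) = r * e i * ↑r⁻¹) :
    ∃ x : A, q x = b ∧ aeval x (∏ i, (X - C (μ i)) ^ k i) = 0 ∧ ‖x‖ = ‖b‖ := by
  obtain ⟨κ, m, hm, hmk, hμ, hm0, hm1⟩ := he.exists_reduced
  obtain ⟨x, f, hqx, hx, hf⟩ :=
    exists_isSpectralResolution_lift_norm_eq hB hq hm hμ hm0 hm1 hr hQ hQ_sum hqQ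
  exact ⟨x, hqx, hf.aeval_eq_zero fun i ↦ (pow_dvd_pow _ (hmk i)).trans
    (Finset.dvd_prod_of_mem (fun j ↦ (X - C (μ j)) ^ k j) (Finset.mem_univ (κ i))), hx⟩

/-- **Lemma on norm-preserving algebraic lifting.** Let
`p(t) = (t−λ₁)^{k₁}⋯(t−λₙ)^{kₙ}` with distinct roots and all `kᵢ ≥ 2`. Let `A` be a unital
C*-algebra, `q : A → A/I` the quotient map onto a SAW* quotient (encoded as a surjective
unital star algebra homomorphism onto a SAW* C*-algebra `B`). Let `b ∈ B` with `p(b) = 0`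
and `‖b‖ = 1`, let `e i` be the spectral idempotents of `b`, `s = ∑ eᵢ* eᵢ` (positive and
invertible, with positive square root `r` and inverse square root `r'`), and
`pᵢ = s^{1/2} eᵢ s^{-1/2}` the associated projections with sum `1`. If the `pᵢ` lift to
projections `Qᵢ ∈ A` with sum `1`, then `b` lifts to `X ∈ A` with `p(X) = 0`, `‖X‖ = 1`. -/
theorem stmt_5 {A B : Type*} [CStarAlgebra A] [CStarAlgebra B]
    [PartialOrder B] [StarOrderedRing B]
    (q : A →⋆ₐ[ℂ] B) (hq : Function.Surjective q)
    (hSAW : ∀ a b : B, IsSelfAdjoint a → IsSelfAdjoint b → a * b = 0 →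
      ∃ z : B, 0 ≤ z ∧ z ≤ 1 ∧ a * z = a ∧ z * b = 0)
    (n : ℕ) (lam : Fin n → ℂ) (hlam : Function.Injective lam)
    (k : Fin n → ℕ) (hk : ∀ i, 2 ≤ k i)
    (b : B) (hb : (List.ofFn fun i => (b - lam i • 1) ^ k i).prod = 0) (hbnorm : ‖b‖ = 1)
    (e : Fin n → B)
    (he_idem : ∀ i, e i * e i = e i)
    (he_orth : ∀ i j, i ≠ j → e i * e j = 0)
    (he_sum : ∑ i, e i = 1)
    (he_comm : ∀ i, b * e i = e i * b)
    (he_ann : ∀ i, (b - lam i • 1) ^ k i * e i = 0)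
    (s r r' : B) (hs : s = ∑ i, star (e i) * e i)
    (hs_pos : 0 ≤ s) (hs_inv : IsUnit s)
    (hr_pos : 0 ≤ r) (hr_sq : r * r = s) (hrr' : r * r' = 1) (hr'r : r' * r = 1)
    (p : Fin n → B) (hp : ∀ i, p i = r * e i * r')
    (hp_proj : ∀ i, IsSelfAdjoint (p i) ∧ IsIdempotentElem (p i))
    (hp_sum : ∑ i, p i = 1)
    (Q : Fin n → A)
    (hQ_proj : ∀ i, IsSelfAdjoint (Q i) ∧ IsIdempotentElem (Q i))
    (hQ_sum : ∑ i, Q i = 1)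
    (hQ_lift : ∀ i, q (Q i) = p i) :
    ∃ X : A, q X = b ∧ (List.ofFn fun i => (X - lam i • 1) ^ k i).prod = 0 ∧ ‖X‖ = 1 := by
  have : Nontrivial B := ⟨b, 0, norm_ne_zero_iff.mp (hbnorm ▸ one_ne_zero)⟩
  have he : IsSpectralResolution b lam k e :=
    ⟨⟨⟨he_idem, he_orth⟩, he_sum⟩, he_comm, he_ann⟩
  have hQ (i : Fin n) : IsStarProjection (Q i) := ⟨(hQ_proj i).2, (hQ_proj i).1⟩
  simpa only [prod_ofFn_eq_aeval, hbnorm] using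
    stmt_5_general hq hSAW he (r := ⟨r, r', hrr', hr'r⟩) hr_pos hQ hQ_sum
      fun i ↦ (hQ_lift i).trans (hp i)
end

section
/- Let p(t) = (t−λ₁)^{k₁}⋯(t−λₙ)^{kₙ} be a complex polynomial with distinct roots λ₁,…,λₙ and all multiplicities kᵢ ≥ 2. Then the universal C*-algebra of the relation 'p(x) = 0, ‖x‖ ≤ 1' is residually finite-dimensional, in the following concrete sense: for every complex Hilbert space H, every bounded operator T on H with p(T) = 0 and ‖T‖ ≤ 1, every element f of the free (noncommutative) ℂ-algebra on two generators, and every ε > 0, there exist m ∈ ℕ and a complex m×m matrix M with p(M) = 0 and ‖M‖ ≤ 1 (operator norm) such that ‖f(M, M*)‖ ≥ ‖f(T, T*)‖ − ε, where f(a, a*) denotes the evaluation of f sending the first generator to a and the second to a*. -/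
/-!
Write `p = c (X - a₁) ⋯ (X - a_N)` with `c ≠ 0`. Since `p(T) = 0`, the kernels of the tail products
`(T - a_{i+1}) ⋯ (T - a_N)` form a flag of closed subspaces descending from `H` to `0`, and `T` is
block triangular for this flag, with the scalars `aᵢ` as diagonal blocks. If a finite-dimensional
subspace `W` is invariant under the orthogonal projections onto the members of the flag, then the
compression `M` of `T` to `W` is block triangular with the same diagonal scalars, whence
`p(M) = 0`. The projections onto a flag form a finite set closed under multiplication, so every
finite-dimensional subspace is contained in such a `W`. Now let `v` be a unit-ball vector at which
`f(T, T*)` almost attains its norm: if `W` contains the finitely many vectors met in evaluating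
`f(T, T*) v`, then `f(M, M*) v = f(T, T*) v`.
-/

open Polynomial

lemma lift_map_star {R A B F : Type*} [CommSemiring R] [Semiring A] [Algebra R A] [Star A]
    [Semiring B] [Algebra R B] [Star B] [FunLike F A B] [AlgHomClass F R A B] [StarHomClass F A B]
    (φ : F) (a : A) (f : FreeAlgebra R (Fin 2)) :
    FreeAlgebra.lift R ![φ a, star (φ a)] f = φ (FreeAlgebra.lift R ![a, star a] f) := by
  have hhom : FreeAlgebra.lift R ![φ a, star (φ a)] =
      (φ : A →ₐ[R] B).comp (FreeAlgebra.lift R ![a, star a]) := by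
    ext i
    fin_cases i <;> simp [map_star]
  exact DFunLike.congr_fun hhom f

lemma aeval_prod_X_sub_C_pow {R A : Type*} [CommRing R] [Ring A] [Algebra R A] {n : ℕ}
    (lam : Fin n → R) (k : Fin n → ℕ) (S : A) :
    aeval S (∏ i, (X - C (lam i)) ^ k i) = (List.ofFn fun i => (S - lam i • 1) ^ k i).prod := by
  simp [← List.prod_ofFn, map_list_prod, List.map_ofFn, Function.comp_def,
    Algebra.algebraMap_eq_smul_one]

lemma norm_conjStarAlgEquiv_apply {𝕜 E F : Type*} [RCLike 𝕜] [NormedAddCommGroup E]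
    [InnerProductSpace 𝕜 E] [CompleteSpace E] [NormedAddCommGroup F] [InnerProductSpace 𝕜 F]
    [CompleteSpace F] (e : E ≃ₗᵢ[𝕜] F) (A : E →L[𝕜] E) : ‖e.conjStarAlgEquiv A‖ = ‖A‖ := by
  rw [LinearIsometryEquiv.conjStarAlgEquiv_apply]
  exact (e.toLinearIsometry.norm_toContinuousLinearMap_comp).trans
    (A.opNorm_comp_linearIsometryEquiv e.symm)

section Projection

variable {𝕜 H : Type*} [RCLike 𝕜] [NormedAddCommGroup H] [InnerProductSpace 𝕜 H]

lemma commute_starProjection_of_mem_invtSubmodule {A : H →L[𝕜] H} (hA : A.IsSymmetric)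
    {W : Submodule 𝕜 H} [W.HasOrthogonalProjection]
    (hW : W ∈ Module.End.invtSubmodule A.toLinearMap) : Commute W.starProjection A := by
  rw [ContinuousLinearMap.IsIdempotentElem.commute_iff W.isIdempotentElem_starProjection,
    W.range_starProjection, W.ker_starProjection]
  exact ⟨hW, hA.orthogonalComplement_mem_invtSubmodule hW⟩

lemma starProjection_mem_of_mem_invtSubmodule {F W : Submodule 𝕜 H}
    [F.HasOrthogonalProjection] [W.HasOrthogonalProjection]
    (hW : W ∈ Module.End.invtSubmodule F.starProjection.toLinearMap) {v : H} (hv : v ∈ F) :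
    W.starProjection v ∈ F := by
  have hcomm := commute_starProjection_of_mem_invtSubmodule F.starProjection_isSymmetric hW
  rw [← Submodule.starProjection_eq_self_iff] at hv ⊢
  calc F.starProjection (W.starProjection v) = W.starProjection (F.starProjection v) :=
        (DFunLike.congr_fun hcomm v).symm
    _ = W.starProjection v := by rw [hv]

lemma starProjection_starProjection_of_le_or_le {F G : Submodule 𝕜 H}
    [F.HasOrthogonalProjection] [G.HasOrthogonalProjection] (h : F ≤ G ∨ G ≤ F) (v : H) :
    F.starProjection (G.starProjection v) = F.starProjection v ∨
      F.starProjection (G.starProjection v) = G.starProjection v :=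
  h.imp (fun hFG => DFunLike.congr_fun (Submodule.starProjection_comp_starProjection_of_le hFG) v)
    fun hGF => Submodule.starProjection_eq_self_iff.mpr (hGF (G.starProjection_apply_mem v))

lemma exists_finiteDimensional_mem_invtSubmodule_starProjection {ι : Type*} [Finite ι]
    (F : ι → Submodule 𝕜 H) [∀ i, (F i).HasOrthogonalProjection]
    (hF : ∀ i j, F i ≤ F j ∨ F j ≤ F i) (V : Submodule 𝕜 H) [FiniteDimensional 𝕜 V] :
    ∃ W : Submodule 𝕜 H, FiniteDimensional 𝕜 W ∧ V ≤ W ∧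
      ∀ i, W ∈ Module.End.invtSubmodule (F i).starProjection.toLinearMap := by
  let W := V ⊔ ⨆ i, V.map (F i).starProjection.toLinearMap
  have hPW (i : ι) {v : H} (hv : v ∈ V) : (F i).starProjection v ∈ W :=
    Submodule.mem_sup_right (Submodule.mem_iSup_of_mem i (Submodule.mem_map_of_mem hv))
  refine ⟨W, inferInstance, le_sup_left, fun i => ?_⟩
  rw [Module.End.mem_invtSubmodule]
  refine sup_le (fun v hv => hPW i hv) (iSup_le ?_)
  rintro j _ ⟨v, hv, rfl⟩
  change (F i).starProjection ((F j).starProjection v) ∈ W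
  rcases starProjection_starProjection_of_le_or_le (hF i j) v with h | h <;> rw [h]
  exacts [hPW i hv, hPW j hv]

end Projection

section Compression

variable {𝕜 H : Type*} [RCLike 𝕜] [NormedAddCommGroup H] [InnerProductSpace 𝕜 H]

/-- The compression `P_W T|_W` of the operator `T` to the subspace `W`, as an operator on `W`. -/
noncomputable def compression (W : Submodule 𝕜 H) [W.HasOrthogonalProjection] (T : H →L[𝕜] H) :
    W →L[𝕜] W :=
  W.orthogonalProjectionOnto ∘L T ∘L W.subtypeL

section

variable (W : Submodule 𝕜 H) [W.HasOrthogonalProjection]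

lemma coe_compression_apply (T : H →L[𝕜] H) (x : W) :
    (compression W T x : H) = W.starProjection (T x) := rfl

lemma coe_compression_apply_of_mem {T : H →L[𝕜] H} {x : W} (hx : T x ∈ W) :
    (compression W T x : H) = T x :=
  Submodule.starProjection_eq_self_iff.mpr hx

lemma norm_compression_le (T : H →L[𝕜] H) : ‖compression W T‖ ≤ ‖T‖ :=
  calc ‖compression W T‖ ≤ ‖W.orthogonalProjectionOnto‖ * (‖T‖ * ‖W.subtypeL‖) :=
        (ContinuousLinearMap.opNorm_comp_le _ _).trans <| by
          gcongr; exact ContinuousLinearMap.opNorm_comp_le _ _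
    _ ≤ 1 * (‖T‖ * 1) := by
        gcongr
        exacts [W.orthogonalProjectionOnto_norm_le, W.norm_subtypeL_le]
    _ = ‖T‖ := by ring

end

lemma star_compression [CompleteSpace H] (W : Submodule 𝕜 H) [CompleteSpace W] (T : H →L[𝕜] H) :
    star (compression W T) = compression W (star T) := by
  simp only [compression, ContinuousLinearMap.star_eq_adjoint, ContinuousLinearMap.adjoint_comp,
    Submodule.adjoint_subtypeL, Submodule.adjoint_orthogonalProjectionOnto,
    ContinuousLinearMap.comp_assoc]

lemma exists_finiteDimensional_lift_compression_apply_eq {X : Type*} (A : X → H →L[𝕜] H)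
    (f : FreeAlgebra 𝕜 X) (v : H) :
    ∃ V : Submodule 𝕜 H, FiniteDimensional 𝕜 V ∧
      ∀ (W : Submodule 𝕜 H) [W.HasOrthogonalProjection], V ≤ W → ∀ x : W, (x : H) = v →
        (FreeAlgebra.lift 𝕜 (fun i => compression W (A i)) f x : H) =
          FreeAlgebra.lift 𝕜 A f v := by
  induction f using FreeAlgebra.induction generalizing v with
  | grade0 r =>
    refine ⟨⊥, inferInstance, fun W _ _ x hx => ?_⟩
    simp [Algebra.algebraMap_eq_smul_one, hx]
  | grade1 i =>
    refine ⟨𝕜 ∙ A i v, inferInstance, ?_⟩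
    rintro W _ hW x rfl
    simpa using coe_compression_apply_of_mem W (hW (Submodule.mem_span_singleton_self _))
  | mul f g hf hg =>
    obtain ⟨V₁, _, hV₁⟩ := hg v
    obtain ⟨V₂, _, hV₂⟩ := hf (FreeAlgebra.lift 𝕜 A g v)
    refine ⟨V₁ ⊔ V₂, inferInstance, fun W _ hW x hx => ?_⟩
    obtain ⟨hW₁, hW₂⟩ := sup_le_iff.mp hW
    simp only [map_mul, mul_apply_eq_comp]
    exact hV₂ W hW₂ _ (hV₁ W hW₁ x hx)
  | add f g hf hg =>
    obtain ⟨V₁, _, hV₁⟩ := hf v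
    obtain ⟨V₂, _, hV₂⟩ := hg v
    refine ⟨V₁ ⊔ V₂, inferInstance, fun W _ hW x hx => ?_⟩
    obtain ⟨hW₁, hW₂⟩ := sup_le_iff.mp hW
    simp only [map_add, add_apply, Submodule.coe_add, hV₁ W hW₁ x hx, hV₂ W hW₂ x hx]

lemma exists_finiteDimensional_norm_lift_sub_le {X : Type*} (A : X → H →L[𝕜] H)
    (f : FreeAlgebra 𝕜 X) {ε : ℝ} (hε : 0 < ε) :
    ∃ V : Submodule 𝕜 H, FiniteDimensional 𝕜 V ∧
      ∀ (W : Submodule 𝕜 H) [W.HasOrthogonalProjection], V ≤ W →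
        ‖FreeAlgebra.lift 𝕜 A f‖ - ε ≤ ‖FreeAlgebra.lift 𝕜 (fun i => compression W (A i)) f‖ := by
  obtain ⟨v, hv1, hv⟩ := ContinuousLinearMap.exists_lt_apply_of_lt_opNorm
    (FreeAlgebra.lift 𝕜 A f) (sub_lt_self _ hε)
  obtain ⟨V, _, hV⟩ := exists_finiteDimensional_lift_compression_apply_eq A f v
  refine ⟨V ⊔ 𝕜 ∙ v, inferInstance, fun W _ hW => ?_⟩
  obtain ⟨hVW, hvW⟩ := sup_le_iff.mp hW
  let x : W := ⟨v, hvW (Submodule.mem_span_singleton_self v)⟩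
  calc ‖FreeAlgebra.lift 𝕜 A f‖ - ε ≤ ‖FreeAlgebra.lift 𝕜 A f v‖ := hv.le
    _ = ‖FreeAlgebra.lift 𝕜 (fun i => compression W (A i)) f x‖ := by
      rw [← hV W hVW x rfl, Submodule.coe_norm]
    _ ≤ _ := ContinuousLinearMap.unit_le_opNorm _ x hv1.le

end Compression

section RootKernel

variable {R M : Type*} [CommRing R] [AddCommGroup M] [Module R M] [TopologicalSpace M]
  [IsTopologicalAddGroup M] [ContinuousConstSMul R M]

/-- The subspace `ker ((T - a₁) ⋯ (T - a_N))` for `L = [a₁, …, a_N]`. The root kernels of the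
suffixes of `L` form the flag for which the restriction of `T` to the root kernel of `L` is block
triangular with scalar diagonal blocks. -/
noncomputable abbrev rootKernel (T : M →L[R] M) (L : List R) : Submodule R M :=
  (aeval T (L.map fun a => X - C a).prod).ker

lemma rootKernel_nil (T : M →L[R] M) : rootKernel T [] = ⊥ := by
  ext x
  simp

lemma mem_rootKernel_cons {T : M →L[R] M} {a : R} {L : List R} {x : M} :
    x ∈ rootKernel T (a :: L) ↔ T x - a • x ∈ rootKernel T L := by
  rw [rootKernel, List.map_cons, List.prod_cons, mul_comm]
  simp [Algebra.algebraMap_eq_smul_one]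

lemma rootKernel_mono {T : M →L[R] M} {L L' : List R} (h : L <:+ L') :
    rootKernel T L ≤ rootKernel T L' := by
  obtain ⟨L₀, rfl⟩ := h
  intro x hx
  have hx' : aeval T (L.map fun a => X - C a).prod x = 0 := hx
  simp [hx']

end RootKernel

section CompressionRootKernel

variable {𝕜 H : Type*} [RCLike 𝕜] [NormedAddCommGroup H] [InnerProductSpace 𝕜 H]
  [CompleteSpace H]

lemma mem_rootKernel_compression {T : H →L[𝕜] H} {L : List 𝕜}
    {W : Submodule 𝕜 H} [W.HasOrthogonalProjection]
    (hW : ∀ L', L' <:+ L →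
      W ∈ Module.End.invtSubmodule (rootKernel T L').starProjection.toLinearMap)
    {x : W} (hx : (x : H) ∈ rootKernel T L) : x ∈ rootKernel (compression W T) L := by
  induction L generalizing x with
  | nil => simpa [rootKernel_nil] using hx
  | cons a L ih =>
    have hcoe : ((compression W T x - a • x : W) : H) = W.starProjection (T x - a • x) := by
      simp [coe_compression_apply]
    rw [mem_rootKernel_cons] at hx ⊢
    refine ih (fun L' hL' => hW L' (hL'.trans (List.suffix_cons a L))) ?_
    rw [hcoe]
    exact starProjection_mem_of_mem_invtSubmodule (hW L (List.suffix_cons a L)) hx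

lemma exists_finiteDimensional_aeval_compression_eq_zero {T : H →L[𝕜] H}
    {p : 𝕜[X]} (hp : p.Splits) (hT : aeval T p = 0) (V : Submodule 𝕜 H) [FiniteDimensional 𝕜 V] :
    ∃ (W : Submodule 𝕜 H) (_ : FiniteDimensional 𝕜 W), V ≤ W ∧ aeval (compression W T) p = 0 := by
  rcases eq_or_ne p 0 with rfl | hp0
  · exact ⟨V, inferInstance, le_rfl, map_zero _⟩
  obtain ⟨roots, hL⟩ := splits_iff_exists_multiset.mp hp
  obtain ⟨L, rfl⟩ : ∃ L : List 𝕜, ↑L = roots := Quot.exists_rep roots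
  rw [Multiset.map_coe, Multiset.prod_coe] at hL
  have hker (x : H) : x ∈ rootKernel T L := by
    have hTx := DFunLike.congr_fun hT x
    rw [hL] at hTx
    simpa [hp0] using hTx
  have : Finite {L' // L' <:+ L} :=
    (L.tails.finite_toSet.subset fun L' h => (List.mem_tails L' L).mpr h).to_subtype
  obtain ⟨W, hWfin, hVW, hW⟩ := exists_finiteDimensional_mem_invtSubmodule_starProjection
    (fun L' : {L' // L' <:+ L} => rootKernel T L'.1)
    (fun L₁ L₂ => (List.suffix_or_suffix_of_suffix L₁.2 L₂.2).imp rootKernel_mono rootKernel_mono) V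
  refine ⟨W, hWfin, hVW, ContinuousLinearMap.ext fun x => ?_⟩
  have hx : aeval (compression W T) (L.map fun a => X - C a).prod x = 0 :=
    mem_rootKernel_compression (fun L' hL' => hW ⟨L', hL'⟩) (hker x)
  rw [hL]
  simp [hx]

end CompressionRootKernel

theorem stmt_7_general {𝕜 H : Type*} [RCLike 𝕜] [NormedAddCommGroup H] [InnerProductSpace 𝕜 H]
    [CompleteSpace H] {p : 𝕜[X]} (hp : p.Splits) {T : H →L[𝕜] H} (hT : aeval T p = 0)
    (f : FreeAlgebra 𝕜 (Fin 2)) {ε : ℝ} (hε : 0 < ε) :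
    ∃ (m : ℕ) (M : EuclideanSpace 𝕜 (Fin m) →L[𝕜] EuclideanSpace 𝕜 (Fin m)),
      aeval M p = 0 ∧ ‖M‖ ≤ ‖T‖ ∧
      ‖FreeAlgebra.lift 𝕜 ![T, star T] f‖ - ε ≤ ‖FreeAlgebra.lift 𝕜 ![M, star M] f‖ := by
  obtain ⟨V, _, hV⟩ := exists_finiteDimensional_norm_lift_sub_le ![T, star T] f hε
  obtain ⟨W, _, hVW, hW⟩ := exists_finiteDimensional_aeval_compression_eq_zero hp hT V
  have hpair : (fun i => compression W (![T, star T] i)) =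
      ![compression W T, star (compression W T)] := by
    ext1 i
    fin_cases i
    exacts [rfl, (star_compression W T).symm]
  let e := (stdOrthonormalBasis 𝕜 W).repr
  refine ⟨_, e.conjStarAlgEquiv (compression W T), ?_, ?_, ?_⟩
  · rw [aeval_algHom_apply, hW, map_zero]
  · exact (norm_conjStarAlgEquiv_apply e _).trans_le (norm_compression_le W T)
  · rw [lift_map_star, norm_conjStarAlgEquiv_apply, ← hpair]
    exact hV W hVW

/-- Let `p(t) = (t−λ₁)^{k₁}⋯(t−λₙ)^{kₙ}` with distinct roots and all
`kᵢ ≥ 2`. The universal C*-algebra of `p(x) = 0, ‖x‖ ≤ 1` is residually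
finite-dimensional: for every Hilbert space operator `T` with `p(T) = 0`, `‖T‖ ≤ 1`,
every element `f` of the free `ℂ`-algebra on two generators and every `ε > 0`, there is a
matrix `M` (an operator on a finite-dimensional Hilbert space `ℂ^m`) with `p(M) = 0`,
`‖M‖ ≤ 1` and `‖f(M, M*)‖ ≥ ‖f(T, T*)‖ − ε`. -/
theorem stmt_7 {H : Type*} [NormedAddCommGroup H] [InnerProductSpace ℂ H] [CompleteSpace H]
    (n : ℕ) (lam : Fin n → ℂ) (hlam : Function.Injective lam)
    (k : Fin n → ℕ) (hk : ∀ i, 2 ≤ k i)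
    (T : H →L[ℂ] H)
    (hT0 : (List.ofFn fun i => (T - lam i • 1) ^ k i).prod = 0) (hT1 : ‖T‖ ≤ 1)
    (f : FreeAlgebra ℂ (Fin 2)) (ε : ℝ) (hε : 0 < ε) :
    ∃ (m : ℕ) (M : EuclideanSpace ℂ (Fin m) →L[ℂ] EuclideanSpace ℂ (Fin m)),
      (List.ofFn fun i => (M - lam i • 1) ^ k i).prod = 0 ∧ ‖M‖ ≤ 1 ∧
      ‖FreeAlgebra.lift ℂ ![T, star T] f‖ - ε ≤ ‖FreeAlgebra.lift ℂ ![M, star M] f‖ := by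
  simp only [← aeval_prod_X_sub_C_pow] at hT0 ⊢
  obtain ⟨m, M, hM0, hMT, hMf⟩ := stmt_7_general (IsAlgClosed.splits _) hT0 f hε
  exact ⟨m, M, hM0, hMT.trans hT1, hMf⟩
end

section
/- Let H be an infinite-dimensional separable complex Hilbert space, T a bounded linear operator on H, and p(t) = (t−λ₁)^{k₁}⋯(t−λₙ)^{kₙ} a complex polynomial with distinct roots λ₁,…,λₙ and all multiplicities kᵢ ≥ 2. If p(T) is a compact operator, then there exists a compact operator K on H such that p(T+K) = 0 and ‖T+K‖ = ‖T‖_e, where ‖T‖_e denotes the essential norm of T, i.e. the norm of the image of T in the Calkin algebra B(H)/K(H). -/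
/-!
Call `c` the essential norm of `T`. By Douglas factorization `T` may be replaced, modulo compacts,
by an operator of norm `c`, and one removes the roots of `p` one at a time without increasing the
norm. Let `p = (t - μ) q`. If `c < |μ|` then `T - μ` is invertible and `q(T)` is already compact.
Otherwise there is a projection `Q`, a spectral projection of `(T - μ)*(T - μ) - q(T) q(T)*`, for
which `(T - μ)(1 - Q)` and `Q q(T)` are compact. Relative to `1 - Q` and `Q`, the operator `T` is
then, modulo compacts, upper triangular with diagonal entries `μ` and a compression `Y` such that
`q(Y)` is compact. By induction `Y` may be replaced by some `S` with `q(S) = 0` and `‖S‖ ≤ c`;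
Parrott's description of the contractive completions of a block matrix, used modulo compacts,
provides a corner for which the upper triangular matrix with diagonal `μ`, `S` has norm at most `c`,
and this matrix is annihilated by `(t - μ) q`.
-/

open ContinuousLinearMap
open Polynomial (X aeval aeval_C aeval_X)
open scoped Polynomial InnerProductSpace Pointwise

local notation "𝓚" => compactOperator (RingHom.id _) _ _

namespace CompactPerturbation

section Polynomial

variable {R A : Type*} [CommRing R] [Ring A] [Algebra R A]

theorem aeval_X_sub_C_mul (a : A) (μ : R)
    (q : R[X]) : aeval a ((X - Polynomial.C μ) * q) = (a - μ • 1) * aeval a q := by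
  rw [map_mul, map_sub, aeval_X, aeval_C, Algebra.algebraMap_eq_smul_one]

theorem aeval_prod_ofFn_X_sub_C_pow (a : A) {n : ℕ} (μ : Fin n → R) (k : Fin n → ℕ) :
    aeval a (List.ofFn fun i => (X - Polynomial.C (μ i)) ^ k i).prod =
      (List.ofFn fun i => (a - μ i • 1) ^ k i).prod := by
  simp only [map_list_prod, List.map_ofFn, Function.comp_def, map_pow, map_sub, aeval_X, aeval_C,
    Algebra.algebraMap_eq_smul_one]

theorem induction_on_X_sub_C_mul {𝕜 : Type*} [Field 𝕜] [IsAlgClosed 𝕜] {motive : 𝕜[X] → Prop}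
    (C : ∀ a, motive (Polynomial.C a))
    (X_sub_C_mul : ∀ a p, motive p → motive ((X - Polynomial.C a) * p)) (p : 𝕜[X]) : motive p := by
  rw [(IsAlgClosed.splits p).eq_prod_roots, mul_comm]
  generalize p.leadingCoeff = b
  induction p.roots using Multiset.induction_on with
  | empty => simpa using C b
  | cons a s ih =>
    simpa only [Multiset.map_cons, Multiset.prod_cons, mul_assoc] using X_sub_C_mul a _ ih

end Polynomial

section Compact

variable {𝕜 E F G : Type*} [RCLike 𝕜] [NormedAddCommGroup E] [NormedAddCommGroup F]
  [NormedAddCommGroup G]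

theorem isCompactOperator_of_norm_sq_le [NormedSpace 𝕜 E] [NormedSpace 𝕜 F] [NormedSpace 𝕜 G]
    [CompleteSpace F] {A : E →L[𝕜] F} {B : E →L[𝕜] G} (hB : IsCompactOperator B)
    (h : ∀ x, ‖A x‖ ^ 2 ≤ ‖B x‖ * ‖x‖) : IsCompactOperator A := by
  have hB_ball : TotallyBounded (B '' Metric.ball 0 1) :=
    (IsCompactOperator.isCompact_closure_image_ball (f := B.toLinearMap) hB 1).totallyBounded.subset
      subset_closure
  refine (isCompactOperator_iff_isCompact_closure_image_ball A.toLinearMap one_pos).2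
    (TotallyBounded.closure ?_ |>.isCompact_of_isClosed isClosed_closure)
  refine Metric.totallyBounded_iff.2 fun ε hε => ?_
  obtain ⟨t, ht, ht_fin, hcover⟩ :=
    Metric.finite_approx_of_totallyBounded hB_ball (ε ^ 2 / 2) (by positivity)
  obtain ⟨s, hs, hs_fin, rfl⟩ := Set.exists_subset_image_finite_and.1 ⟨t, ht, ht_fin, rfl⟩
  refine ⟨A '' s, hs_fin.image _, ?_⟩
  rintro _ ⟨x, hx, rfl⟩
  obtain ⟨_, ⟨y, hy, rfl⟩, hxy⟩ := Set.mem_iUnion₂.1 (hcover ⟨x, hx, rfl⟩)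
  have hxy_norm : ‖x - y‖ ≤ 2 := by
    linarith [norm_sub_le x y, mem_ball_zero_iff.1 hx, mem_ball_zero_iff.1 (hs hy)]
  refine Set.mem_iUnion₂.2 ⟨A y, ⟨y, hy, rfl⟩, ?_⟩
  rw [Metric.mem_ball, dist_eq_norm, ← map_sub] at hxy
  change dist (A x) (A y) < ε
  rw [dist_eq_norm, ← map_sub]
  refine lt_of_pow_lt_pow_left₀ 2 hε.le ?_
  calc ‖A (x - y)‖ ^ 2 ≤ ‖B (x - y)‖ * ‖x - y‖ := h _
    _ ≤ ‖B (x - y)‖ * 2 := by gcongr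
    _ < ε ^ 2 := by linarith

variable [InnerProductSpace 𝕜 E] [InnerProductSpace 𝕜 F] [CompleteSpace E] [CompleteSpace F]

theorem isCompactOperator_of_adjoint_comp_self {A : E →L[𝕜] F}
    (hA : IsCompactOperator (adjoint A ∘L A)) : IsCompactOperator A :=
  isCompactOperator_of_norm_sq_le hA fun x => by
    rw [apply_norm_sq_eq_inner_adjoint_left]
    exact re_inner_le_norm _ _

theorem isCompactOperator_adjoint {A : E →L[𝕜] F} (hA : IsCompactOperator A) :
    IsCompactOperator (adjoint A) := by
  apply isCompactOperator_of_adjoint_comp_self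
  rw [adjoint_adjoint]
  exact hA.comp_clm (adjoint A)

end Compact

section Mod

variable {𝕜 E F G : Type*} [NontriviallyNormedField 𝕜] [NormedAddCommGroup E] [NormedAddCommGroup F]
  [NormedAddCommGroup G] [NormedSpace 𝕜 E] [NormedSpace 𝕜 F] [NormedSpace 𝕜 G]

theorem modCompact_zero_iff {A : E →L[𝕜] F} : A ≡ 0 [SMOD 𝓚] ↔ IsCompactOperator A := SModEq.zero

theorem modCompact_comp {A A' : F →L[𝕜] G} {B B' : E →L[𝕜] F} (hA : A ≡ A' [SMOD 𝓚])
    (hB : B ≡ B' [SMOD 𝓚]) : A ∘L B ≡ A' ∘L B' [SMOD 𝓚] := by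
  rw [SModEq.sub_mem] at hA hB ⊢
  have h : A ∘L B - A' ∘L B' = (A - A') ∘L B + A' ∘L (B - B') := by
    rw [sub_comp, comp_sub]; abel
  rw [h]
  exact add_mem (IsCompactOperator.comp_clm hA B) (IsCompactOperator.clm_comp hB A')

theorem modCompact_mul {A A' B B' : E →L[𝕜] E} (hA : A ≡ A' [SMOD 𝓚]) (hB : B ≡ B' [SMOD 𝓚]) :
    A * B ≡ A' * B' [SMOD 𝓚] :=
  modCompact_comp hA hB

theorem modCompact_zero_of_isUnit_mul {A B : E →L[𝕜] E} (hA : IsUnit A) (h : A * B ≡ 0 [SMOD 𝓚]) :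
    B ≡ 0 [SMOD 𝓚] := by
  obtain ⟨A, rfl⟩ := hA
  have h_mul := modCompact_mul (.refl (↑A⁻¹ : E →L[𝕜] E)) h
  rwa [Units.inv_mul_cancel_left, mul_zero] at h_mul

theorem comp_aeval_sModEq {A : E →L[𝕜] E} {B : F →L[𝕜] F} {C : E →L[𝕜] F}
    {U : Submodule 𝕜 (E →L[𝕜] F)} (hU_comp : ∀ S ∈ U, ∀ D : E →L[𝕜] E, S ∘L D ∈ U)
    (hcomp_U : ∀ S ∈ U, ∀ D : F →L[𝕜] F, D ∘L S ∈ U) (h : C ∘L A ≡ B ∘L C [SMOD U]) (p : 𝕜[X]) :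
    C ∘L aeval A p ≡ aeval B p ∘L C [SMOD U] := by
  induction p using Polynomial.induction_on with
  | C a =>
    rw [aeval_C, aeval_C, Algebra.algebraMap_eq_smul_one, Algebra.algebraMap_eq_smul_one,
      comp_smul, smul_comp, one_def, one_def, comp_id, id_comp]
  | add p q hp hq =>
    simpa only [map_add, comp_add, add_comp] using hp.add hq
  | monomial n a ih =>
    rw [pow_succ', mul_left_comm]
    generalize Polynomial.C a * X ^ n = q at ih ⊢
    have h_comp : (C ∘L A) ∘L aeval A q ≡ (B ∘L C) ∘L aeval A q [SMOD U] := by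
      rw [SModEq.sub_mem] at h ⊢
      simpa only [sub_comp] using hU_comp _ h (aeval A q)
    have comp_ih : B ∘L C ∘L aeval A q ≡ B ∘L aeval B q ∘L C [SMOD U] := by
      rw [SModEq.sub_mem] at ih ⊢
      simpa only [comp_sub] using hcomp_U _ ih B
    rw [map_mul, map_mul, aeval_X, aeval_X, mul_def, mul_def, comp_assoc, ← comp_assoc]
    exact h_comp.trans comp_ih

theorem modCompact_comp_aeval {A : E →L[𝕜] E} {B : F →L[𝕜] F} {C : E →L[𝕜] F}
    (h : C ∘L A ≡ B ∘L C [SMOD 𝓚]) (p : 𝕜[X]) : C ∘L aeval A p ≡ aeval B p ∘L C [SMOD 𝓚] :=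
  comp_aeval_sModEq (fun _ hS D => IsCompactOperator.comp_clm hS D)
    (fun _ hS D => IsCompactOperator.clm_comp hS D) h p

theorem comp_aeval_eq {A : E →L[𝕜] E} {B : F →L[𝕜] F} {C : E →L[𝕜] F}
    (h : C ∘L A = B ∘L C) (p : 𝕜[X]) : C ∘L aeval A p = aeval B p ∘L C := by
  refine SModEq.bot.1 (comp_aeval_sModEq ?_ ?_ (SModEq.bot.2 h) p) <;> simp

theorem modCompact_aeval {A B : E →L[𝕜] E} (h : A ≡ B [SMOD 𝓚]) (p : 𝕜[X]) :
    aeval A p ≡ aeval B p [SMOD 𝓚] :=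
  modCompact_comp_aeval (C := .id 𝕜 E) h p

end Mod

section Star

variable {𝕜 E : Type*} [RCLike 𝕜] [NormedAddCommGroup E] [InnerProductSpace 𝕜 E] [CompleteSpace E]

theorem modCompact_star {A B : E →L[𝕜] E} (h : A ≡ B [SMOD 𝓚]) : star A ≡ star B [SMOD 𝓚] := by
  rw [SModEq.sub_mem] at h ⊢
  rw [← star_sub]
  exact isCompactOperator_adjoint h

theorem modCompact_zero_of_star_mul_self {A : E →L[𝕜] E} (h : star A * A ≡ 0 [SMOD 𝓚]) :
    A ≡ 0 [SMOD 𝓚] :=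
  modCompact_zero_iff.2 (isCompactOperator_of_adjoint_comp_self (modCompact_zero_iff.1 h))

end Star

section CStarAlgebra

variable {𝓐 : Type*} [CStarAlgebra 𝓐] [PartialOrder 𝓐] [StarOrderedRing 𝓐] {a : 𝓐}

theorem star_mul_self_le_algebraMap_sq {r : ℝ} (h : ‖a‖ ≤ r) :
    star a * a ≤ algebraMap ℝ 𝓐 (r ^ 2) :=
  CStarAlgebra.star_mul_le_algebraMap_norm_sq.trans
    (algebraMap_mono _ (pow_le_pow_left₀ (norm_nonneg a) h 2))

theorem posPart_eq_smul_abs_add (ha : IsSelfAdjoint a) : a⁺ = (2⁻¹ : ℂ) • (CFC.abs a + a) := by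
  rw [CFC.abs_add_self a, ← ofNat_smul_eq_nsmul ℂ, inv_smul_smul₀ two_ne_zero]

theorem negPart_eq_smul_abs_sub (ha : IsSelfAdjoint a) : a⁻ = (2⁻¹ : ℂ) • (CFC.abs a - a) := by
  rw [CFC.abs_sub_self a, ← ofNat_smul_eq_nsmul ℂ, inv_smul_smul₀ two_ne_zero]

end CStarAlgebra

section FunctionalCalculus

variable {H : Type*} [NormedAddCommGroup H] [InnerProductSpace ℂ H] [CompleteSpace H]
  {A B : H →L[ℂ] H}

theorem modCompact_of_approx
    (h : ∀ ε > 0, ∃ A' B' : H →L[ℂ] H, A' ≡ B' [SMOD 𝓚] ∧ ‖A - A'‖ < ε ∧ ‖B - B'‖ < ε) :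
    A ≡ B [SMOD 𝓚] := by
  rw [SModEq.sub_mem]
  refine (isClosed_setOfPred_isCompactOperator (σ₁₂ := RingHom.id ℂ)).closure_subset
    (Metric.mem_closure_iff.2 fun ε hε => ?_)
  obtain ⟨A', B', h_mod, hA', hB'⟩ := h (ε / 2) (half_pos hε)
  refine ⟨A' - B', SModEq.sub_mem.1 h_mod, ?_⟩
  rw [← dist_eq_norm] at hA' hB'
  linarith [dist_sub_sub_le A B A' B']

theorem norm_cfc_sub_aeval_lt {f : ℝ → ℝ} (hf : Continuous f) {q : ℝ[X]} {r ε : ℝ} (hε : 0 < ε)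
    (hq : ∀ x ∈ Set.Icc (-r) r, |q.eval x - f x| < ε) (hA : IsSelfAdjoint A)
    (hAr : ‖A‖ * ‖(1 : H →L[ℂ] H)‖ ≤ r) : ‖cfc f A - aeval A q‖ < ε := by
  rw [← cfc_polynomial q A hA, ← cfc_sub f q.eval A hf.continuousOn q.continuous.continuousOn]
  refine norm_cfc_lt hε fun x hx => ?_
  rw [Real.norm_eq_abs, abs_sub_comm]
  exact hq x (abs_le.1 ((spectrum.norm_le_norm_mul_of_mem hx).trans hAr))

theorem modCompact_cfc (hA : IsSelfAdjoint A) (hB : IsSelfAdjoint B) (h : A ≡ B [SMOD 𝓚])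
    {f : ℝ → ℝ} (hf : Continuous f) : cfc f A ≡ cfc f B [SMOD 𝓚] := by
  refine modCompact_of_approx fun ε hε => ?_
  set r := max (‖A‖ * ‖(1 : H →L[ℂ] H)‖) (‖B‖ * ‖(1 : H →L[ℂ] H)‖)
  obtain ⟨q, hq⟩ := exists_polynomial_near_of_continuousOn (-r) r f hf.continuousOn ε hε
  have h_aeval : aeval A q ≡ aeval B q [SMOD 𝓚] := by
    simpa only [Polynomial.aeval_map_algebraMap] using
      modCompact_aeval h (q.map (algebraMap ℝ ℂ))
  exact ⟨aeval A q, aeval B q, h_aeval,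
    norm_cfc_sub_aeval_lt hf hε hq hA (le_max_left _ _),
    norm_cfc_sub_aeval_lt hf hε hq hB (le_max_right _ _)⟩

theorem modCompact_sqrt (hA : 0 ≤ A) (hB : 0 ≤ B) (h : A ≡ B [SMOD 𝓚]) :
    CFC.sqrt A ≡ CFC.sqrt B [SMOD 𝓚] := by
  rw [CFC.sqrt_eq_real_sqrt A, CFC.sqrt_eq_real_sqrt B, cfcₙ_eq_cfc, cfcₙ_eq_cfc]
  exact modCompact_cfc (.of_nonneg hA) (.of_nonneg hB) h Real.continuous_sqrt

theorem modCompact_abs (h : A ≡ B [SMOD 𝓚]) : CFC.abs A ≡ CFC.abs B [SMOD 𝓚] :=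
  modCompact_sqrt (star_mul_self_nonneg A) (star_mul_self_nonneg B)
    (modCompact_mul (modCompact_star h) h)

theorem modCompact_posPart (hA : IsSelfAdjoint A) (hB : IsSelfAdjoint B) (h : A ≡ B [SMOD 𝓚]) :
    A⁺ ≡ B⁺ [SMOD 𝓚] := by
  rw [posPart_eq_smul_abs_add hA, posPart_eq_smul_abs_add hB]
  exact ((modCompact_abs h).add h).smul _

end FunctionalCalculus

section Splitting

variable {H : Type*} [NormedAddCommGroup H] [InnerProductSpace ℂ H] [CompleteSpace H]

-- Modulo compacts `(A - B)² = (A + B)²`, hence `|A - B| = A + B`.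
theorem modCompact_posPart_sub_negPart_sub {A B : H →L[ℂ] H} (hA : 0 ≤ A) (hB : 0 ≤ B)
    (hAB : A * B ≡ 0 [SMOD 𝓚]) : (A - B)⁺ ≡ A [SMOD 𝓚] ∧ (A - B)⁻ ≡ B [SMOD 𝓚] := by
  have hA_self : IsSelfAdjoint A := .of_nonneg hA
  have hB_self : IsSelfAdjoint B := .of_nonneg hB
  have hBA : B * A ≡ 0 [SMOD 𝓚] := by
    simpa only [star_mul, star_zero, hA_self.star_eq, hB_self.star_eq] using modCompact_star hAB
  have h_cross : A * B + B * A ≡ 0 [SMOD 𝓚] := by simpa only [add_zero] using hAB.add hBA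
  have h_sq : star (A - B) * (A - B) ≡ (A + B) * (A + B) [SMOD 𝓚] := by
    calc star (A - B) * (A - B) = A * A + B * B - (A * B + B * A) := by
          rw [(hA_self.sub hB_self).star_eq]; noncomm_ring
      _ ≡ A * A + B * B - 0 [SMOD 𝓚] := SModEq.rfl.sub h_cross
      _ = A * A + B * B + 0 := by rw [sub_zero, add_zero]
      _ ≡ A * A + B * B + (A * B + B * A) [SMOD 𝓚] := SModEq.rfl.add h_cross.symm
      _ = (A + B) * (A + B) := by noncomm_ring
  have h_abs : CFC.abs (A - B) ≡ A + B [SMOD 𝓚] := by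
    calc CFC.abs (A - B) ≡ CFC.sqrt ((A + B) * (A + B)) [SMOD 𝓚] :=
          modCompact_sqrt (star_mul_self_nonneg (A - B))
            (hA_self.add hB_self).mul_self_nonneg h_sq
      _ = A + B := CFC.sqrt_mul_self (A + B) (add_nonneg hA hB)
  constructor
  · calc (A - B)⁺ = (2⁻¹ : ℂ) • (CFC.abs (A - B) + (A - B)) :=
          posPart_eq_smul_abs_add (hA_self.sub hB_self)
      _ ≡ (2⁻¹ : ℂ) • (A + B + (A - B)) [SMOD 𝓚] := (h_abs.add .rfl).smul _
      _ = A := by module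
  · calc (A - B)⁻ = (2⁻¹ : ℂ) • (CFC.abs (A - B) - (A - B)) :=
          negPart_eq_smul_abs_sub (hA_self.sub hB_self)
      _ ≡ (2⁻¹ : ℂ) • (A + B - (A - B)) [SMOD 𝓚] := (h_abs.sub .rfl).smul _
      _ = B := by module

theorem exists_starProjection_of_mul_modCompact_zero {A B : H →L[ℂ] H} (hAB : A * B ≡ 0 [SMOD 𝓚]) :
    ∃ (W : Submodule ℂ H) (_ : CompleteSpace W),
      A * (1 - W.starProjection) ≡ 0 [SMOD 𝓚] ∧ W.starProjection * B ≡ 0 [SMOD 𝓚] := by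
  set d := star A * A - B * star B
  have h_prod : (star A * A) * (B * star B) ≡ 0 [SMOD 𝓚] := by
    calc (star A * A) * (B * star B) = star A * (A * B) * star B := by simp only [mul_assoc]
      _ ≡ star A * 0 * star B [SMOD 𝓚] := modCompact_mul (modCompact_mul .rfl hAB) .rfl
      _ = 0 := by simp
  obtain ⟨h_pos, h_neg⟩ := modCompact_posPart_sub_negPart_sub (star_mul_self_nonneg A)
    (mul_star_self_nonneg B) h_prod
  let W : Submodule ℂ H := LinearMap.ker (d⁻ : H →L[ℂ] H).toLinearMap
  have hW_closed : IsClosed (W : Set H) := (d⁻ : H →L[ℂ] H).isClosed_ker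
  have : CompleteSpace W := hW_closed.completeSpace_coe
  set Q := W.starProjection
  have hQ : IsStarProjection Q := isStarProjection_starProjection
  have hneg_Q : d⁻ * Q = 0 := by
    ext x
    exact (W.starProjection_apply_mem x : _)
  have hpos_Q : (1 - Q) * d⁺ = 0 := by
    ext x
    have hx : (d⁺ : H →L[ℂ] H) x ∈ W := DFunLike.congr_fun (CFC.negPart_mul_posPart d) x
    exact sub_eq_zero.2 (Submodule.starProjection_eq_self_iff.2 hx).symm
  refine ⟨W, this, modCompact_zero_of_star_mul_self ?_, ?_⟩
  · calc star (A * (1 - Q)) * (A * (1 - Q)) = (1 - Q) * (star A * A) * (1 - Q) := by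
          rw [star_mul, hQ.one_sub.isSelfAdjoint.star_eq]; simp only [mul_assoc]
      _ ≡ (1 - Q) * d⁺ * (1 - Q) [SMOD 𝓚] :=
        modCompact_mul (modCompact_mul .rfl h_pos.symm) .rfl
      _ = 0 := by rw [hpos_Q, zero_mul]
  · have h_star : star (Q * B) ≡ 0 [SMOD 𝓚] := by
      refine modCompact_zero_of_star_mul_self ?_
      calc star (star (Q * B)) * star (Q * B) = Q * (B * star B) * Q := by
            rw [star_star, star_mul, hQ.isSelfAdjoint.star_eq]; simp only [mul_assoc]
        _ ≡ Q * d⁻ * Q [SMOD 𝓚] :=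
          modCompact_mul (modCompact_mul .rfl h_neg.symm) .rfl
        _ = 0 := by rw [mul_assoc, hneg_Q, mul_zero]
    simpa only [star_star, star_zero] using modCompact_star h_star

end Splitting

section Factorization

theorem exists_comp_eq_of_norm_le {𝕜 E F G : Type*} [RCLike 𝕜] [NormedAddCommGroup E]
    [NormedAddCommGroup F] [NormedAddCommGroup G] [NormedSpace 𝕜 E] [NormedSpace 𝕜 F]
    [InnerProductSpace 𝕜 G] [CompleteSpace F] [CompleteSpace G] {A : E →L[𝕜] F} {B : E →L[𝕜] G}
    (h : ∀ x, ‖A x‖ ≤ ‖B x‖) : ∃ Z : G →L[𝕜] F, ‖Z‖ ≤ 1 ∧ Z ∘L B = A := by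
  set V := (LinearMap.range B.toLinearMap).topologicalClosure
  have hBV : ∀ x, B x ∈ V := fun x =>
    Submodule.le_topologicalClosure _ (LinearMap.mem_range_self B.toLinearMap x)
  let B' : E →ₗ[𝕜] V := B.toLinearMap.codRestrict V hBV
  have : CompleteSpace V := (Submodule.isClosed_topologicalClosure _).completeSpace_coe
  have hB'_dense : DenseRange B' := by
    rw [DenseRange, Subtype.dense_iff, ← Set.range_comp]
    exact subset_rfl
  have hA : ∀ x, ‖A.toLinearMap x‖ ≤ 1 * ‖B' x‖ := fun x => (h x).trans_eq (one_mul _).symm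
  refine ⟨A.toLinearMap.extendOfNorm B' ∘L V.orthogonalProjectionOnto, ?_, ?_⟩
  · calc _ ≤ ‖A.toLinearMap.extendOfNorm B'‖ * ‖V.orthogonalProjectionOnto‖ := opNorm_comp_le _ _
      _ ≤ 1 * 1 := by
        gcongr
        · exact LinearMap.opNorm_extendOfNorm_le hB'_dense zero_le_one hA
        · exact V.orthogonalProjectionOnto_norm_le
      _ = 1 := one_mul 1
  · ext x
    have hBx : V.orthogonalProjectionOnto (B x) = B' x :=
      Submodule.orthogonalProjectionOnto_mem_subspace_eq_self (B' x)
    rw [comp_apply, comp_apply, hBx]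
    exact LinearMap.extendOfNorm_eq hB'_dense ⟨1, hA⟩ x

theorem norm_apply_le_of_adjoint_comp_self_le {𝕜 E F G : Type*} [RCLike 𝕜]
    [NormedAddCommGroup E] [NormedAddCommGroup F] [NormedAddCommGroup G] [InnerProductSpace 𝕜 E]
    [InnerProductSpace 𝕜 F] [InnerProductSpace 𝕜 G] [CompleteSpace E] [CompleteSpace F]
    [CompleteSpace G] {A : E →L[𝕜] F} {B : E →L[𝕜] G} (h : adjoint A ∘L A ≤ adjoint B ∘L B)
    (x : E) : ‖A x‖ ≤ ‖B x‖ := by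
  have h_re := ((le_def _ _).1 h).re_inner_nonneg_left x
  rw [sub_apply, inner_sub_left, map_sub, ← apply_norm_sq_eq_inner_adjoint_left,
    ← apply_norm_sq_eq_inner_adjoint_left, sub_nonneg] at h_re
  exact le_of_sq_le_sq h_re (norm_nonneg _)

variable {E F : Type*} [NormedAddCommGroup E] [InnerProductSpace ℂ E] [CompleteSpace E]
  [NormedAddCommGroup F] [InnerProductSpace ℂ F] [CompleteSpace F]

theorem exists_modCompact_comp_of_adjoint_comp_self_le {A : E →L[ℂ] F} {L R : E →L[ℂ] E}
    (hR : 0 ≤ R) (hA : adjoint A ∘L A ≤ L) (hL : L ≡ R * R [SMOD 𝓚]) :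
    ∃ Z : E →L[ℂ] F, ‖Z‖ ≤ 1 ∧ A ≡ Z ∘L R [SMOD 𝓚] := by
  have hL_nonneg : 0 ≤ L :=
    ((nonneg_iff_isPositive _).2 (isPositive_adjoint_comp_self A)).trans hA
  have h_sqrt : adjoint (CFC.sqrt L) ∘L CFC.sqrt L = L := by
    rw [← star_eq_adjoint, (IsSelfAdjoint.of_nonneg (CFC.sqrt_nonneg L)).star_eq, ← mul_def,
      CFC.sqrt_mul_sqrt_self L]
  obtain ⟨Z, hZ, hZA⟩ := exists_comp_eq_of_norm_le
    (norm_apply_le_of_adjoint_comp_self_le (B := CFC.sqrt L) (hA.trans_eq h_sqrt.symm))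
  refine ⟨Z, hZ, ?_⟩
  calc A = Z ∘L CFC.sqrt L := hZA.symm
    _ ≡ Z ∘L CFC.sqrt (R * R) [SMOD 𝓚] := modCompact_comp .rfl
        (modCompact_sqrt hL_nonneg (IsSelfAdjoint.of_nonneg hR).mul_self_nonneg hL)
    _ = Z ∘L R := by rw [CFC.sqrt_mul_self R hR]

end Factorization

section EssentialNorm

variable {H : Type*} [NormedAddCommGroup H] [InnerProductSpace ℂ H]

/-- The distance from `T` to the compact operators, i.e. the norm of the image of `T` in the
Calkin algebra. -/
noncomputable def essentialNorm (T : H →L[ℂ] H) : ℝ :=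
  Metric.infDist T {S : H →L[ℂ] H | IsCompactOperator S}

theorem essentialNorm_nonneg (T : H →L[ℂ] H) : 0 ≤ essentialNorm T := Metric.infDist_nonneg

theorem essentialNorm_le_norm {T S : H →L[ℂ] H} (h : S ≡ T [SMOD 𝓚]) : essentialNorm T ≤ ‖S‖ := by
  calc essentialNorm T ≤ dist T (T - S) := Metric.infDist_le_dist_of_mem (SModEq.sub_mem.1 h.symm)
    _ = ‖S‖ := by rw [dist_eq_norm, sub_sub_cancel]

theorem exists_modCompact_norm_lt {T : H →L[ℂ] H} {r : ℝ} (hr : essentialNorm T < r) :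
    ∃ S : H →L[ℂ] H, S ≡ T [SMOD 𝓚] ∧ ‖S‖ < r := by
  obtain ⟨K, hK, hTK⟩ := (Metric.infDist_lt_iff ⟨0, isCompactOperator_zero⟩).1 hr
  refine ⟨T - K, SModEq.sub_mem.2 ?_, by rwa [← dist_eq_norm]⟩
  rw [sub_sub_cancel_left]
  exact neg_mem (S := Submodule ℂ (H →L[ℂ] H)) hK

variable [CompleteSpace H]

theorem posPart_star_mul_self_sub_modCompact_zero_of_lt {T : H →L[ℂ] H} {r : ℝ}
    (hr : essentialNorm T < r) : (star T * T - algebraMap ℝ _ (r ^ 2))⁺ ≡ 0 [SMOD 𝓚] := by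
  obtain ⟨S, hST, hS⟩ := exists_modCompact_norm_lt hr
  have h_self (A : H →L[ℂ] H) : IsSelfAdjoint (star A * A - algebraMap ℝ _ (r ^ 2)) :=
    (IsSelfAdjoint.star_mul_self A).sub (.algebraMap _ (.all _))
  calc (star T * T - algebraMap ℝ _ (r ^ 2))⁺ ≡ (star S * S - algebraMap ℝ _ (r ^ 2))⁺ [SMOD 𝓚] :=
        modCompact_posPart (h_self T) (h_self S)
          ((modCompact_mul (modCompact_star hST.symm) hST.symm).sub .rfl)
    _ = 0 := (CFC.posPart_eq_zero_iff _ (h_self S)).2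
        (sub_nonpos.2 (star_mul_self_le_algebraMap_sq hS.le))

theorem posPart_star_mul_self_sub_modCompact_zero (T : H →L[ℂ] H) :
    (star T * T - algebraMap ℝ _ (essentialNorm T ^ 2))⁺ ≡ 0 [SMOD 𝓚] := by
  set D : ℝ → H →L[ℂ] H := fun r => star T * T - algebraMap ℝ _ (r ^ 2)
  have hD_cont : Continuous fun r => (D r)⁺ := by
    have hD_self (r : ℝ) : IsSelfAdjoint (D r) :=
      (IsSelfAdjoint.star_mul_self T).sub (.algebraMap _ (.all _))
    simp only [posPart_eq_smul_abs_add (hD_self _)]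
    have : Continuous D := by fun_prop
    exact ((CFC.continuous_abs.comp this).add this).const_smul (2⁻¹ : ℂ)
  have h_closed : IsClosed {r | IsCompactOperator ((D r)⁺ : H →L[ℂ] H)} :=
    isClosed_setOfPred_isCompactOperator.preimage hD_cont
  have h_sub : Set.Ioi (essentialNorm T) ⊆ {r | IsCompactOperator ((D r)⁺ : H →L[ℂ] H)} :=
    fun r hr => modCompact_zero_iff.1 (posPart_star_mul_self_sub_modCompact_zero_of_lt hr)
  refine modCompact_zero_iff.2 (closure_minimal h_sub h_closed ?_)
  rw [closure_Ioi]
  exact Set.self_mem_Ici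

theorem exists_modCompact_norm_le_essentialNorm (T : H →L[ℂ] H) :
    ∃ S : H →L[ℂ] H, S ≡ T [SMOD 𝓚] ∧ ‖S‖ ≤ essentialNorm T := by
  set c := essentialNorm T
  have hc : 0 ≤ c := essentialNorm_nonneg T
  have h_le : star T * T ≤
      (star T * T - algebraMap ℝ _ (c ^ 2))⁺ + algebraMap ℝ (H →L[ℂ] H) (c ^ 2) :=
    sub_le_iff_le_add.1 <|
      CFC.le_posPart ((IsSelfAdjoint.star_mul_self T).sub (.algebraMap _ (.all _)))
  have h_modCompact :
      (star T * T - algebraMap ℝ _ (c ^ 2))⁺ + algebraMap ℝ (H →L[ℂ] H) (c ^ 2) ≡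
        algebraMap ℝ _ c * algebraMap ℝ _ c [SMOD 𝓚] := by
    rw [← map_mul, ← sq]
    simpa only [zero_add] using (posPart_star_mul_self_sub_modCompact_zero T).add .rfl
  obtain ⟨Z, hZ, hTZ⟩ := exists_modCompact_comp_of_adjoint_comp_self_le
    (algebraMap_nonneg (H →L[ℂ] H) hc) h_le h_modCompact
  refine ⟨_, hTZ.symm, ?_⟩
  calc ‖Z ∘L algebraMap ℝ (H →L[ℂ] H) c‖ = c * ‖Z‖ := by
        rw [Algebra.algebraMap_eq_smul_one, comp_smul, one_def, comp_id, norm_smul,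
          Real.norm_of_nonneg hc]
    _ ≤ c := mul_le_of_le_one_right hc hZ

end EssentialNorm

section CStarAlgebra

variable {𝓐 : Type*} [CStarAlgebra 𝓐] [PartialOrder 𝓐] [StarOrderedRing 𝓐] {c : ℝ} {a : 𝓐}

/-- The defect element `√(c² - a*a)` of an element `a` with `‖a‖ ≤ c`, which measures how far `a` is
from being `c` times an isometry. -/
noncomputable def defect (c : ℝ) (a : 𝓐) : 𝓐 :=
  CFC.sqrt (algebraMap ℝ 𝓐 (c ^ 2) - star a * a)

theorem defect_nonneg (c : ℝ) (a : 𝓐) : 0 ≤ defect c a := CFC.sqrt_nonneg _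

theorem defect_mul_defect (ha : ‖a‖ ≤ c) :
    defect c a * defect c a = algebraMap ℝ 𝓐 (c ^ 2) - star a * a :=
  CFC.sqrt_mul_sqrt_self _ (sub_nonneg.2 (star_mul_self_le_algebraMap_sq ha))

theorem defect_smul_starProjection {p : 𝓐} (hp : IsStarProjection p) (hc : 0 ≤ c) {m : ℂ}
    (hm : ‖m‖ ≤ 1) :
    defect c (star (c • m • p)) = c • (√(1 - ‖m‖ ^ 2) • p + (1 - p)) := by
  have h_scalar : (√(1 - ‖m‖ ^ 2) : ℂ) ^ 2 + m * star m = 1 := by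
    rw [Complex.star_def, Complex.mul_conj, Complex.normSq_eq_norm_sq, ← Complex.ofReal_pow,
      Real.sq_sqrt (sub_nonneg.2 (pow_le_one₀ (norm_nonneg m) hm)), ← Complex.ofReal_add,
      sub_add_cancel, Complex.ofReal_one]
  refine CFC.sqrt_unique ?_ ?_
  · simp only [add_mul, mul_add, hp.isIdempotentElem.eq, smul_mul_assoc, mul_smul_comm,
      hp.mul_one_sub_self, hp.one_sub_mul_self, star_star, star_smul, star_trivial, smul_zero,
      add_zero, zero_add, hp.one_sub.isIdempotentElem.eq, hp.isSelfAdjoint.star_eq,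
      Algebra.algebraMap_eq_smul_one]
    match_scalars
    · linear_combination (c : ℂ) ^ 2 * h_scalar
    · ring
  · have := hp.nonneg
    have := hp.one_sub.nonneg
    positivity

end CStarAlgebra

section Defect

variable {H : Type*} [NormedAddCommGroup H] [InnerProductSpace ℂ H] [CompleteSpace H]
  {c : ℝ} {S T Q : H →L[ℂ] H}

theorem norm_defect_apply_sq_add (hS : ‖S‖ ≤ c) (x : H) :
    ‖defect c S x‖ ^ 2 + ‖S x‖ ^ 2 = c ^ 2 * ‖x‖ ^ 2 := by
  have h_adj : adjoint (defect c S) ∘L defect c S + adjoint S ∘L S = (c ^ 2) • 1 := by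
    rw [← star_eq_adjoint, ← star_eq_adjoint, (IsSelfAdjoint.of_nonneg (defect_nonneg c S)).star_eq,
      ← mul_def, defect_mul_defect hS, ← mul_def, sub_add_cancel, Algebra.algebraMap_eq_smul_one]
  rw [apply_norm_sq_eq_inner_adjoint_left, apply_norm_sq_eq_inner_adjoint_left, ← map_add,
    ← inner_add_left, ← add_apply, h_adj, smul_apply, one_apply_eq_self, inner_smul_left_eq_smul,
    RCLike.smul_re, inner_self_eq_norm_sq]

theorem exists_modCompact_mul_defect (hQ : IsStarProjection Q) (hT : ‖T‖ ≤ c) (hS : ‖S‖ ≤ c)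
    (h : (1 - Q) * T ≡ S [SMOD 𝓚]) :
    ∃ Z : H →L[ℂ] H, ‖Z‖ ≤ 1 ∧ Q * T ≡ Z * defect c S [SMOD 𝓚] := by
  have h_split : star (Q * T) * (Q * T) + star ((1 - Q) * T) * ((1 - Q) * T) = star T * T := by
    have h_conj {P : H →L[ℂ] H} (hP : IsStarProjection P) :
        star (P * T) * (P * T) = star T * P * T := by
      rw [star_mul, hP.isSelfAdjoint.star_eq, mul_assoc, ← mul_assoc P, hP.isIdempotentElem.eq,
        mul_assoc]
    rw [h_conj hQ, h_conj hQ.one_sub]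
    noncomm_ring
  refine exists_modCompact_comp_of_adjoint_comp_self_le (defect_nonneg c S)
    (L := algebraMap ℝ _ (c ^ 2) - star ((1 - Q) * T) * ((1 - Q) * T)) ?_ ?_
  · exact le_sub_iff_add_le.2 (h_split.trans_le (star_mul_self_le_algebraMap_sq hT))
  · rw [defect_mul_defect hS]
    exact SModEq.rfl.sub (modCompact_mul (modCompact_star h) h)

end Defect

section Completion

variable {H : Type*} [NormedAddCommGroup H] [InnerProductSpace ℂ H] [CompleteSpace H]
  {c : ℝ} {m : ℂ} {S T Q D W : H →L[ℂ] H}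

theorem norm_sq_one_sub_apply_add_apply (hQ : IsStarProjection Q) (x y : H) :
    ‖(1 - Q) x + Q y‖ ^ 2 = ‖(1 - Q) x‖ ^ 2 + ‖Q y‖ ^ 2 := by
  have h_inner : ⟪(1 - Q) x, Q y⟫_ℂ = 0 := by
    rw [← adjoint_inner_left, ← star_eq_adjoint, hQ.isSelfAdjoint.star_eq, ← mul_apply_eq_comp,
      hQ.mul_one_sub_self, zero_apply, inner_zero_left]
  simpa only [sq] using norm_add_sq_eq_norm_sq_add_norm_sq_of_inner_eq_zero _ _ h_inner

theorem norm_completion_le (hQ : IsStarProjection Q) (hS : ‖S‖ ≤ c) (hQS : Q * S = S)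
    (hSQ : S * Q = S) (hm : ‖m‖ ≤ 1) (hW : ‖W‖ ≤ 1) :
    ‖c • m • (1 - Q) + (√(1 - ‖m‖ ^ 2) • (1 - Q)) * (W * defect c S) * Q + S‖ ≤ c := by
  have hc : 0 ≤ c := (norm_nonneg S).trans hS
  set s := √(1 - ‖m‖ ^ 2)
  have hs : ‖m‖ ^ 2 + s ^ 2 = 1 := by
    rw [Real.sq_sqrt (sub_nonneg.2 (pow_le_one₀ (norm_nonneg m) hm)), add_sub_cancel]
  refine opNorm_le_bound _ hc fun x => le_of_sq_le_sq ?_ (by positivity)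
  have hP : IsStarProjection (1 - Q) := hQ.one_sub
  set P := 1 - Q with hPQ
  set u := c • m • P x + s • W (defect c S (Q x)) with hu
  have h_apply : (c • m • P + (s • P) * (W * defect c S) * Q + S) x = P u + Q (S x) := by
    have hPP : P (P x) = P x := DFunLike.congr_fun hP.isIdempotentElem.eq x
    have hQSx : Q (S x) = S x := DFunLike.congr_fun hQS x
    simp only [hu, add_apply, smul_apply, mul_apply_eq_comp, map_add, map_smul_of_tower, hPP, hQSx]
  have hPu : ‖P u‖ ≤ ‖m‖ * (c * ‖P x‖) + s * ‖defect c S (Q x)‖ := by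
    calc ‖P u‖ ≤ ‖u‖ := le_of_opNorm_le_of_le P hP.norm_le le_rfl |>.trans_eq (one_mul _)
      _ ≤ ‖c • m • P x‖ + ‖s • W (defect c S (Q x))‖ := norm_add_le _ _
      _ = ‖m‖ * (c * ‖P x‖) + s * ‖W (defect c S (Q x))‖ := by
        rw [norm_smul, norm_smul, norm_smul, Real.norm_of_nonneg hc,
          Real.norm_of_nonneg (Real.sqrt_nonneg _)]
        ring
      _ ≤ ‖m‖ * (c * ‖P x‖) + s * ‖defect c S (Q x)‖ := by
        gcongr
        exact (W.le_of_opNorm_le hW _).trans_eq (one_mul _)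
  calc ‖(c • m • P + (s • P) * (W * defect c S) * Q + S) x‖ ^ 2
      = ‖P u‖ ^ 2 + ‖S (Q x)‖ ^ 2 := by
        rw [h_apply, hPQ, norm_sq_one_sub_apply_add_apply hQ, ← mul_apply_eq_comp,
          ← mul_apply_eq_comp, hQS, hSQ]
    _ ≤ (‖m‖ * (c * ‖P x‖) + s * ‖defect c S (Q x)‖) ^ 2 + ‖S (Q x)‖ ^ 2 := by gcongr
    _ ≤ (‖m‖ ^ 2 + s ^ 2) * ((c * ‖P x‖) ^ 2 + ‖defect c S (Q x)‖ ^ 2) + ‖S (Q x)‖ ^ 2 := by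
        gcongr
        nlinarith [sq_nonneg (‖m‖ * ‖defect c S (Q x)‖ - s * (c * ‖P x‖))]
    _ = c ^ 2 * (‖P x‖ ^ 2 + ‖Q x‖ ^ 2) := by
        linear_combination ((c * ‖P x‖) ^ 2 + ‖defect c S (Q x)‖ ^ 2) * hs +
          norm_defect_apply_sq_add hS (Q x)
    _ = (c * ‖x‖) ^ 2 := by
        rw [hPQ, ← norm_sq_one_sub_apply_add_apply hQ, ← add_apply, sub_add_cancel,
          one_apply_eq_self, mul_pow]

theorem exists_modCompact_mul_one_sub_add (hQ : IsStarProjection Q) (hT : ‖T‖ ≤ c) (hm : ‖m‖ ≤ 1)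
    (hTm : T * (1 - Q) ≡ c • m • (1 - Q) [SMOD 𝓚]) : ∃ Y : H →L[ℂ] H, ‖Y‖ ≤ c ∧
      T * Q ≡ (√(1 - ‖m‖ ^ 2) • (1 - Q) + Q) * Y [SMOD 𝓚] := by
  have hc : 0 ≤ c := (norm_nonneg T).trans hT
  have hP : IsStarProjection (1 - Q) := hQ.one_sub
  have hmP : ‖star (c • m • (1 - Q))‖ ≤ c := by
    rw [norm_star, norm_smul, norm_smul, Real.norm_of_nonneg hc]
    exact mul_le_of_le_one_right hc (mul_le_one₀ hm (norm_nonneg _) hP.norm_le)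
  have h_star : (1 - Q) * star T ≡ star (c • m • (1 - Q)) [SMOD 𝓚] := by
    simpa only [star_mul, hP.isSelfAdjoint.star_eq] using modCompact_star hTm
  obtain ⟨Z, hZ, hTZ⟩ := exists_modCompact_mul_defect hQ ((norm_star T).trans_le hT) hmP h_star
  refine ⟨c • star Z, ?_, ?_⟩
  · rw [norm_smul, norm_star, Real.norm_of_nonneg hc]
    exact mul_le_of_le_one_right hc hZ
  · have h_unstar := modCompact_star hTZ
    rwa [star_mul, star_mul, star_star, hQ.isSelfAdjoint.star_eq,
      (IsSelfAdjoint.of_nonneg (defect_nonneg _ _)).star_eq, defect_smul_starProjection hP hc hm,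
      sub_sub_cancel, smul_mul_assoc, ← mul_smul_comm] at h_unstar

/- Parrott's completion of the upper triangular block matrix with diagonal `c m`, `S`, chosen so
that it stays within a compact perturbation of `T`. -/
theorem exists_modCompact_completion (hQ : IsStarProjection Q) (hT : ‖T‖ ≤ c) (hS : ‖S‖ ≤ c)
    (hQS : Q * S = S) (hSQ : S * Q = S) (hm : ‖m‖ ≤ 1)
    (hTm : T * (1 - Q) ≡ c • m • (1 - Q) [SMOD 𝓚]) (hTS : Q * T * Q ≡ S [SMOD 𝓚]) :
    ∃ R : H →L[ℂ] H, R ≡ T [SMOD 𝓚] ∧ ‖R‖ ≤ c ∧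
      R * (1 - Q) = c • m • (1 - Q) ∧ Q * R = S := by
  have hQP : Q * (1 - Q) = 0 := hQ.mul_one_sub_self
  have hPQ : (1 - Q) * Q = 0 := hQ.one_sub_mul_self
  have hQQ : Q * Q = Q := hQ.isIdempotentElem.eq
  have hPP : (1 - Q) * (1 - Q) = 1 - Q := hQ.one_sub.isIdempotentElem.eq
  obtain ⟨Y, hY, hTQ⟩ := exists_modCompact_mul_one_sub_add hQ hT hm hTm
  have hQY : Q * Y ≡ S [SMOD 𝓚] := by
    have h := modCompact_mul (.refl Q) hTQ
    rw [← mul_assoc, ← mul_assoc, mul_add, mul_smul_comm, hQP, smul_zero, zero_add, hQQ] at h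
    exact h.symm.trans hTS
  obtain ⟨W, hW, hPW⟩ := exists_modCompact_mul_defect hQ.one_sub hY hS (by rwa [sub_sub_cancel])
  have h_corner : (√(1 - ‖m‖ ^ 2) • (1 - Q)) * (W * defect c S) * Q ≡ (1 - Q) * T * Q [SMOD 𝓚] := by
    have h_mul : (1 - Q) * (√(1 - ‖m‖ ^ 2) • (1 - Q) + Q) =
        (√(1 - ‖m‖ ^ 2) • (1 - Q)) * (1 - Q) := by
      rw [mul_add, hPQ, add_zero, mul_smul_comm, smul_mul_assoc]
    have hPW_Q := modCompact_mul (modCompact_mul (.refl (√(1 - ‖m‖ ^ 2) • (1 - Q))) hPW.symm)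
      (.refl Q)
    have hTQ_Q := modCompact_mul (modCompact_mul (.refl (1 - Q)) hTQ.symm) (.refl Q)
    rw [← mul_assoc, h_mul, mul_assoc _ (1 - Q) Y, ← mul_assoc (1 - Q) T, mul_assoc _ Q,
      hQQ] at hTQ_Q
    exact hPW_Q.trans hTQ_Q
  refine ⟨c • m • (1 - Q) + (√(1 - ‖m‖ ^ 2) • (1 - Q)) * (W * defect c S) * Q + S, ?_,
    norm_completion_le hQ hS hQS hSQ hm hW, ?_, ?_⟩
  · have h_sum : T * (1 - Q) + (1 - Q) * T * Q + Q * T * Q = T := by noncomm_ring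
    have h_blocks := (hTm.symm.add h_corner).add hTS.symm
    rwa [h_sum] at h_blocks
  · rw [add_mul, add_mul, mul_assoc _ Q, ← hSQ, mul_assoc S, hQP, mul_zero, mul_zero, add_zero,
      add_zero, smul_mul_assoc, smul_mul_assoc, hPP]
  · rw [mul_add, mul_add, hQS, ← mul_assoc, ← mul_assoc Q, mul_smul_comm, mul_smul_comm,
      mul_smul_comm, hQP, smul_zero, smul_zero, smul_zero, zero_mul, zero_mul, zero_add, zero_add]

end Completion

section Compression

variable {𝕜 E : Type*} [RCLike 𝕜] [NormedAddCommGroup E] [InnerProductSpace 𝕜 E]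
  {W : Submodule 𝕜 E} [W.HasOrthogonalProjection] {T : E →L[𝕜] E} {μ : 𝕜}

/-- The compression of `T` to `W`, i.e. the corner of `T` given by the orthogonal projection
onto `W`, as an operator on `W`. -/
noncomputable def compression (W : Submodule 𝕜 E) [W.HasOrthogonalProjection] (T : E →L[𝕜] E) :
    W →L[𝕜] W :=
  W.orthogonalProjectionOnto ∘L T ∘L W.subtypeL

theorem norm_compression_le (W : Submodule 𝕜 E) [W.HasOrthogonalProjection] (T : E →L[𝕜] E) :
    ‖compression W T‖ ≤ ‖T‖ := by
  calc ‖compression W T‖ ≤ ‖W.orthogonalProjectionOnto‖ * (‖T‖ * ‖W.subtypeL‖) :=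
        (opNorm_comp_le _ _).trans (by gcongr; exact opNorm_comp_le _ _)
    _ ≤ 1 * (‖T‖ * 1) := by
        gcongr
        · exact W.orthogonalProjectionOnto_norm_le
        · exact W.norm_subtypeL_le
    _ = ‖T‖ := by rw [one_mul, mul_one]

theorem norm_subtypeL_comp_comp_orthogonalProjectionOnto_le (S : W →L[𝕜] W) :
    ‖W.subtypeL ∘L S ∘L W.orthogonalProjectionOnto‖ ≤ ‖S‖ := by
  calc ‖W.subtypeL ∘L S ∘L W.orthogonalProjectionOnto‖
      ≤ ‖W.subtypeL‖ * (‖S‖ * ‖W.orthogonalProjectionOnto‖) :=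
        (opNorm_comp_le _ _).trans (by gcongr; exact opNorm_comp_le _ _)
    _ ≤ 1 * (‖S‖ * 1) := by
        gcongr
        · exact W.norm_subtypeL_le
        · exact W.orthogonalProjectionOnto_norm_le
    _ = ‖S‖ := by rw [one_mul, mul_one]

theorem orthogonalProjectionOnto_comp_subtypeL_self :
    W.orthogonalProjectionOnto ∘L W.subtypeL = .id 𝕜 W := by
  ext x
  exact congr_arg Subtype.val (W.orthogonalProjectionOnto_mem_subspace_eq_self x)

theorem orthogonalProjectionOnto_comp_starProjection :
    W.orthogonalProjectionOnto ∘L W.starProjection = W.orthogonalProjectionOnto := by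
  rw [Submodule.starProjection, ← comp_assoc, orthogonalProjectionOnto_comp_subtypeL_self, id_comp]

theorem orthogonalProjectionOnto_comp_one_sub_starProjection :
    W.orthogonalProjectionOnto ∘L (1 - W.starProjection) = 0 := by
  rw [comp_sub, orthogonalProjectionOnto_comp_starProjection, one_def, comp_id, sub_self]

theorem orthogonalProjectionOnto_comp_modCompact
    (h : T * (1 - W.starProjection) ≡ μ • (1 - W.starProjection) [SMOD 𝓚]) :
    W.orthogonalProjectionOnto ∘L T ≡ compression W T ∘L W.orthogonalProjectionOnto [SMOD 𝓚] := by
  calc W.orthogonalProjectionOnto ∘L T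
      = compression W T ∘L W.orthogonalProjectionOnto +
          W.orthogonalProjectionOnto ∘L (T * (1 - W.starProjection)) := by
        rw [mul_sub, mul_one, comp_sub]
        exact (add_sub_cancel _ _).symm
    _ ≡ compression W T ∘L W.orthogonalProjectionOnto +
          W.orthogonalProjectionOnto ∘L (μ • (1 - W.starProjection)) [SMOD 𝓚] :=
        SModEq.rfl.add (modCompact_comp .rfl h)
    _ = compression W T ∘L W.orthogonalProjectionOnto := by
        rw [← mul_smul_one, mul_def, ← comp_assoc,
          orthogonalProjectionOnto_comp_one_sub_starProjection, zero_comp, add_zero]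

theorem modCompact_aeval_compression_zero
    (h : T * (1 - W.starProjection) ≡ μ • (1 - W.starProjection) [SMOD 𝓚]) {p : 𝕜[X]}
    (hp : W.starProjection * aeval T p ≡ 0 [SMOD 𝓚]) : aeval (compression W T) p ≡ 0 [SMOD 𝓚] := by
  have h_comp_zero : W.orthogonalProjectionOnto ∘L aeval T p ≡ 0 [SMOD 𝓚] := by
    have h_comp := modCompact_comp (.refl W.orthogonalProjectionOnto) hp
    rwa [mul_def, ← comp_assoc, orthogonalProjectionOnto_comp_starProjection, comp_zero] at h_comp
  have h_zero_comp : aeval (compression W T) p ∘L W.orthogonalProjectionOnto ≡ 0 [SMOD 𝓚] :=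
    (modCompact_comp_aeval (orthogonalProjectionOnto_comp_modCompact h) p).symm.trans h_comp_zero
  have h_comp := modCompact_comp h_zero_comp (.refl W.subtypeL)
  rwa [comp_assoc, orthogonalProjectionOnto_comp_subtypeL_self, comp_id, zero_comp] at h_comp

theorem modCompact_smul_one_of_finiteDimensional [FiniteDimensional 𝕜 W]
    (h : T * (1 - W.starProjection) ≡ μ • (1 - W.starProjection) [SMOD 𝓚]) :
    (μ • 1 : E →L[𝕜] E) ≡ T [SMOD 𝓚] := by
  have : ProperSpace W := FiniteDimensional.proper 𝕜 W
  have hQ : W.starProjection ≡ 0 [SMOD 𝓚] := modCompact_zero_iff.2 <|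
    (isCompactOperator_of_locallyCompactSpace_dom W.orthogonalProjectionOnto).clm_comp W.subtypeL
  have h_one_sub : 1 - W.starProjection ≡ 1 [SMOD 𝓚] := by
    simpa only [sub_zero] using SModEq.rfl.sub hQ
  have hT := modCompact_mul (.refl T) h_one_sub
  rw [mul_one] at hT
  exact (h_one_sub.symm.smul μ).trans (h.symm.trans hT)

theorem aeval_X_sub_C_mul_eq_zero_of_intertwine {S : W →L[𝕜] W} {q : 𝕜[X]}
    (hT : T * (1 - W.starProjection) = μ • (1 - W.starProjection))
    (hTS : W.orthogonalProjectionOnto ∘L T = S ∘L W.orthogonalProjectionOnto)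
    (hSq : aeval S q = 0) : aeval T ((X - Polynomial.C μ) * q) = 0 := by
  have hTq : W.starProjection * aeval T q = 0 := by
    rw [mul_def, Submodule.starProjection, comp_assoc, comp_aeval_eq hTS, hSq, zero_comp,
      comp_zero]
  calc aeval T ((X - Polynomial.C μ) * q)
      = (T - μ • 1) * (W.starProjection * aeval T q) +
          (T * (1 - W.starProjection) - μ • (1 - W.starProjection)) * aeval T q := by
        rw [aeval_X_sub_C_mul, ← smul_one_mul μ (1 - _)]
        noncomm_ring
    _ = 0 := by rw [hTq, hT, sub_self, mul_zero, zero_mul, add_zero]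

end Compression

section Lifting

variable {H : Type*} [NormedAddCommGroup H] [InnerProductSpace ℂ H] [CompleteSpace H]
  {T : H →L[ℂ] H} {c : ℝ} {μ : ℂ} {q : ℂ[X]}

theorem exists_modCompact_aeval_X_sub_C_mul_eq_zero_of_compression {W : Submodule ℂ H}
    [W.HasOrthogonalProjection] (hT : ‖T‖ ≤ c) (hμ : ‖μ‖ ≤ c)
    (hTμ : T * (1 - W.starProjection) ≡ μ • (1 - W.starProjection) [SMOD 𝓚]) {S : W →L[ℂ] W}
    (hST : S ≡ compression W T [SMOD 𝓚]) (hS : ‖S‖ ≤ c) (hSq : aeval S q = 0) :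
    ∃ R : H →L[ℂ] H, R ≡ T [SMOD 𝓚] ∧ ‖R‖ ≤ c ∧ aeval R ((X - Polynomial.C μ) * q) = 0 := by
  obtain ⟨m, hm, rfl⟩ : μ ∈ c • Metric.closedBall (0 : ℂ) 1 := by
    rwa [smul_unitClosedBall_of_nonneg ((norm_nonneg T).trans hT), mem_closedBall_zero_iff]
  simp only [smul_assoc] at hTμ
  set S' := W.subtypeL ∘L S ∘L W.orthogonalProjectionOnto with hS'_def
  have hS' : ‖S'‖ ≤ c := (norm_subtypeL_comp_comp_orthogonalProjectionOnto_le S).trans hS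
  have hQS' : W.starProjection * S' = S' := by
    rw [hS'_def, mul_def, Submodule.starProjection, comp_assoc, ← comp_assoc _ W.subtypeL,
      orthogonalProjectionOnto_comp_subtypeL_self, id_comp]
  have hS'Q : S' * W.starProjection = S' := by
    rw [hS'_def, mul_def, comp_assoc, comp_assoc, orthogonalProjectionOnto_comp_starProjection]
  have hTS' : W.starProjection * T * W.starProjection ≡ S' [SMOD 𝓚] :=
    modCompact_comp (.refl W.subtypeL)
      (modCompact_comp hST.symm (.refl W.orthogonalProjectionOnto))
  obtain ⟨R, hRT, hR, hR_one_sub, hQR⟩ := exists_modCompact_completion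
    isStarProjection_starProjection hT hS' hQS' hS'Q (mem_closedBall_zero_iff.1 hm) hTμ hTS'
  have h_intertwine : W.orthogonalProjectionOnto ∘L R = S ∘L W.orthogonalProjectionOnto := by
    rw [← orthogonalProjectionOnto_comp_starProjection, comp_assoc, ← mul_def, hQR, hS'_def,
      ← comp_assoc, orthogonalProjectionOnto_comp_subtypeL_self, id_comp,
      orthogonalProjectionOnto_comp_starProjection]
  exact ⟨R, hRT, hR, aeval_X_sub_C_mul_eq_zero_of_intertwine
    (hR_one_sub.trans (smul_assoc _ _ _).symm) h_intertwine hSq⟩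

theorem isUnit_sub_smul_one_of_norm_lt (h : ‖T‖ < ‖μ‖) : IsUnit (T - μ • 1) := by
  have h_mem : μ ∈ resolventSet ℂ T := spectrum.mem_resolventSet_of_norm_lt_mul <|
    (mul_le_of_le_one_right (norm_nonneg T) norm_id_le).trans_lt h
  rw [spectrum.mem_resolventSet_iff, Algebra.algebraMap_eq_smul_one] at h_mem
  simpa only [neg_sub] using h_mem.neg

end Lifting

theorem exists_modCompact_norm_le_aeval_eq_zero {H : Type*} [NormedAddCommGroup H]
    [InnerProductSpace ℂ H] [CompleteSpace H] (hH : ¬ FiniteDimensional ℂ H) {T : H →L[ℂ] H}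
    {c : ℝ} (hT : ‖T‖ ≤ c) {p : ℂ[X]} (hp : aeval T p ≡ 0 [SMOD 𝓚]) :
    ∃ S : H →L[ℂ] H, S ≡ T [SMOD 𝓚] ∧ ‖S‖ ≤ c ∧ aeval S p = 0 := by
  induction p using induction_on_X_sub_C_mul generalizing H with
  | C a =>
    have ha : a = 0 := by
      by_contra ha
      have h_one : (1 : H →L[ℂ] H) ≡ 0 [SMOD 𝓚] := by
        simpa only [aeval_C, Algebra.algebraMap_eq_smul_one, inv_smul_smul₀ ha, smul_zero] using
          hp.smul a⁻¹
      exact hH (.of_isCompactOperator_id (𝕜 := ℂ) (modCompact_zero_iff.1 h_one))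
    exact ⟨T, .rfl, hT, by rw [ha, map_zero, map_zero]⟩
  | X_sub_C_mul μ q ih =>
    rw [aeval_X_sub_C_mul] at hp
    rcases lt_or_ge c ‖μ‖ with hμ | hμ
    · obtain ⟨S, hST, hS, hSq⟩ := ih hH hT
        (modCompact_zero_of_isUnit_mul (isUnit_sub_smul_one_of_norm_lt (hT.trans_lt hμ)) hp)
      exact ⟨S, hST, hS, by rw [map_mul, hSq, mul_zero]⟩
    · obtain ⟨W, _, hTW, hWq⟩ := exists_starProjection_of_mul_modCompact_zero hp
      have hTμ : T * (1 - W.starProjection) ≡ μ • (1 - W.starProjection) [SMOD 𝓚] := by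
        rwa [sub_mul, smul_one_mul, sub_smodEq_zero] at hTW
      by_cases hW : FiniteDimensional ℂ W
      · refine ⟨μ • 1, modCompact_smul_one_of_finiteDimensional hTμ, ?_, ?_⟩
        · exact (norm_smul_le _ _).trans
            ((mul_le_of_le_one_right (norm_nonneg μ) norm_id_le).trans hμ)
        · rw [aeval_X_sub_C_mul, sub_self, zero_mul]
      · obtain ⟨S, hST, hS, hSq⟩ := ih hW ((norm_compression_le W T).trans hT)
          (modCompact_aeval_compression_zero hTμ hWq)
        exact exists_modCompact_aeval_X_sub_C_mul_eq_zero_of_compression hT hμ hTμ hST hS hSq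

end CompactPerturbation

open CompactPerturbation

theorem stmt_8_general {H : Type*} [NormedAddCommGroup H] [InnerProductSpace ℂ H] [CompleteSpace H]
    (hH : ¬ FiniteDimensional ℂ H) (p : ℂ[X]) (T : H →L[ℂ] H)
    (hT : IsCompactOperator (aeval T p)) :
    ∃ K : H →L[ℂ] H, IsCompactOperator K ∧ aeval (T + K) p = 0 ∧
      ‖T + K‖ = Metric.infDist T {S : H →L[ℂ] H | IsCompactOperator S} := by
  obtain ⟨T', hT'T, hT'⟩ := exists_modCompact_norm_le_essentialNorm T
  have hT'p : aeval T' p ≡ 0 [SMOD 𝓚] := (modCompact_aeval hT'T p).trans (modCompact_zero_iff.2 hT)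
  obtain ⟨S, hST', hS, hSp⟩ := exists_modCompact_norm_le_aeval_eq_zero hH hT' hT'p
  have hST : S ≡ T [SMOD 𝓚] := hST'.trans hT'T
  refine ⟨S - T, SModEq.sub_mem.1 hST, ?_⟩
  rw [add_sub_cancel]
  exact ⟨hSp, hS.antisymm (essentialNorm_le_norm hST)⟩

/-- Let `H` be an infinite-dimensional separable complex Hilbert space,
`T ∈ B(H)`, and `p(t) = (t−λ₁)^{k₁}⋯(t−λₙ)^{kₙ}` with distinct roots and all `kᵢ ≥ 2`.
If `p(T)` is compact, then there is a compact operator `K` with `p(T + K) = 0` and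
`‖T + K‖ = ‖T‖ₑ`, the essential norm of `T` (the norm of the image of `T` in the Calkin
algebra, i.e. the distance from `T` to the compact operators). -/
theorem stmt_8 {H : Type*} [NormedAddCommGroup H] [InnerProductSpace ℂ H] [CompleteSpace H]
    [TopologicalSpace.SeparableSpace H] (hdim : ¬ FiniteDimensional ℂ H)
    (n : ℕ) (lam : Fin n → ℂ) (hlam : Function.Injective lam)
    (k : Fin n → ℕ) (hk : ∀ i, 2 ≤ k i)
    (T : H →L[ℂ] H)
    (hTc : IsCompactOperator (List.ofFn fun i => (T - lam i • 1) ^ k i).prod) :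
    ∃ K : H →L[ℂ] H, IsCompactOperator K ∧
      (List.ofFn fun i => (T + K - lam i • 1) ^ k i).prod = 0 ∧
      ‖T + K‖ = Metric.infDist T {S : H →L[ℂ] H | IsCompactOperator S} := by
  simp only [← aeval_prod_ofFn_X_sub_C_pow] at hTc ⊢
  exact stmt_8_general hdim _ T hTc
end

section
/- Let p(t) = (t−t₁)⋯(t−tₙ) be a polynomial with distinct real roots t₁,…,tₙ, and let C > 0. Then the relation 'p(x) = 0, ‖x‖ ≤ C' is stable in the following sense (equivalent to semiprojectivity of its universal C*-algebra): for every C*-algebra A, every increasing sequence I₁ ⊆ I₂ ⊆ ⋯ of closed two-sided ideals of A with I = closure(⋃ₙ Iₙ), and every x ∈ A/I with p(x) = 0 and ‖x‖ ≤ C, there exist N ∈ ℕ and y ∈ A/I_N with p(y) = 0, ‖y‖ ≤ C, such that the canonical surjection A/I_N → A/I maps y to x. -/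
/-!
Lagrange idempotents of `x` give an invertible `r ≥ 0` for which `a = r⁻¹ x r` is self-adjoint.
Since the norm on `A / I` is the limit of the norms on the `A / I_N` and `a` has finite spectrum,
functional calculus lifts `a` to a self-adjoint element of some `A / I_N` with no new spectral
values. It remains to lift `r` to an invertible `s` with `‖s a s⁻¹‖ ≤ C`, which for `v = s²` means
`a v a ≤ C² v`; scale to `C = 1`. Let `p` and `m` be the spectral projections of the lifted `a` at
`1` and `-1`. Any solution `v` commutes with both, so a positive invertible lift of `r²` may be
replaced by its pinching along `p`, `m` and `1 - p - m`, after which the inequality can fail only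
in the corner of `1 - p - m`. There `a` is a strict contraction, and adding the sum of a geometric
series that vanishes in `A / I` restores the inequality.
-/

open Polynomial
open scoped Pointwise

/-! ### Quotient C⋆-algebras -/

section Quotient

variable {A : Type*} [CStarAlgebra A]

theorem norm_mul_cfc_star_mul_self_sq (j : A) {f : ℝ → ℝ}
    (hf : ContinuousOn f (spectrum ℝ (star j * j))) :
    ‖j * cfc f (star j * j)‖ ^ 2 = ‖cfc (fun x => f x * x * f x) (star j * j)‖ := by
  have hsa : star (cfc f (star j * j)) = cfc f (star j * j) :=
    (cfc_predicate f _ : IsSelfAdjoint (cfc f (star j * j)))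
  rw [cfc_mul (fun x => f x * x) f _ (by fun_prop) hf, cfc_mul f (fun x => x) _ hf (by fun_prop),
    cfc_id' ℝ (star j * j), sq, ← CStarRing.norm_star_mul_self, star_mul, hsa]
  simp only [mul_assoc]

theorem exists_local_unit (J : Ideal A) [J.IsTwoSided] {j : A} (hj : j ∈ J) {ε : ℝ}
    (hε : 0 < ε) : ∃ u ∈ J, IsSelfAdjoint u ∧ ‖1 - u‖ ≤ 1 ∧ ‖j * (1 - u)‖ ≤ ε := by
  set b : A := star j * j
  have hpos : ∀ x ∈ spectrum ℝ b, 0 ≤ x := fun x hx => spectrum_star_mul_self_nonneg x hx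
  have hne : ∀ x ∈ spectrum ℝ b, x + ε ^ 2 ≠ 0 := fun x hx => by
    have := hpos x hx
    positivity
  have hle : ∀ x ∈ spectrum ℝ b, ε ^ 2 * (x + ε ^ 2)⁻¹ ≤ 1 := fun x hx => by
    have := hpos x hx
    exact div_le_one_of_le₀ (by linarith) (by positivity)
  have hcont : ContinuousOn (fun x : ℝ => (x + ε ^ 2)⁻¹) (spectrum ℝ b) :=
    ContinuousOn.inv₀ (by fun_prop) hne
  have hcompl : 1 - cfc (fun x : ℝ => x * (x + ε ^ 2)⁻¹) b =
      cfc (fun x : ℝ => ε ^ 2 * (x + ε ^ 2)⁻¹) b := by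
    rw [← cfc_const_one ℝ b, ← cfc_sub _ _ b (by fun_prop) (by fun_prop)]
    refine cfc_congr fun x hx => ?_
    have := hne x hx
    field_simp
    ring
  refine ⟨cfc (fun x : ℝ => x * (x + ε ^ 2)⁻¹) b, ?_, cfc_predicate _ _, ?_, ?_⟩
  · rw [cfc_mul (fun x : ℝ => x) _ b (by fun_prop) hcont, cfc_id' ℝ b]
    exact J.mul_mem_right _ (J.mul_mem_left _ hj)
  · rw [hcompl]
    refine norm_cfc_le zero_le_one fun x hx => ?_
    have := hpos x hx
    rw [Real.norm_of_nonneg (by positivity)]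
    exact hle x hx
  · rw [hcompl]
    refine le_of_sq_le_sq ?_ hε.le
    rw [norm_mul_cfc_star_mul_self_sq j (by fun_prop)]
    refine norm_cfc_le (sq_nonneg ε) fun x hx => ?_
    have hx0 := hpos x hx
    have hx1 : x * (x + ε ^ 2)⁻¹ ≤ 1 := div_le_one_of_le₀ (by nlinarith) (by positivity)
    rw [Real.norm_of_nonneg (by positivity)]
    calc ε ^ 2 * (x + ε ^ 2)⁻¹ * x * (ε ^ 2 * (x + ε ^ 2)⁻¹)
        = (ε ^ 2 * (x + ε ^ 2)⁻¹) * (x * (x + ε ^ 2)⁻¹) * ε ^ 2 := by ring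
      _ ≤ 1 * 1 * ε ^ 2 := by gcongr; exact hle x hx
      _ = ε ^ 2 := by ring

theorem star_mem_of_isClosed (J : Ideal A) [J.IsTwoSided] [hJ : IsClosed (J : Set A)] {j : A}
    (hj : j ∈ J) : star j ∈ J := by
  refine hJ.closure_subset (Metric.mem_closure_iff.2 fun ε hε => ?_)
  obtain ⟨u, huJ, hu, -, hju⟩ := exists_local_unit J hj (half_pos hε)
  refine ⟨u * star j, J.mul_mem_right _ huJ, ?_⟩
  calc dist (star j) (u * star j) = ‖star (j * (1 - u))‖ := by
        simp [dist_eq_norm, sub_mul, hu.star_eq]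
    _ = ‖j * (1 - u)‖ := norm_star _
    _ < ε := hju.trans_lt (half_lt_self hε)

variable (J : Ideal A) [J.IsTwoSided]

theorem norm_mk_mul_le (a b : A) :
    ‖(Submodule.Quotient.mk (a * b) : A ⧸ J)‖ ≤
      ‖(Submodule.Quotient.mk a : A ⧸ J)‖ * ‖(Submodule.Quotient.mk b : A ⧸ J)‖ := by
  refine le_mul_of_forall_lt₀ fun α hα β hβ => ?_
  obtain ⟨a', haa', ha'⟩ :=
    Submodule.Quotient.norm_mk_lt (Submodule.Quotient.mk a : A ⧸ J) (sub_pos.2 hα)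
  obtain ⟨b', hbb', hb'⟩ :=
    Submodule.Quotient.norm_mk_lt (Submodule.Quotient.mk b : A ⧸ J) (sub_pos.2 hβ)
  have hmk : (Submodule.Quotient.mk (a * b) : A ⧸ J) = Submodule.Quotient.mk (a' * b') :=
    (congrArg₂ (· * ·) haa' hbb' : Ideal.Quotient.mk J a' * Ideal.Quotient.mk J b' = _).symm
  calc ‖(Submodule.Quotient.mk (a * b) : A ⧸ J)‖
      ≤ ‖a' * b'‖ := hmk ▸ Submodule.Quotient.norm_mk_le J (a' * b')
    _ ≤ ‖a'‖ * ‖b'‖ := norm_mul_le a' b'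
    _ ≤ α * β :=
        mul_le_mul (by linarith) (by linarith) (norm_nonneg b') ((norm_nonneg _).trans hα.le)

variable [IsClosed (J : Set A)]

theorem norm_mk_mul_self_le (a : A) :
    ‖(Submodule.Quotient.mk a : A ⧸ J)‖ * ‖(Submodule.Quotient.mk a : A ⧸ J)‖
      ≤ ‖(Submodule.Quotient.mk (star a * a) : A ⧸ J)‖ := by
  refine le_of_forall_pos_le_add fun ε hε => ?_
  obtain ⟨c, hc, hcn⟩ := Submodule.Quotient.norm_mk_lt
    (Submodule.Quotient.mk (star a * a) : A ⧸ J) (half_pos hε)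
  -- Multiplying `a` by `1 - u` does not change its class, and makes `star a * a - c ∈ J` small.
  obtain ⟨u, huJ, hu, hu1, hju⟩ :=
    exists_local_unit J ((Submodule.Quotient.eq J).1 hc.symm) (half_pos hε)
  have hmk : (Submodule.Quotient.mk a : A ⧸ J) = Submodule.Quotient.mk (a * (1 - u)) := by
    rw [Submodule.Quotient.eq, mul_sub, mul_one, sub_sub_cancel]
    exact J.mul_mem_left _ huJ
  calc ‖(Submodule.Quotient.mk a : A ⧸ J)‖ * ‖(Submodule.Quotient.mk a : A ⧸ J)‖
      ≤ ‖a * (1 - u)‖ * ‖a * (1 - u)‖ := by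
        rw [hmk]
        gcongr <;> exact Submodule.Quotient.norm_mk_le J _
    _ = ‖(1 - u) * c * (1 - u) + (1 - u) * ((star a * a - c) * (1 - u))‖ := by
        rw [← CStarRing.norm_star_mul_self, star_mul, star_sub, star_one, hu.star_eq]
        congr 1
        noncomm_ring
    _ ≤ ‖1 - u‖ * ‖c‖ * ‖1 - u‖ + ‖1 - u‖ * ‖(star a * a - c) * (1 - u)‖ :=
        norm_add_le_of_le (norm_mul₃_le ..) (norm_mul_le ..)
    _ ≤ 1 * ‖c‖ * 1 + 1 * (ε / 2) := by gcongr
    _ ≤ ‖(Submodule.Quotient.mk (star a * a) : A ⧸ J)‖ + ε := by linarith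

noncomputable instance quotientNormedRing : NormedRing (A ⧸ J) where
  __ := Submodule.Quotient.normedAddCommGroup J
  __ := Ideal.Quotient.ring J
  norm_mul_le := by
    rintro ⟨a⟩ ⟨b⟩
    exact norm_mk_mul_le J a b

instance quotientStarRing : StarRing (A ⧸ J) where
  star := Quotient.map' star fun a b h => by
    rw [Submodule.quotientRel_def] at h ⊢
    rw [← star_sub]
    exact star_mem_of_isClosed J h
  star_involutive := by
    rintro ⟨a⟩
    exact congrArg (Ideal.Quotient.mk J) (star_star a)
  star_mul := by
    rintro ⟨a⟩ ⟨b⟩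
    exact congrArg (Ideal.Quotient.mk J) (star_mul a b)
  star_add := by
    rintro ⟨a⟩ ⟨b⟩
    exact congrArg (Ideal.Quotient.mk J) (star_add a b)

noncomputable instance quotientCStarAlgebra : CStarAlgebra (A ⧸ J) where
  __ := quotientNormedRing J
  __ := quotientStarRing J
  __ := Submodule.Quotient.completeSpace J
  __ := (Ideal.Quotient.algebra ℂ : Algebra ℂ (A ⧸ J))
  norm_smul_le := (Submodule.Quotient.normedSpace J ℂ).norm_smul_le
  norm_mul_self_le := by
    rintro ⟨a⟩
    exact norm_mk_mul_self_le J a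
  star_smul c := by
    rintro ⟨a⟩
    exact congrArg (Ideal.Quotient.mk J) (star_smul c a)

/-- The quotient map of a C⋆-algebra by a closed two-sided ideal, as a `⋆`-homomorphism. -/
def quotientMk : A →⋆ₐ[ℂ] A ⧸ J where
  toAlgHom := Ideal.Quotient.mkₐ ℂ J
  map_star' _ := rfl

theorem quotientMk_surjective : Function.Surjective (quotientMk J) :=
  Ideal.Quotient.mk_surjective

theorem quotientMk_eq_zero_iff {a : A} : quotientMk J a = 0 ↔ a ∈ J :=
  Ideal.Quotient.eq_zero_iff_mem

theorem norm_quotientMk (a : A) : ‖quotientMk J a‖ = Metric.infDist a J :=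
  QuotientAddGroup.norm_mk (S := J.toAddSubgroup) a

/-- The canonical `⋆`-homomorphism `A ⧸ J → A ⧸ K` for closed two-sided ideals `J ≤ K`. -/
def quotientFactor {J K : Ideal A} [J.IsTwoSided] [K.IsTwoSided] [IsClosed (J : Set A)]
    [IsClosed (K : Set A)] (h : J ≤ K) : A ⧸ J →⋆ₐ[ℂ] A ⧸ K where
  toAlgHom := Ideal.Quotient.factorₐ ℂ h
  map_star' := by
    rintro ⟨a⟩
    rfl

theorem quotientFactor_quotientMk {J K : Ideal A} [J.IsTwoSided] [K.IsTwoSided]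
    [IsClosed (J : Set A)] [IsClosed (K : Set A)] (h : J ≤ K) (a : A) :
    quotientFactor h (quotientMk J a) = quotientMk K a :=
  rfl

end Quotient

/-! ### The inequality `a v a ≤ v` -/

section Splitting

variable {B D : Type*} [CStarAlgebra B] [CStarAlgebra D]

theorem continuous_starAlgHom (φ : B →⋆ₐ[ℂ] D) : Continuous φ :=
  AddMonoidHomClass.continuous_of_bound φ 1 fun b => by
    simpa using NonUnitalStarAlgHom.norm_apply_le φ b

/-- `a` is a self-adjoint contraction whose spectral values of modulus one are isolated, and
`p`, `m` are the spectral projections for `1` and `-1`. -/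
structure IsPeripheralSplitting (a p m : B) : Prop where
  isSelfAdjoint : IsSelfAdjoint a
  isStarProjection_one : IsStarProjection p
  isStarProjection_neg_one : IsStarProjection m
  mul_eq : a * p = p
  mul_eq_neg : a * m = -m
  norm_mul_compl_lt_one : ‖a * (1 - p - m)‖ < 1

namespace IsPeripheralSplitting

variable {a p m : B}

theorem map (h : IsPeripheralSplitting a p m) (φ : B →⋆ₐ[ℂ] D) :
    IsPeripheralSplitting (φ a) (φ p) (φ m) where
  isSelfAdjoint := h.isSelfAdjoint.map φ
  isStarProjection_one := h.isStarProjection_one.map φ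
  isStarProjection_neg_one := h.isStarProjection_neg_one.map φ
  mul_eq := by rw [← map_mul, h.mul_eq]
  mul_eq_neg := by rw [← map_mul, h.mul_eq_neg, map_neg]
  norm_mul_compl_lt_one := by
    simpa only [map_mul, map_sub, map_one] using
      (NonUnitalStarAlgHom.norm_apply_le φ _).trans_lt h.norm_mul_compl_lt_one

protected theorem neg (h : IsPeripheralSplitting a p m) : IsPeripheralSplitting (-a) m p where
  isSelfAdjoint := h.isSelfAdjoint.neg
  isStarProjection_one := h.isStarProjection_neg_one
  isStarProjection_neg_one := h.isStarProjection_one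
  mul_eq := by rw [neg_mul, h.mul_eq_neg, neg_neg]
  mul_eq_neg := by rw [neg_mul, h.mul_eq]
  norm_mul_compl_lt_one := by
    rw [neg_mul, norm_neg, sub_right_comm]
    exact h.norm_mul_compl_lt_one

theorem proj_mul_eq (h : IsPeripheralSplitting a p m) : p * a = p := by
  simpa [h.isSelfAdjoint.star_eq, h.isStarProjection_one.isSelfAdjoint.star_eq]
    using congrArg star h.mul_eq

theorem proj_mul_proj_eq_zero (h : IsPeripheralSplitting a p m) : p * m = 0 := by
  have hneg : p * m = -(p * m) := by
    rw [← mul_neg, ← h.mul_eq_neg, ← mul_assoc, h.proj_mul_eq]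
  have : IsAddTorsionFree B := .of_isTorsionFree ℝ B
  exact self_eq_neg.1 hneg

theorem conj_proj_conj (h : IsPeripheralSplitting a p m) (w : B) :
    a * (p * w * p) * a = p * w * p := by
  rw [← mul_assoc, ← mul_assoc, h.mul_eq, mul_assoc _ p, h.proj_mul_eq]

theorem isSelfAdjoint_compl (h : IsPeripheralSplitting a p m) : IsSelfAdjoint (1 - p - m) :=
  ((IsSelfAdjoint.one B).sub h.isStarProjection_one.isSelfAdjoint).sub
    h.isStarProjection_neg_one.isSelfAdjoint

theorem compl_mul_compl (h : IsPeripheralSplitting a p m) :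
    (1 - p - m) * (1 - p - m) = 1 - p - m := by
  have hpp := h.isStarProjection_one.isIdempotentElem.eq
  have hmm := h.isStarProjection_neg_one.isIdempotentElem.eq
  simp only [sub_mul, mul_sub, one_mul, mul_one, hpp, hmm, h.proj_mul_proj_eq_zero,
    h.neg.proj_mul_proj_eq_zero]
  abel

theorem commute_compl (h : IsPeripheralSplitting a p m) : Commute a (1 - p - m) := by
  have hp : Commute a p := h.mul_eq.trans h.proj_mul_eq.symm
  have hm : Commute a m := by
    rw [← Commute.neg_left_iff]
    exact h.neg.mul_eq.trans h.neg.proj_mul_eq.symm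
  exact ((Commute.one_right a).sub_right hp).sub_right hm

theorem conj_compl_conj (h : IsPeripheralSplitting a p m) (w : B) :
    a * ((1 - p - m) * w * (1 - p - m)) * a = (1 - p - m) * (a * w * a) * (1 - p - m) := by
  calc a * ((1 - p - m) * w * (1 - p - m)) * a
      = (a * (1 - p - m)) * w * ((1 - p - m) * a) := by simp only [mul_assoc]
    _ = ((1 - p - m) * a) * w * (a * (1 - p - m)) := by rw [h.commute_compl.eq]
    _ = (1 - p - m) * (a * w * a) * (1 - p - m) := by simp only [mul_assoc]

theorem eq_proj_mul_of_mul_eq_self (h : IsPeripheralSplitting a p m) {z : B} (hz : a * z = z) :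
    z = p * z := by
  have hm : m * z = 0 := by
    have hneg : m * z = -(m * z) := by
      conv_lhs => rw [← h.neg.proj_mul_eq, mul_assoc, neg_mul, hz, mul_neg]
    have : IsAddTorsionFree B := .of_isTorsionFree ℝ B
    exact self_eq_neg.1 hneg
  have hq : (1 - p - m) * z = 0 := by
    have hfix : a * (1 - p - m) * ((1 - p - m) * z) = (1 - p - m) * z := by
      rw [mul_assoc a, ← mul_assoc (1 - p - m) (1 - p - m), h.compl_mul_compl, ← mul_assoc,
        h.commute_compl.eq, mul_assoc, hz]
    by_contra hne
    have := norm_mul_le (a * (1 - p - m)) ((1 - p - m) * z)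
    rw [hfix] at this
    nlinarith [norm_pos_iff.2 hne, h.norm_mul_compl_lt_one]
  calc z = (1 - p - m) * z + p * z + m * z := by noncomm_ring
    _ = p * z := by rw [hq, hm, zero_add, add_zero]

end IsPeripheralSplitting

theorem mul_eq_zero_of_star_mul_mul_eq_zero [PartialOrder B] [StarOrderedRing B] {d z : B}
    (hd : 0 ≤ d) (h : star z * d * z = 0) : d * z = 0 := by
  obtain ⟨x, rfl⟩ := CStarAlgebra.nonneg_iff_eq_star_mul_self.1 hd
  have hxz : x * z = 0 := by
    rw [← CStarRing.star_mul_self_eq_zero_iff, star_mul, ← h]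
    simp only [mul_assoc]
  rw [mul_assoc, hxz, mul_zero]

/-- The block diagonal part of `w` for the decomposition `1 = (1 - p - m) + p + m`, which
replaces a positive lift by one commuting with the projections `p` and `m`. -/
def pinching (p m w : B) : B :=
  (1 - p - m) * w * (1 - p - m) + p * w * p + m * w * m

theorem map_pinching (φ : B →⋆ₐ[ℂ] D) (p m w : B) :
    φ (pinching p m w) = pinching (φ p) (φ m) (φ w) := by
  simp [pinching]

namespace IsPeripheralSplitting

variable {a p m : B}

theorem pinching_algebraMap (h : IsPeripheralSplitting a p m) (δ : ℝ) :
    pinching p m (algebraMap ℝ B δ) = algebraMap ℝ B δ := by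
  simp only [pinching, Algebra.algebraMap_eq_smul_one, mul_smul_comm, smul_mul_assoc, mul_one,
    h.compl_mul_compl, h.isStarProjection_one.isIdempotentElem.eq,
    h.isStarProjection_neg_one.isIdempotentElem.eq, ← smul_add]
  abel_nf

theorem pinching_sub_conj (h : IsPeripheralSplitting a p m) (w : B) :
    pinching p m w - a * pinching p m w * a = (1 - p - m) * (w - a * w * a) * (1 - p - m) := by
  have hq := h.conj_compl_conj w
  have hp := h.conj_proj_conj w
  have hm : a * (m * w * m) * a = m * w * m := by simpa using h.neg.conj_proj_conj w
  simp only [pinching, mul_add, add_mul, hq, hp, hm, mul_sub (1 - p - m), sub_mul _ _ (1 - p - m)]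
  abel

variable [PartialOrder B] [StarOrderedRing B]

theorem pinching_mono (h : IsPeripheralSplitting a p m) {v w : B} (hvw : v ≤ w) :
    pinching p m v ≤ pinching p m w :=
  add_le_add (add_le_add (h.isSelfAdjoint_compl.conjugate_le_conjugate hvw)
    (h.isStarProjection_one.isSelfAdjoint.conjugate_le_conjugate hvw))
    (h.isStarProjection_neg_one.isSelfAdjoint.conjugate_le_conjugate hvw)

theorem mul_proj_eq (h : IsPeripheralSplitting a p m) {w : B} (hw : a * w * a ≤ w) :
    w * p = p * w * p := by
  have hcorner : p * (w - a * w * a) * p = 0 := by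
    calc p * (w - a * w * a) * p = p * w * p - (p * a) * w * (a * p) := by noncomm_ring
      _ = 0 := by rw [h.proj_mul_eq, h.mul_eq, sub_self]
  have hfix : a * (w * p) = w * p := by
    have hwp : (w - a * w * a) * p = 0 :=
      mul_eq_zero_of_star_mul_mul_eq_zero (sub_nonneg.2 hw)
        (by rwa [h.isStarProjection_one.isSelfAdjoint.star_eq])
    rw [sub_mul, mul_assoc (a * w), h.mul_eq, sub_eq_zero, mul_assoc a] at hwp
    exact hwp.symm
  rw [mul_assoc]
  exact h.eq_proj_mul_of_mul_eq_self hfix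

theorem pinching_eq_self (h : IsPeripheralSplitting a p m) {w : B} (hw : IsSelfAdjoint w)
    (hle : a * w * a ≤ w) : pinching p m w = w := by
  have hpr := h.mul_proj_eq hle
  have hmr := h.neg.mul_proj_eq (w := w) (by simpa using hle)
  have hpl : p * w = p * w * p := by
    simpa [hw.star_eq, h.isStarProjection_one.isSelfAdjoint.star_eq, mul_assoc]
      using congrArg star hpr
  have hml : m * w = m * w * m := by
    simpa [hw.star_eq, h.isStarProjection_neg_one.isSelfAdjoint.star_eq, mul_assoc]
      using congrArg star hmr
  have hpm : p * w * m = 0 := by rw [hpl, mul_assoc, h.proj_mul_proj_eq_zero, mul_zero]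
  have hmp : m * w * p = 0 := by rw [hml, mul_assoc, h.neg.proj_mul_proj_eq_zero, mul_zero]
  calc pinching p m w
      = w - (p * w - p * w * p) - (m * w - m * w * m) - (w * p - p * w * p) - (w * m - m * w * m)
          + p * w * m + m * w * p := by rw [pinching]; noncomm_ring
    _ = w := by
      simp only [sub_eq_zero.2 hpl, sub_eq_zero.2 hml, sub_eq_zero.2 hpr, sub_eq_zero.2 hmr, hpm,
        hmp, sub_zero, add_zero]

end IsPeripheralSplitting

/-- The geometric series `∑ₙ (star c)ⁿ g cⁿ` solves the discrete Lyapunov equation. -/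
theorem exists_nonneg_sub_star_conj_eq [PartialOrder B] [StarOrderedRing B] {c g : B}
    (hc : ‖c‖ < 1) (hg : 0 ≤ g) (φ : B →⋆ₐ[ℂ] D) (hφ : φ g = 0) :
    ∃ k : B, 0 ≤ k ∧ φ k = 0 ∧ k - star c * k * c = g := by
  have hbound : ∀ n : ℕ, ‖star c ^ (n + 1) * g * c ^ (n + 1)‖ ≤ (‖c‖ * ‖c‖) ^ (n + 1) * ‖g‖ :=
    fun n => calc
      _ ≤ ‖star c ^ (n + 1)‖ * ‖g‖ * ‖c ^ (n + 1)‖ := norm_mul₃_le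
      _ ≤ ‖star c‖ ^ (n + 1) * ‖g‖ * ‖c‖ ^ (n + 1) := by
        gcongr <;> exact norm_pow_le' _ n.succ_pos
      _ = (‖c‖ * ‖c‖) ^ (n + 1) * ‖g‖ := by rw [norm_star, mul_pow]; ring
  have hsum : Summable fun n : ℕ => star c ^ n * g * c ^ n :=
    (summable_nat_add_iff 1).1 <| .of_norm_bounded
      ((summable_nat_add_iff 1).2 <| (summable_geometric_of_lt_one (by positivity)
        (mul_lt_one_of_nonneg_of_lt_one_left (norm_nonneg c) hc hc.le)).mul_right _) hbound
  refine ⟨∑' n : ℕ, star c ^ n * g * c ^ n, ?_, ?_, ?_⟩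
  · refine tsum_nonneg fun n => ?_
    rw [← star_pow]
    exact star_left_conjugate_nonneg hg _
  · rw [hsum.map_tsum φ (continuous_starAlgHom φ)]
    simp [hφ]
  · rw [← hsum.tsum_mul_left, ← (hsum.mul_left _).tsum_mul_right,
      hsum.tsum_eq_zero_add]
    simp [pow_succ' (star c), pow_succ c, mul_assoc]

theorem map_posPart (φ : B →⋆ₐ[ℂ] D) {z : B} (hz : IsSelfAdjoint z) : φ z⁺ = (φ z)⁺ := by
  rw [CFC.posPart_def, CFC.posPart_def]
  exact NonUnitalStarAlgHomClass.map_cfcₙ φ _ z (by fun_prop) (by simp) (continuous_starAlgHom φ)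
    hz (hz.map φ)

theorem IsPeripheralSplitting.exists_nonneg_sub_conj_eq [PartialOrder B] [StarOrderedRing B]
    {a p m g : B} (h : IsPeripheralSplitting a p m) (hg : 0 ≤ g) (φ : B →⋆ₐ[ℂ] D)
    (hφ : φ g = 0) :
    ∃ k : B, 0 ≤ k ∧ φ k = 0 ∧ k - a * k * a = (1 - p - m) * g * (1 - p - m) := by
  obtain ⟨q, hq⟩ : ∃ q, q = 1 - p - m := ⟨_, rfl⟩
  have hqs : IsSelfAdjoint q := hq ▸ h.isSelfAdjoint_compl
  have hqq : q * q = q := hq ▸ h.compl_mul_compl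
  have hnorm : ‖a * q‖ < 1 := hq ▸ h.norm_mul_compl_lt_one
  rw [← hq]
  obtain ⟨k, hk0, hφk, hk⟩ := exists_nonneg_sub_star_conj_eq hnorm (hqs.conjugate_nonneg hg)
    φ (by rw [map_mul, map_mul, hφ, mul_zero, zero_mul])
  have hstar : star (a * q) * k * (a * q) = q * (a * k * a) * q := by
    rw [star_mul, h.isSelfAdjoint.star_eq, hqs.star_eq]
    simp only [mul_assoc]
  have hcorner : q * k * q = k := by
    have hk' : k = q * (g + a * k * a) * q := by
      rw [mul_add, add_mul, ← hstar, ← hk, sub_add_cancel]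
    calc q * k * q = (q * q) * (g + a * k * a) * (q * q) := by
          conv_lhs => rw [hk']
          simp only [mul_assoc]
      _ = k := by rw [hqq, ← hk']
  have hcomm : q * (a * k * a) * q = a * k * a := by
    rw [hq, ← h.conj_compl_conj, ← hq, hcorner]
  exact ⟨k, hk0, hφk, by rw [← hk, hstar, hcomm]⟩

theorem IsPeripheralSplitting.exists_lift [PartialOrder B] [StarOrderedRing B] [PartialOrder D]
    [StarOrderedRing D] {a p m : B} (h : IsPeripheralSplitting a p m) (φ : B →⋆ₐ[ℂ] D) {w : B}
    (hw : IsSelfAdjoint w) (hle : φ a * φ w * φ a ≤ φ w) :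
    ∃ v : B, φ v = φ w ∧ a * v * a ≤ v ∧ pinching p m w ≤ v := by
  have hdefect : IsSelfAdjoint (a * w * a - w) := by
    simpa only [h.isSelfAdjoint.star_eq] using (hw.conjugate a).sub hw
  have hφdefect : φ (a * w * a - w)⁺ = 0 := by
    rw [map_posPart φ hdefect, CFC.posPart_eq_zero_iff _ (hdefect.map φ)]
    simpa only [map_sub, map_mul, sub_nonpos] using hle
  obtain ⟨k, hk0, hφk, hk⟩ :=
    h.exists_nonneg_sub_conj_eq (CFC.posPart_nonneg (a * w * a - w)) φ hφdefect
  refine ⟨pinching p m w + k, ?_, ?_, le_add_of_nonneg_right hk0⟩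
  · rw [map_add, hφk, add_zero, map_pinching, (h.map φ).pinching_eq_self (hw.map φ) hle]
  · have hsub : pinching p m w + k - a * (pinching p m w + k) * a =
        (1 - p - m) * ((a * w * a - w)⁺ - (a * w * a - w)) * (1 - p - m) := calc
      _ = (pinching p m w - a * pinching p m w * a) + (k - a * k * a) := by
        rw [mul_add, add_mul]
        abel
      _ = _ := by
        rw [h.pinching_sub_conj, hk, ← add_mul, ← mul_add]
        congr 2
        abel
    rw [← sub_nonneg, hsub]
    exact h.isSelfAdjoint_compl.conjugate_nonneg (sub_nonneg.2 (CFC.le_posPart hdefect))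

theorem exists_pos_algebraMap_le_s9 [PartialOrder B] [StarOrderedRing B] {b : B}
    (hb : IsStrictlyPositive b) : ∃ δ : ℝ, 0 < δ ∧ algebraMap ℝ B δ ≤ b := by
  cases subsingleton_or_nontrivial B
  · exact ⟨1, one_pos, (Subsingleton.elim _ _).le⟩
  · exact (CFC.exists_pos_algebraMap_le_iff hb.isSelfAdjoint).2 fun _ hx => hb.spectrum_pos hx

theorem IsPeripheralSplitting.isStrictlyPositive_pinching [PartialOrder B] [StarOrderedRing B]
    {a p m w : B} (h : IsPeripheralSplitting a p m) (hw : IsStrictlyPositive w) :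
    IsStrictlyPositive (pinching p m w) := by
  obtain ⟨δ, hδ, hδw⟩ := exists_pos_algebraMap_le_s9 hw
  refine .of_le (isStrictlyPositive_algebraMap hδ) ?_
  rw [← h.pinching_algebraMap δ]
  exact h.pinching_mono hδw

theorem exists_isStrictlyPositive_lift_s9 [PartialOrder B] [StarOrderedRing B] [PartialOrder D]
    [StarOrderedRing D] {φ : B →⋆ₐ[ℂ] D} (hφ : Function.Surjective φ) {b : D}
    (hb : IsStrictlyPositive b) : ∃ w : B, IsStrictlyPositive w ∧ φ w = b := by
  obtain ⟨δ, hδ, hδb⟩ := exists_pos_algebraMap_le_s9 hb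
  obtain ⟨x, hx⟩ := CStarAlgebra.nonneg_iff_eq_star_mul_self.1 (sub_nonneg.2 hδb)
  obtain ⟨y, rfl⟩ := hφ x
  refine ⟨algebraMap ℝ B δ + star y * y, ?_, ?_⟩
  · exact .of_le (isStrictlyPositive_algebraMap hδ)
      (le_add_of_nonneg_right (star_mul_self_nonneg y))
  · have hφδ : φ (algebraMap ℝ B δ) = algebraMap ℝ D δ :=
      AlgHomClass.commutes (φ.restrictScalars ℝ) δ
    rw [map_add, map_mul, map_star, ← hx, hφδ, add_sub_cancel]

theorem norm_conj_le_one_iff [PartialOrder B] [StarOrderedRing B] (s : Bˣ) (a : B) :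
    ‖(s : B) * a * (↑s⁻¹ : B)‖ ≤ 1 ↔ star a * (star (s : B) * s) * a ≤ star (s : B) * s := by
  obtain ⟨z, hz⟩ : ∃ z : B, z = s * a * (↑s⁻¹ : B) := ⟨_, rfl⟩
  have hnorm : ‖z‖ ≤ 1 ↔ star z * z ≤ 1 := by
    rw [← CStarAlgebra.norm_le_one_iff_of_nonneg _ (star_mul_self_nonneg z),
      CStarRing.norm_star_mul_self, ← sq, sq_le_one_iff₀ (norm_nonneg z)]
  have hzs : z * s = s * a := by rw [hz, Units.inv_mul_cancel_right]
  have hconj : star (s : B) * (1 - star z * z) * s =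
      star (s : B) * s - star a * (star (s : B) * s) * a := by
    calc star (s : B) * (1 - star z * z) * s
        = star (s : B) * s - star (z * s) * (z * s) := by
          simp only [star_mul, mul_sub, sub_mul, mul_one, mul_assoc]
      _ = star (s : B) * s - star a * (star (s : B) * s) * a := by
        rw [hzs, star_mul]; simp only [mul_assoc]
  rw [← hz, hnorm, ← sub_nonneg, ← s.isUnit.star_left_conjugate_nonneg_iff, hconj, sub_nonneg]

theorem exists_isPeripheralSplitting {a : B} (ha : IsSelfAdjoint a)
    (hfin : (spectrum ℝ a).Finite) (hle : ∀ τ ∈ spectrum ℝ a, |τ| ≤ 1) :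
    ∃ p m, IsPeripheralSplitting a p m := by
  have hcont : ∀ f : ℝ → ℝ, ContinuousOn f (spectrum ℝ a) := hfin.continuousOn
  have hproj : ∀ c : ℝ, IsStarProjection (cfc (fun x : ℝ => if x = c then 1 else 0) a) := fun c =>
    { isIdempotentElem := by
        rw [IsIdempotentElem, ← cfc_mul _ _ a (hcont _) (hcont _)]
        exact cfc_congr fun x _ => by split_ifs <;> simp
      isSelfAdjoint := cfc_predicate _ _ }
  have hmul : ∀ c : ℝ, a * cfc (fun x : ℝ => if x = c then 1 else 0) a =
      c • cfc (fun x : ℝ => if x = c then 1 else 0) a := fun c => by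
    conv_lhs => enter [1]; rw [← cfc_id' ℝ a]
    rw [← cfc_mul _ _ a (hcont _) (hcont _), ← cfc_smul _ _ a (hcont _)]
    refine cfc_congr fun x _ => ?_
    by_cases hx : x = c <;> simp [hx]
  refine ⟨cfc (fun x : ℝ => if x = 1 then 1 else 0) a, cfc (fun x : ℝ => if x = -1 then 1 else 0) a,
    ha, hproj 1, hproj (-1), by simpa using hmul 1, by simpa using hmul (-1), ?_⟩
  conv_lhs => enter [1, 1]; rw [← cfc_id' ℝ a]
  rw [← cfc_const_one ℝ a, ← cfc_sub _ _ a (hcont _) (hcont _), ← cfc_sub _ _ a (hcont _) (hcont _),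
    ← cfc_mul _ _ a (hcont _) (hcont _)]
  refine norm_cfc_lt one_pos fun x hx => ?_
  obtain rfl | h1 := eq_or_ne x 1
  · norm_num
  obtain rfl | h2 := eq_or_ne x (-1)
  · norm_num
  · have : |x| ≠ 1 := fun h => (eq_or_eq_neg_of_abs_eq h).elim h1 h2
    simpa [h1, h2] using lt_of_le_of_ne (hle x hx) this

theorem IsPeripheralSplitting.exists_units_lift_norm_conj_le_one [PartialOrder B]
    [StarOrderedRing B] [PartialOrder D] [StarOrderedRing D] {φ : B →⋆ₐ[ℂ] D}
    (hφ : Function.Surjective φ) {a p m : B} (h : IsPeripheralSplitting a p m) {r : Dˣ}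
    (hr : 0 ≤ (r : D)) (hra : ‖(r : D) * φ a * (↑r⁻¹ : D)‖ ≤ 1) :
    ∃ s : Bˣ, φ s = r ∧ ‖(s : B) * a * (↑s⁻¹ : B)‖ ≤ 1 := by
  have hr' : star (r : D) = r := (IsSelfAdjoint.of_nonneg hr).star_eq
  rw [norm_conj_le_one_iff, hr', ← map_star, h.isSelfAdjoint.star_eq] at hra
  have hrr : IsStrictlyPositive ((r : D) * r) :=
    (r.isUnit.mul r.isUnit).isStrictlyPositive (IsSelfAdjoint.of_nonneg hr).mul_self_nonneg
  obtain ⟨w, hw, hφw⟩ := exists_isStrictlyPositive_lift_s9 (b := (r : D) * r) hφ hrr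
  obtain ⟨v, hφv, hav, hwv⟩ := h.exists_lift φ hw.isSelfAdjoint (by rwa [hφw])
  have hv : IsStrictlyPositive v := .of_le (h.isStrictlyPositive_pinching hw) hwv
  have hsqrt : CFC.sqrt v * CFC.sqrt v = v := CFC.sqrt_mul_sqrt_self v hv.nonneg
  obtain ⟨s, hs⟩ : IsUnit (CFC.sqrt v) := hv.isUnit_cfcSqrt
  have hφs : φ s = r := by
    rw [hs, ← CFC.sqrt_mul_self (φ (CFC.sqrt v)) (map_nonneg φ (CFC.sqrt_nonneg v)),
      ← map_mul, hsqrt, hφv, hφw, CFC.sqrt_mul_self (r : D) hr]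
  refine ⟨s, hφs, ?_⟩
  rwa [norm_conj_le_one_iff, hs, (CFC.sqrt_nonneg v).isSelfAdjoint.star_eq, hsqrt,
    h.isSelfAdjoint.star_eq]

theorem norm_conj_smul {B : Type*} [SeminormedRing B] [NormedAlgebra ℝ B] (c : ℝ) (s : Bˣ)
    (a : B) :
    ‖(s : B) * (c • a) * (↑s⁻¹ : B)‖ = |c| * ‖(s : B) * a * (↑s⁻¹ : B)‖ := by
  rw [mul_smul_comm, smul_mul_assoc, norm_smul, Real.norm_eq_abs]

theorem exists_units_lift_norm_conj_le [PartialOrder B] [StarOrderedRing B] [PartialOrder D]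
    [StarOrderedRing D] {φ : B →⋆ₐ[ℂ] D} (hφ : Function.Surjective φ) {a : B}
    (ha : IsSelfAdjoint a) (hfin : (spectrum ℝ a).Finite) {C : ℝ} (hC : 0 < C)
    (hle : ∀ τ ∈ spectrum ℝ a, |τ| ≤ C) {r : Dˣ} (hr : 0 ≤ (r : D))
    (hra : ‖(r : D) * φ a * (↑r⁻¹ : D)‖ ≤ C) :
    ∃ s : Bˣ, φ s = r ∧ ‖(s : B) * a * (↑s⁻¹ : B)‖ ≤ C := by
  have hscale : ∀ y : ℝ, |C⁻¹| * y ≤ 1 ↔ y ≤ C := fun y => by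
    rw [abs_of_pos (inv_pos.2 hC), inv_mul_le_iff₀ hC, mul_one]
  have hspec : spectrum ℝ (C⁻¹ • a) = C⁻¹ • spectrum ℝ a :=
    spectrum.unit_smul_eq_smul a (Units.mk0 C⁻¹ (inv_ne_zero hC.ne'))
  obtain ⟨p, m, h⟩ : ∃ p m, IsPeripheralSplitting (C⁻¹ • a) p m := by
    refine exists_isPeripheralSplitting (.smul (.all _) ha) (hspec ▸ hfin.smul_set) ?_
    rw [hspec]
    rintro _ ⟨τ, hτ, rfl⟩
    simp only [smul_eq_mul, abs_mul]
    exact (hscale _).2 (hle τ hτ)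
  have hφa : φ (C⁻¹ • a) = C⁻¹ • φ a := map_smul (φ.restrictScalars ℝ) C⁻¹ a
  obtain ⟨s, hs, hsa⟩ := h.exists_units_lift_norm_conj_le_one hφ hr
    (by rw [hφa, norm_conj_smul]; exact (hscale _).2 hra)
  exact ⟨s, hs, (hscale _).1 (norm_conj_smul C⁻¹ s a ▸ hsa)⟩

end Splitting

/-! ### Lifting self-adjoint elements with finite spectrum -/

section Spectrum

theorem exists_continuousOn_retraction {X : Type*} [TopologicalSpace X] [T2Space X] {T : Set X}
    (hT : T.Finite) :
    ∃ (U : Set X) (f : X → X), IsOpen U ∧ T ⊆ U ∧ ContinuousOn f U ∧ Set.MapsTo f U T ∧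
      Set.EqOn f id T := by
  obtain ⟨V, hV, hdisj⟩ := hT.t2_separation
  have hchoice : ∀ x, ∃ y, ∀ z ∈ T, x ∈ V z → y = z := fun x => by
    by_cases h : ∃ z ∈ T, x ∈ V z
    · obtain ⟨y, hy, hxy⟩ := h
      exact ⟨y, fun z hz hxz => hdisj.elim_set hy hz x hxy hxz⟩
    · exact ⟨x, fun z hz hxz => (h ⟨z, hz, hxz⟩).elim⟩
  choose f hf using hchoice
  refine ⟨⋃ z ∈ T, V z, f, isOpen_biUnion fun z _ => (hV z).2,
    fun z hz => Set.mem_biUnion hz (hV z).1, fun x hx => ?_, fun x hx => ?_,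
    fun z hz => hf z z hz (hV z).1⟩
  · obtain ⟨z, hz, hxz⟩ := Set.mem_iUnion₂.1 hx
    refine ((continuousAt_const (y := z)).congr ?_).continuousWithinAt
    filter_upwards [(hV z).2.mem_nhds hxz] with y hy using (hf y z hz hy).symm
  · obtain ⟨z, hz, hxz⟩ := Set.mem_iUnion₂.1 hx
    rwa [hf x z hz hxz]

variable {A D ι : Type*} {B : ι → Type*} [CStarAlgebra A] [CStarAlgebra D]
  [∀ i, CStarAlgebra (B i)]

theorem exists_spectrum_subset_of_isOpen {ρ : A →⋆ₐ[ℂ] D} {π : ∀ i, A →⋆ₐ[ℂ] B i}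
    (hlim : ∀ a, ρ a = 0 → ∀ ε > 0, ∃ i, ‖π i a‖ < ε) {a : A} (ha : IsSelfAdjoint a)
    {U : Set ℝ} (hU : IsOpen U) (haU : spectrum ℝ (ρ a) ⊆ U) :
    ∃ i, spectrum ℝ (π i a) ⊆ U := by
  obtain ⟨f, hf0, hf1, -⟩ := exists_continuous_zero_one_of_isClosed
    (spectrum.isClosed (𝕜 := ℝ) (ρ a)) hU.isClosed_compl
    (Set.disjoint_compl_right_iff_subset.2 haU)
  have hρf : ρ (cfc f a) = 0 := by
    rw [StarAlgHomClass.map_cfc ρ f a (by fun_prop) (continuous_starAlgHom ρ) ha (ha.map ρ),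
      ← cfc_const_zero ℝ (ρ a)]
    exact cfc_congr hf0
  obtain ⟨i, hi⟩ := hlim _ hρf 1 one_pos
  rw [StarAlgHomClass.map_cfc (π i) f a (by fun_prop) (continuous_starAlgHom _) ha
    (ha.map (π i))] at hi
  refine ⟨i, fun x hx => by_contra fun hxU => hi.not_ge ?_⟩
  have := norm_apply_le_norm_cfc f (π i a) hx (by fun_prop) (ha.map (π i))
  rwa [hf1 hxU, Pi.one_apply, norm_one] at this

theorem exists_isSelfAdjoint_lift_s9 {A D : Type*} [Ring A] [StarRing A] [Algebra ℂ A]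
    [StarModule ℂ A] [Ring D] [StarRing D] [Algebra ℂ D] [StarModule ℂ D] {ρ : A →⋆ₐ[ℂ] D}
    (hρ : Function.Surjective ρ) {d : D} (hd : IsSelfAdjoint d) :
    ∃ a, IsSelfAdjoint a ∧ ρ a = d := by
  obtain ⟨a, rfl⟩ := hρ d
  exact ⟨realPart a, (realPart a).2, by rw [map_realPart, hd.coe_realPart]⟩

theorem exists_isSelfAdjoint_lift_spectrum_subset {ρ : A →⋆ₐ[ℂ] D} {π : ∀ i, A →⋆ₐ[ℂ] B i}
    {φ : ∀ i, B i →⋆ₐ[ℂ] D} (hρ : Function.Surjective ρ) (hφ : ∀ i a, φ i (π i a) = ρ a)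
    (hlim : ∀ a, ρ a = 0 → ∀ ε > 0, ∃ i, ‖π i a‖ < ε) {d : D} (hd : IsSelfAdjoint d)
    (hfin : (spectrum ℝ d).Finite) :
    ∃ i, ∃ b : B i, IsSelfAdjoint b ∧ spectrum ℝ b ⊆ spectrum ℝ d ∧ φ i b = d := by
  obtain ⟨U, f, hU, hdU, hfU, hmaps, hfix⟩ := exists_continuousOn_retraction hfin
  obtain ⟨a, ha, rfl⟩ := exists_isSelfAdjoint_lift_s9 hρ hd
  obtain ⟨i, hi⟩ := exists_spectrum_subset_of_isOpen hlim ha hU hdU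
  have hfi := hfU.mono hi
  refine ⟨i, cfc f (π i a), cfc_predicate _ _, ?_, ?_⟩
  · rw [cfc_map_spectrum f _ (ha.map (π i)) hfi]
    rintro _ ⟨x, hx, rfl⟩
    exact hmaps (hi hx)
  · rw [StarAlgHomClass.map_cfc (φ i) f _ hfi (continuous_starAlgHom _) (ha.map (π i))
      ((ha.map (π i)).map (φ i)), hφ, cfc_congr hfix, cfc_id ℝ (ρ a)]

end Spectrum

/-! ### Similarity to self-adjoint elements -/

section Similarity

section Algebra

theorem aeval_units_conj {R A : Type*} [CommSemiring R] [Semiring A] [Algebra R A] (u : Aˣ)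
    (x : A) (p : R[X]) : aeval (u * x * (↑u⁻¹ : A)) p = u * aeval x p * (↑u⁻¹ : A) := by
  induction p using Polynomial.induction_on' with
  | add p q hp hq => simp only [map_add, add_mul, mul_add, hp, hq]
  | monomial n c =>
    rw [aeval_monomial, aeval_monomial, Units.conj_pow, ← mul_assoc, ← mul_assoc, ← mul_assoc,
      Algebra.commutes]

variable {F A ι : Type*} [Field F] [Ring A] [Algebra F A] {s : Finset ι} {t : ι → F} {x : A}

theorem spectrum_subset_image_of_aeval_nodal_eq_zero (hx : aeval x (Lagrange.nodal s t) = 0) :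
    spectrum F x ⊆ t '' s := by
  cases subsingleton_or_nontrivial A
  · simp
  intro c hc
  have h0 := spectrum.subset_polynomial_aeval x (Lagrange.nodal s t) ⟨c, hc, rfl⟩
  dsimp only at h0
  rw [hx, spectrum.zero_eq, Set.mem_singleton_iff, Lagrange.eval_nodal,
    Finset.prod_eq_zero_iff] at h0
  obtain ⟨i, hi, hci⟩ := h0
  exact ⟨i, hi, (sub_eq_zero.1 hci).symm⟩

variable [DecidableEq ι]

theorem mul_aeval_basis (hx : aeval x (Lagrange.nodal s t) = 0) {i : ι} (hi : i ∈ s) :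
    x * aeval x (Lagrange.basis s t i) = t i • aeval x (Lagrange.basis s t i) := by
  have h0 : aeval x ((X - C (t i)) * Lagrange.basis s t i) = 0 := by
    rw [Lagrange.basis_eq_prod_sub_inv_mul_nodal_div hi, ← Lagrange.nodal_erase_eq_nodal_div hi,
      mul_left_comm, ← Lagrange.nodal_eq_mul_nodal_erase hi, map_mul, hx, mul_zero]
  rwa [map_mul, map_sub, aeval_X, aeval_C, sub_mul, sub_eq_zero, ← Algebra.smul_def] at h0

theorem sum_aeval_basis (ht : Set.InjOn t s) (hx : aeval x (Lagrange.nodal s t) = 0) :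
    ∑ i ∈ s, aeval x (Lagrange.basis s t i) = 1 := by
  obtain rfl | hs := s.eq_empty_or_nonempty
  · rw [Lagrange.nodal_empty, map_one] at hx
    rw [Finset.sum_empty, hx]
  · rw [← map_sum, Lagrange.sum_basis ht hs, map_one]

end Algebra

theorem sum_mul_star_sum_le {R ι : Type*} [NonUnitalRing R] [StarRing R] [PartialOrder R]
    [StarOrderedRing R] (s : Finset ι) (f : ι → R) :
    (∑ i ∈ s, f i) * star (∑ i ∈ s, f i) ≤ s.card • ∑ i ∈ s, f i * star (f i) := by
  classical
  induction s using Finset.induction_on with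
  | empty => simp
  | insert j s hj ih =>
    have hsq : ∑ i ∈ s, (f i - f j) * star (f i - f j) =
        ∑ i ∈ s, f i * star (f i) + s.card • (f j * star (f j)) -
          (∑ i ∈ s, f i) * star (f j) - f j * star (∑ i ∈ s, f i) := by
      simp only [star_sub, sub_mul, mul_sub, Finset.sum_sub_distrib, Finset.sum_const,
        Finset.sum_mul, star_sum, Finset.mul_sum]
      abel
    have hnonneg : 0 ≤ ∑ i ∈ s, (f i - f j) * star (f i - f j) :=
      Finset.sum_nonneg fun i _ => mul_star_self_nonneg _
    rw [Finset.sum_insert hj, Finset.sum_insert hj, Finset.card_insert_of_notMem hj, ← sub_nonneg]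
    calc 0 ≤ (s.card • ∑ i ∈ s, f i * star (f i) - (∑ i ∈ s, f i) * star (∑ i ∈ s, f i)) +
          ∑ i ∈ s, (f i - f j) * star (f i - f j) := add_nonneg (sub_nonneg.2 ih) hnonneg
      _ = _ := by
        rw [hsq]
        simp only [star_add, add_mul, mul_add, succ_nsmul, smul_add]
        abel

variable {D : Type*} [CStarAlgebra D] [PartialOrder D] [StarOrderedRing D] {x : D}

theorem exists_isStrictlyPositive_mul_eq_mul_star {ι : Type*} {s : Finset ι} {t : ι → ℝ}
    (ht : Set.InjOn t s) (hx : aeval x (Lagrange.nodal s t) = 0) :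
    ∃ v : D, IsStrictlyPositive v ∧ x * v = v * star x := by
  classical
  set L : ι → D := fun i => aeval x (Lagrange.basis s t i) with hL
  have hxL : ∀ i ∈ s, x * L i = t i • L i := fun i hi => mul_aeval_basis hx hi
  have hnonneg : 0 ≤ ∑ i ∈ s, L i * star (L i) :=
    Finset.sum_nonneg fun i _ => mul_star_self_nonneg _
  have hunit : IsUnit (∑ i ∈ s, L i * star (L i)) := by
    have hle : 1 ≤ (s.card : D) * ∑ i ∈ s, L i * star (L i) := by
      simpa only [hL, sum_aeval_basis ht hx, star_one, mul_one, nsmul_eq_mul]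
        using sum_mul_star_sum_le s L
    exact ((Nat.cast_commute _ _).isUnit_mul_iff.1
      (IsStrictlyPositive.of_le isStrictlyPositive_one hle).isUnit).2
  refine ⟨∑ i ∈ s, L i * star (L i), hunit.isStrictlyPositive hnonneg, ?_⟩
  rw [Finset.mul_sum, Finset.sum_mul]
  refine Finset.sum_congr rfl fun i hi => ?_
  rw [← mul_assoc, hxL i hi, mul_assoc, ← star_mul, hxL i hi, star_smul, star_trivial (t i),
    smul_mul_assoc, mul_smul_comm]

theorem exists_units_isSelfAdjoint_conj {v : D} (hv : IsStrictlyPositive v)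
    (hxv : x * v = v * star x) :
    ∃ r : Dˣ, 0 ≤ (r : D) ∧ IsSelfAdjoint ((↑r⁻¹ : D) * x * r) := by
  obtain ⟨r, hr⟩ : IsUnit (CFC.sqrt v) := hv.isUnit_cfcSqrt
  have hr0 : 0 ≤ (r : D) := hr ▸ CFC.sqrt_nonneg v
  have hrr : (r : D) * r = v := by rw [hr, CFC.sqrt_mul_sqrt_self v hv.nonneg]
  have hrs : star (r : D) = r := (IsSelfAdjoint.of_nonneg hr0).star_eq
  have hrs' : star (↑r⁻¹ : D) = ↑r⁻¹ := by
    rw [← Units.coe_star_inv, Units.inv_unique]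
    exact hrs
  refine ⟨r, hr0, ?_⟩
  calc star ((↑r⁻¹ : D) * x * r) = ↑r⁻¹ * (((r : D) * r) * star x) * ↑r⁻¹ := by
        simp [hrs, hrs', mul_assoc]
    _ = ↑r⁻¹ * (x * (r * r)) * ↑r⁻¹ := by rw [hrr, hxv]
    _ = ↑r⁻¹ * x * r := by simp [mul_assoc]

theorem aeval_eq_zero_of_spectrum {A : Type*} [CStarAlgebra A] {a : A} (ha : IsSelfAdjoint a)
    {p : ℝ[X]} (h : ∀ c ∈ spectrum ℝ a, p.eval c = 0) : aeval a p = 0 := by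
  rw [← cfc_polynomial p a ha, ← cfc_const_zero ℝ a]
  exact cfc_congr h

end Similarity

/-! ### The lifting theorem -/

section Limit

variable {A D ι κ : Type*} {B : ι → Type*} [CStarAlgebra A] [CStarAlgebra D]
  [∀ i, CStarAlgebra (B i)]

theorem abs_le_norm_of_mem_spectrum {x : D} {τ : ℝ} (hτ : τ ∈ spectrum ℝ x) : |τ| ≤ ‖x‖ := by
  cases subsingleton_or_nontrivial D
  · simp at hτ
  · exact spectrum.norm_le_norm_of_mem hτ

theorem exists_lift_of_aeval_nodal_eq_zero {ρ : A →⋆ₐ[ℂ] D} {π : ∀ i, A →⋆ₐ[ℂ] B i}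
    {φ : ∀ i, B i →⋆ₐ[ℂ] D} (hρ : Function.Surjective ρ) (hφ : ∀ i a, φ i (π i a) = ρ a)
    (hlim : ∀ a, ρ a = 0 → ∀ ε > 0, ∃ i, ‖π i a‖ < ε) {s : Finset κ} {t : κ → ℝ}
    (ht : Set.InjOn t s) {C : ℝ} (hC : 0 < C) {x : D} (hx : aeval x (Lagrange.nodal s t) = 0)
    (hxC : ‖x‖ ≤ C) :
    ∃ i, ∃ y : B i, φ i y = x ∧ aeval y (Lagrange.nodal s t) = 0 ∧ ‖y‖ ≤ C := by
  let _ := CStarAlgebra.spectralOrder D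
  have _ := CStarAlgebra.spectralOrderedRing D
  obtain ⟨v, hv, hxv⟩ := exists_isStrictlyPositive_mul_eq_mul_star ht hx
  obtain ⟨r, hr, ha⟩ := exists_units_isSelfAdjoint_conj hv hxv
  have hspec : spectrum ℝ ((↑r⁻¹ : D) * x * r) = spectrum ℝ x := spectrum.units_conjugate'
  have hroots : spectrum ℝ x ⊆ t '' s := spectrum_subset_image_of_aeval_nodal_eq_zero hx
  have hfin : (spectrum ℝ x).Finite := (s.finite_toSet.image t).subset hroots
  obtain ⟨i, b, hb, hbx, hφb⟩ :=
    exists_isSelfAdjoint_lift_spectrum_subset hρ hφ hlim ha (hspec ▸ hfin)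
  rw [hspec] at hbx
  have hx_eq : (r : D) * φ i b * (↑r⁻¹ : D) = x := by
    rw [hφb]
    simp [mul_assoc]
  let _ := CStarAlgebra.spectralOrder (B i)
  have _ := CStarAlgebra.spectralOrderedRing (B i)
  obtain ⟨u, hu, huC⟩ := exists_units_lift_norm_conj_le
    (.of_comp (g := π i) (by simpa only [Function.comp_def, hφ] using hρ)) hb (hfin.subset hbx) hC
    (fun τ hτ => (abs_le_norm_of_mem_spectrum (hbx hτ)).trans hxC) hr (hx_eq.symm ▸ hxC)
  have hu_inv : φ i ↑u⁻¹ = ↑r⁻¹ := by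
    rw [← Units.ext (by exact hu : (Units.map (φ i : B i →* D) u : D) = r)]
    rfl
  refine ⟨i, u * b * (↑u⁻¹ : B i), ?_, ?_, huC⟩
  · rw [map_mul, map_mul, hu, hu_inv, hx_eq]
  · rw [aeval_units_conj, aeval_eq_zero_of_spectrum hb fun τ hτ => ?_, mul_zero, zero_mul]
    obtain ⟨k, hk, rfl⟩ := hroots (hbx hτ)
    exact Lagrange.eval_nodal_at_node hk

theorem exists_isTwoSided_coe_eq_closure_iUnion {R : Type*} [Ring R] [TopologicalSpace R]
    [IsTopologicalRing R] [Nonempty ι] {I : ι → TwoSidedIdeal R} (hI : Directed (· ≤ ·) I) :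
    ∃ J : Ideal R, J.IsTwoSided ∧ (J : Set R) = closure (⋃ i, (I i : Set R)) := by
  have hdir : Directed (· ≤ ·) fun i => (I i).asIdeal :=
    hI.mono_comp _ fun _ _ h => TwoSidedIdeal.asIdeal.monotone h
  have hcoe : ((⨆ i, (I i).asIdeal).closure : Set R) = closure (⋃ i, (I i : Set R)) := by
    rw [Ideal.coe_closure, Submodule.coe_iSup_of_directed _ hdir]
    rfl
  refine ⟨(⨆ i, (I i).asIdeal).closure, ⟨fun {x} c hx => ?_⟩, hcoe⟩
  rw [← SetLike.mem_coe, hcoe] at hx ⊢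
  refine map_mem_closure (f := (· * c)) (continuous_mul_const c) hx fun y hy => ?_
  obtain ⟨i, hi⟩ := Set.mem_iUnion.1 hy
  exact Set.mem_iUnion.2 ⟨i, (I i).mul_mem_right _ _ hi⟩

theorem map_aeval_real {A D : Type*} [Ring A] [StarRing A] [Algebra ℂ A] [Ring D] [StarRing D]
    [Algebra ℂ D] (φ : A →⋆ₐ[ℂ] D) (p : ℝ[X]) (a : A) : φ (aeval a p) = aeval (φ a) p :=
  (aeval_algHom_apply ((φ : A →ₐ[ℂ] D).restrictScalars ℝ) a p).symm

theorem exists_norm_quotientMk_lt {J : Ideal A} {K : ι → Ideal A} [J.IsTwoSided]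
    [∀ i, (K i).IsTwoSided] [IsClosed (J : Set A)] [∀ i, IsClosed (K i : Set A)]
    (hJ : (J : Set A) = closure (⋃ i, (K i : Set A))) {a : A} (ha : quotientMk J a = 0) {ε : ℝ}
    (hε : 0 < ε) : ∃ i, ‖quotientMk (K i) a‖ < ε := by
  rw [quotientMk_eq_zero_iff, ← SetLike.mem_coe, hJ, Metric.mem_closure_iff] at ha
  obtain ⟨b, hb, hab⟩ := ha ε hε
  obtain ⟨i, hi⟩ := Set.mem_iUnion.1 hb
  exact ⟨i, (norm_quotientMk (K i) a).trans_lt ((Metric.infDist_le_dist_of_mem hi).trans_lt hab)⟩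

theorem stmt_9_general (I : ι → TwoSidedIdeal A) (hIclosed : ∀ i, IsClosed (I i : Set A))
    (hIdir : Directed (· ≤ ·) I) (s : Finset κ) (t : κ → ℝ) (ht : Set.InjOn t s) (C : ℝ)
    (hC : 0 < C) (X : A) (hX0 : aeval X (Lagrange.nodal s t) ∈ closure (⋃ i, (I i : Set A)))
    (hX1 : Metric.infDist X (closure (⋃ i, (I i : Set A))) ≤ C) :
    ∃ (i : ι) (Y : A), Y - X ∈ closure (⋃ i, (I i : Set A)) ∧
      aeval Y (Lagrange.nodal s t) ∈ (I i : Set A) ∧ Metric.infDist Y (I i : Set A) ≤ C := by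
  have : Nonempty ι := (Set.nonempty_iUnion.1 (closure_nonempty_iff.1 ⟨_, hX0⟩)).nonempty
  obtain ⟨J, _, hJ⟩ := exists_isTwoSided_coe_eq_closure_iUnion hIdir
  have : IsClosed (J : Set A) := hJ ▸ isClosed_closure
  have : ∀ i, IsClosed ((I i).asIdeal : Set A) := hIclosed
  have hle : ∀ i, (I i).asIdeal ≤ J := fun i => by
    rw [← SetLike.coe_subset_coe, hJ]
    exact (Set.subset_iUnion (fun i => (I i : Set A)) i).trans subset_closure
  rw [← hJ] at hX0 hX1 ⊢
  obtain ⟨i, y, hyX, hy0, hyC⟩ := exists_lift_of_aeval_nodal_eq_zero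
    (φ := fun i => quotientFactor (hle i)) (quotientMk_surjective J)
    (fun i a => quotientFactor_quotientMk (hle i) a)
    (fun a ha ε hε => exists_norm_quotientMk_lt hJ ha hε) ht hC (x := quotientMk J X)
    (by rwa [← map_aeval_real, quotientMk_eq_zero_iff]) (by rwa [norm_quotientMk])
  obtain ⟨Y, rfl⟩ := quotientMk_surjective _ y
  rw [quotientFactor_quotientMk, ← sub_eq_zero, ← map_sub, quotientMk_eq_zero_iff] at hyX
  rw [← map_aeval_real, quotientMk_eq_zero_iff] at hy0
  rw [norm_quotientMk] at hyC
  exact ⟨i, Y, hyX, hy0, hyC⟩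

end Limit

theorem list_prod_sub_eq_aeval_nodal {A : Type*} [Ring A] [Algebra ℂ A] {n : ℕ} (t : Fin n → ℝ)
    (x : A) :
    (List.ofFn fun i => x - (t i : ℂ) • 1).prod = aeval x (Lagrange.nodal Finset.univ t) := by
  rw [Lagrange.nodal, ← List.prod_ofFn, map_list_prod, List.map_ofFn]
  congr 2
  ext i
  simp [Algebra.algebraMap_eq_smul_one]

/-- Let `p(t) = (t−t₁)⋯(t−tₙ)` with distinct real roots and `C > 0`. The
relation `p(x) = 0, ‖x‖ ≤ C` is stable (its universal C*-algebra is semiprojective): for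
every C*-algebra `A` and increasing chain of closed two-sided ideals `I₁ ⊆ I₂ ⊆ ⋯` with
`I = closure (⋃ I_N)`, every element of `A/I` annihilated by `p` and of norm `≤ C` lifts,
for some `N`, to an element of `A/I_N` annihilated by `p` and of norm `≤ C`. Quotient
elements are encoded by representatives: an `x ∈ A/I` with `p(x) = 0`, `‖x‖ ≤ C` is an
`X : A` with `p(X) ∈ I` and `infDist X I ≤ C` (the quotient norm); `y ∈ A/I_N` mapping
to `x` under the canonical surjection `A/I_N → A/I` is a `Y : A` with `Y - X ∈ I`, and
`p(y) = 0`, `‖y‖ ≤ C` mean `p(Y) ∈ I_N`, `infDist Y I_N ≤ C`. -/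
theorem stmt_9 {A : Type*} [CStarAlgebra A]
    (I : ℕ → TwoSidedIdeal A) (hIclosed : ∀ N, IsClosed (I N : Set A))
    (hImono : ∀ M N, M ≤ N → (I M : Set A) ⊆ (I N : Set A))
    (n : ℕ) (t : Fin n → ℝ) (ht : Function.Injective t)
    (C : ℝ) (hC : 0 < C)
    (X : A)
    (hX0 : (List.ofFn fun i => X - (t i : ℂ) • 1).prod ∈ closure (⋃ N, (I N : Set A)))
    (hX1 : Metric.infDist X (closure (⋃ N, (I N : Set A))) ≤ C) :
    ∃ (N : ℕ) (Y : A), Y - X ∈ closure (⋃ N, (I N : Set A)) ∧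
      (List.ofFn fun i => Y - (t i : ℂ) • 1).prod ∈ (I N : Set A) ∧
      Metric.infDist Y (I N : Set A) ≤ C := by
  simp only [list_prod_sub_eq_aeval_nodal] at hX0 ⊢
  exact stmt_9_general I hIclosed (directed_of_isDirected_le hImono) Finset.univ t ht.injOn C hC X
    hX0 hX1
end
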